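/- arXiv:2604.01061 — 5 statements merged into one kernel-verified Lean document; each statement's English description precedes it below -/
import Mathlib

section
/- For every constant D ∈ (0,1) there exists a constant C = C(D) > 0 with the following property. Let S be a subset of the chambers of a hyperplane arrangement 𝓗 in general position in ℝ³ with |S| = Σ_{i=0}^3 C(k,i) for some real k ≥ 2 (generalized binomial coefficients), and assume |S| ≤ D·|𝓡(𝓗)|, where 𝓡(𝓗) is the set of all chambers. Then |∂S| ≥ C · Σ_{A∈supp(S), 0≤|A|≤2} |conn(T_S(A))|; in particular |∂S| ≥ C · Σ_{i=0}^2 C(k,i), and hence |∂S| = Ω(|S|^{2/3}). -/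
open Set Topology

noncomputable section

/-- A hyperplane arrangement of `n` affine hyperplanes in `ℝ^d`, given by
nonzero normal vectors and offsets: the `i`-th hyperplane is
`{x | ∑ j, normal i j * x j = offset i}`. -/
structure Arrangement (d n : ℕ) where
  normal : Fin n → (Fin d → ℝ)
  offset : Fin n → ℝ
  normal_ne : ∀ i, normal i ≠ 0

/-- The thickening (regular open hull) `T_S` of a set `S` of chambers. -/
def thickening {d : ℕ} (S : Set (Set (Fin d → ℝ))) : Set (Fin d → ℝ) :=
  interior (closure (⋃ C ∈ S, C))

/-- The set of connected components of a subset `X` of a topological space. -/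
def connComps {α : Type*} [TopologicalSpace α] (X : Set α) : Set (Set α) :=
  {c | ∃ x ∈ X, c = connectedComponentIn X x}

namespace Arrangement

variable {d n : ℕ} (𝓗 : Arrangement d n)

/-- The `i`-th hyperplane of the arrangement. -/
def H (i : Fin n) : Set (Fin d → ℝ) := {x | ∑ j, 𝓗.normal i j * x j = 𝓗.offset i}

/-- The positive open half-space determined by the `i`-th hyperplane. -/
def pos (i : Fin n) : Set (Fin d → ℝ) := {x | 𝓗.offset i < ∑ j, 𝓗.normal i j * x j}

/-- The negative open half-space determined by the `i`-th hyperplane. -/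
def neg (i : Fin n) : Set (Fin d → ℝ) := {x | ∑ j, 𝓗.normal i j * x j < 𝓗.offset i}

/-- The complement of the union of the hyperplanes. -/
def free : Set (Fin d → ℝ) := {x | ∀ i, x ∉ 𝓗.H i}

/-- The chambers: connected components of the complement of the hyperplanes. -/
def chambers : Set (Set (Fin d → ℝ)) :=
  {C | ∃ x ∈ 𝓗.free, C = connectedComponentIn 𝓗.free x}

/-- General position: the normals of any `≤ d` hyperplanes are linearly independent
(so that their intersection is an affine subspace of the right dimension), and no
`d+1` hyperplanes have a common point. -/
def GeneralPosition : Prop :=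
  (∀ A : Finset (Fin n), A.card ≤ d →
      LinearIndependent ℝ (fun i : A => 𝓗.normal i.1)) ∧
  (∀ A : Finset (Fin n), A.card = d + 1 → (⋂ i ∈ A, 𝓗.H i) = ∅)

/-- Hyperplane `e` separates `C` from `C'`. -/
def Separates (e : Fin n) (C C' : Set (Fin d → ℝ)) : Prop :=
  (C ⊆ 𝓗.pos e ∧ C' ⊆ 𝓗.neg e) ∨ (C ⊆ 𝓗.neg e ∧ C' ⊆ 𝓗.pos e)

/-- Adjacency in the chamber graph: two chambers are adjacent iff they are separated
by exactly one hyperplane (equivalently, share a common facet). -/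
def Adj (C C' : Set (Fin d → ℝ)) : Prop :=
  C ∈ 𝓗.chambers ∧ C' ∈ 𝓗.chambers ∧ ∃! e : Fin n, 𝓗.Separates e C C'

/-- The edge boundary of a set `S` of chambers, encoded as the set of ordered pairs
`(C, C')` of adjacent chambers with `C ∈ S` and `C' ∉ S` (each boundary edge is thus
counted exactly once). -/
def edgeBoundary (S : Set (Set (Fin d → ℝ))) :
    Set ((Set (Fin d → ℝ)) × (Set (Fin d → ℝ))) :=
  {q | q.1 ∈ S ∧ q.2 ∉ S ∧ 𝓗.Adj q.1 q.2}

/-- The stratum `T_S(A) = T_S ∩ L_A`. -/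
def stratum (S : Set (Set (Fin d → ℝ))) (A : Finset (Fin n)) : Set (Fin d → ℝ) :=
  thickening S ∩ ⋂ i ∈ A, 𝓗.H i

/-- The support of `S`: those `A` with nonempty stratum. -/
def supp (S : Set (Set (Fin d → ℝ))) : Set (Finset (Fin n)) :=
  {A | (𝓗.stratum S A).Nonempty}

/-- `H_f` bounds the stratum `T_S(A)`: the stratum lies entirely in one of the open
half-spaces of `H_f`, and `H_f` meets the closure of the stratum within `L_A`. -/
def Bounds (f : Fin n) (S : Set (Set (Fin d → ℝ))) (A : Finset (Fin n)) : Prop :=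
  (𝓗.stratum S A ⊆ 𝓗.pos f ∨ 𝓗.stratum S A ⊆ 𝓗.neg f) ∧
  (𝓗.H f ∩ closure (𝓗.stratum S A) ∩ ⋂ i ∈ A, 𝓗.H i).Nonempty

/-- `S` is strata-connected if every nonempty stratum is connected. -/
def StrataConnected (S : Set (Set (Fin d → ℝ))) : Prop :=
  ∀ A ∈ 𝓗.supp S, IsConnected (𝓗.stratum S A)

end Arrangement

/-- The generalized binomial coefficient `C(x, i) = x(x-1)⋯(x-i+1)/i!`. -/
noncomputable def gchoose (x : ℝ) (i : ℕ) : ℝ :=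
  (∏ j ∈ Finset.range i, (x - j)) / (Nat.factorial i)

namespace Chm

variable {n : ℕ}

/-- flip one coordinate -/
def fl (g : Fin n) (σ : Fin n → Bool) : Fin n → Bool := Function.update σ g (!σ g)

/-- the `A`-directional subcube at `σ` lies in `S` -/
def Cube (S : Finset (Fin n → Bool)) (A : Finset (Fin n)) (σ : Fin n → Bool) : Prop :=
  ∀ τ : Fin n → Bool, (∀ i, i ∉ A → τ i = σ i) → τ ∈ S

lemma fl_same (g : Fin n) (σ : Fin n → Bool) : fl g σ g = !σ g := by simp [fl]

lemma fl_ne {g i : Fin n} (h : i ≠ g) (σ : Fin n → Bool) : fl g σ i = σ i := by simp [fl, h]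

lemma fl_fl (g : Fin n) (σ : Fin n → Bool) : fl g (fl g σ) = σ := by
  funext i
  by_cases h : i = g
  · subst h; simp [fl]
  · simp [fl, h]

lemma Cube.mono_dir {S : Finset (Fin n → Bool)} {A B : Finset (Fin n)} {σ τ : Fin n → Bool}
    (h : Cube S B σ) (hAB : A ⊆ B) (hτ : ∀ i, i ∉ B → τ i = σ i) : Cube S A τ := by
  intro ρ hρ
  refine h ρ fun i hi => ?_
  rw [hρ i (fun h' => hi (hAB h')), hτ i hi]

lemma Cube.mono_set {S R : Finset (Fin n → Bool)} {A : Finset (Fin n)} {σ : Fin n → Bool}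
    (h : Cube S A σ) (hSR : S ⊆ R) : Cube R A σ := fun τ hτ => hSR (h τ hτ)

lemma Cube.congr {S : Finset (Fin n → Bool)} {A : Finset (Fin n)} {σ τ : Fin n → Bool}
    (h : Cube S A σ) (hτ : ∀ i, i ∉ A → τ i = σ i) : Cube S A τ :=
  h.mono_dir (Finset.Subset.refl _) hτ

lemma Cube.mem {S : Finset (Fin n → Bool)} {A : Finset (Fin n)} {σ : Fin n → Bool}
    (h : Cube S A σ) : σ ∈ S := h σ fun _ _ => rfl

lemma Cube.insert {S : Finset (Fin n → Bool)} {A : Finset (Fin n)} {σ : Fin n → Bool} {g : Fin n}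
    (h : Cube S A σ) (h' : Cube S A (fl g σ)) : Cube S (insert g A) σ := by
  intro τ hτ
  by_cases e : τ g = σ g
  · refine h τ fun i hi => ?_
    by_cases hig : i = g
    · rw [hig, e]
    · exact hτ i (by simp [hig, hi])
  · refine h' τ fun i hi => ?_
    by_cases hig : i = g
    · rw [hig, fl_same]; revert e; cases τ g <;> cases σ g <;> simp
    · rw [fl_ne hig]; exact hτ i (by simp [hig, hi])

/-- adjacency of cubes -/
def Step (S : Finset (Fin n → Bool)) (A : Finset (Fin n)) (σ τ : Fin n → Bool) : Prop :=
  Cube S A σ ∧ Cube S A τ ∧ ∃ g, τ = fl g σ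

/-- locally constant functions on `A`-cubes, with no constraint across `J` -/
def W (S : Finset (Fin n → Bool)) (A J : Finset (Fin n)) : Submodule ℚ ((Fin n → Bool) → ℚ) where
  carrier := {f | (∀ σ, ¬ Cube S A σ → f σ = 0) ∧
    ∀ g, g ∉ J → ∀ σ, Cube S A σ → Cube S A (fl g σ) → f (fl g σ) = f σ}
  add_mem' := by
    rintro f f' ⟨h1, h2⟩ ⟨h3, h4⟩
    refine ⟨fun σ hσ => by simp [h1 σ hσ, h3 σ hσ], fun g hg σ h h' => ?_⟩
    simp [h2 g hg σ h h', h4 g hg σ h h']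
  zero_mem' := by constructor <;> simp
  smul_mem' := by
    rintro c f ⟨h1, h2⟩
    refine ⟨fun σ hσ => by simp [h1 σ hσ], fun g hg σ h h' => ?_⟩
    simp [h2 g hg σ h h']

lemma upd_fl {g h : Fin n} (hgh : g ≠ h) (σ : Fin n → Bool) (b : Bool) :
    Function.update (fl g σ) h b = fl g (Function.update σ h b) := by
  unfold fl
  rw [Function.update_comm hgh]
  simp [hgh]

open Classical in
def dif (S : Finset (Fin n → Bool)) (A : Finset (Fin n)) (h : Fin n) :
    ((Fin n → Bool) → ℚ) →ₗ[ℚ] ((Fin n → Bool) → ℚ) where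
  toFun f := fun σ => if Cube S (insert h A) σ then
    f (Function.update σ h true) - f (Function.update σ h false) else 0
  map_add' f g := by
    funext σ; by_cases hc : Cube S (insert h A) σ <;> simp [hc]; ring
  map_smul' c f := by
    funext σ; by_cases hc : Cube S (insert h A) σ <;> simp [hc]; ring

lemma dif_mem (S : Finset (Fin n → Bool)) (A J : Finset (Fin n)) (h : Fin n)
    (f : (Fin n → Bool) → ℚ) (hf : f ∈ W S A (insert h J)) : dif S A h f ∈ W S (insert h A) J := by
  obtain ⟨h1, h2⟩ := hf
  refine ⟨fun σ hσ => by simp [dif, hσ], fun g hg σ hc hc' => ?_⟩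
  simp only [dif, LinearMap.coe_mk, AddHom.coe_mk, hc, hc', if_true]
  by_cases hgh : g = h
  · subst hgh; simp [fl]
  · have key : ∀ b, f (Function.update (fl g σ) h b) = f (Function.update σ h b) := by
      intro b
      rw [upd_fl hgh]
      have hne : ∀ i, i ∉ insert h A → Function.update σ h b i = σ i := by
        intro i hi; rw [Function.update_of_ne]; rintro rfl; simp at hi
      refine h2 g (by simp [hgh, hg]) _ (hc.mono_dir (Finset.subset_insert _ _) hne) ?_
      rw [← upd_fl hgh]
      refine hc'.mono_dir (Finset.subset_insert _ _) ?_
      intro i hi; rw [Function.update_of_ne]; rintro rfl; simp at hi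
    rw [key, key]

/-- dimension of `W` -/
def dW (S : Finset (Fin n → Bool)) (A J : Finset (Fin n)) : ℕ := Module.finrank ℚ (W S A J)

lemma W_cut (S : Finset (Fin n → Bool)) (A J : Finset (Fin n)) (h : Fin n) :
    Module.finrank ℚ (W S A (insert h J)) ≤
      Module.finrank ℚ (W S A J) + Module.finrank ℚ (W S (insert h A) J) := by
  let φ : W S A (insert h J) →ₗ[ℚ] W S (insert h A) J :=
    (dif S A h).restrict (fun f hf => dif_mem S A J h f hf)
  have e := φ.finrank_range_add_finrank_ker
  have h1 : Module.finrank ℚ (LinearMap.range φ) ≤ Module.finrank ℚ (W S (insert h A) J) :=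
    Submodule.finrank_le _
  have h2 : Module.finrank ℚ (LinearMap.ker φ) ≤ Module.finrank ℚ (W S A J) := by
    rw [← Submodule.finrank_map_subtype_eq]
    refine Submodule.finrank_mono ?_
    rintro f ⟨f', hf', rfl⟩
    have hk : dif S A h f'.1 = 0 := by
      have := congrArg Subtype.val (LinearMap.mem_ker.1 hf')
      simpa [φ] using this
    obtain ⟨h1, h2⟩ := f'.2
    refine ⟨h1, fun g hg σ hc hc' => ?_⟩
    by_cases hgh : g = h
    · subst hgh
      have := congrFun hk σ
      simp only [dif, LinearMap.coe_mk, AddHom.coe_mk, hc.insert hc', if_true, Pi.zero_apply] at this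
      have hs : σ = Function.update σ g (σ g) := by simp
      simp only [Submodule.subtype_apply]
      have e2 : fl g σ = Function.update σ g (!σ g) := rfl
      rw [e2]
      conv_rhs => rw [hs]
      cases hh : σ g <;> simp [] <;> linarith
    · exact h2 g (by simp [hgh, hg]) σ hc hc'
  omega

lemma W_sum (S : Finset (Fin n → Bool)) (J : Finset (Fin n)) : ∀ A, Disjoint A J →
    dW S A J ≤ ∑ B ∈ J.powerset, dW S (A ∪ B) ∅ := by
  induction J using Finset.induction_on with
  | empty => intro A _; simp
  | insert h J hJ ih =>
    intro A hA
    rw [Finset.disjoint_insert_right] at hA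
    rw [Finset.sum_powerset_insert hJ]
    have h1 := ih A hA.2
    have h2 := ih (insert h A) (by rw [Finset.disjoint_insert_left]; exact ⟨hJ, hA.2⟩)
    have h3 : dW S A (insert h J) ≤ dW S A J + dW S (insert h A) J := W_cut S A J h
    have : ∀ B, insert h A ∪ B = A ∪ insert h B := by intro B; ext; simp
    simp only [this] at h2
    omega

lemma W_univ (S : Finset (Fin n → Bool)) : S.card ≤ dW S ∅ Finset.univ := by
  classical
  let φ : (S → ℚ) →ₗ[ℚ] W S ∅ Finset.univ :=
    { toFun := fun f => ⟨fun σ => if h : σ ∈ S then f ⟨σ, h⟩ else 0, by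
        refine ⟨fun σ hσ => ?_, by simp⟩
        have : σ ∉ S := by
          intro h; apply hσ; intro τ hτ
          have : τ = σ := funext fun i => hτ i (by simp)
          rwa [this]
        simp [this]⟩
      map_add' := by
        intro f g; ext σ; by_cases h : σ ∈ S <;> simp [h]
      map_smul' := by
        intro c f; ext σ; by_cases h : σ ∈ S <;> simp [h] }
  have hinj : Function.Injective φ := by
    intro f g hfg
    funext ⟨σ, h⟩
    have := congrFun (congrArg Subtype.val hfg) σ
    simpa [φ, h] using this
  have := LinearMap.finrank_le_finrank_of_injective hinj
  simpa [dW] using this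

lemma card_le_sum_W (S : Finset (Fin n → Bool)) :
    S.card ≤ ∑ A : Finset (Fin n), dW S A ∅ := by
  have := (W_univ S).trans (W_sum S Finset.univ ∅ (by simp))
  simpa using this

/-- representatives bound the dimension -/
lemma W_le_rep (S : Finset (Fin n → Bool)) (A : Finset (Fin n)) (P : Finset (Fin n → Bool))
    (hP : ∀ σ, Cube S A σ → ∃ ρ ∈ P, Relation.ReflTransGen (Step S A) σ ρ) :
    dW S A ∅ ≤ P.card := by
  let φ : W S A ∅ →ₗ[ℚ] (P → ℚ) :=
    { toFun := fun f ρ => f.1 ρ.1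
      map_add' := by intro f g; rfl
      map_smul' := by intro f g; rfl }
  have hinj : Function.Injective φ := by
    intro f g hfg
    ext σ
    by_cases hc : Cube S A σ
    · obtain ⟨ρ, hρ, hr⟩ := hP σ hc
      have key : ∀ f : W S A ∅, f.1 ρ = f.1 σ := by
        intro f
        clear hρ
        induction hr with
        | refl => rfl
        | tail _ hs ih =>
          obtain ⟨h1, h2, g, rfl⟩ := hs
          rw [f.2.2 g (by simp) _ h1 h2, ih]
      rw [← key f, ← key g]
      exact congrFun hfg ⟨ρ, hρ⟩
    · rw [f.2.1 σ hc, g.2.1 σ hc]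
  have := LinearMap.finrank_le_finrank_of_injective hinj
  simpa [dW] using this

end Chm

namespace Chm
variable {n : ℕ}

open Classical in
/-- boundary edges -/
def bd (R S : Finset (Fin n → Bool)) : Finset ((Fin n → Bool) × Fin n) :=
  Finset.univ.filter fun p => p.1 ∈ S ∧ fl p.2 p.1 ∈ R ∧ fl p.2 p.1 ∉ S

open Classical in
/-- mixed vertices -/
def Mixed (R S : Finset (Fin n → Bool)) : Finset (Finset (Fin n)) :=
  Finset.univ.filter fun T => T.card = 3 ∧ ∃ σ, Cube R T σ ∧ σ ∈ S ∧ ¬ Cube S T σ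

open Classical in
/-- interior vertices -/
def Vx (S : Finset (Fin n → Bool)) : Finset (Finset (Fin n)) :=
  Finset.univ.filter fun T => T.card = 3 ∧ ∃ σ, Cube S T σ

/-- combinatorial facts about the sign vectors of an arrangement -/
structure Geo (R : Finset (Fin n → Bool)) : Prop where
  h1 : ∀ A σ σ', Cube R A σ → Cube R A σ' → σ ≠ σ' → ∃ g, σ g ≠ σ' g ∧ Cube R A (fl g σ)
  h2 : ∀ A σ, 3 ≤ n → A.card < 3 → Cube R A σ → ∃ g, g ∉ A ∧ Cube R (insert g A) σ
  h3 : ∀ T : Finset (Fin n), T.card = 3 → ∃ σ, Cube R T σ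
  h3' : ∀ (T : Finset (Fin n)) σ σ', T.card = 3 → Cube R T σ → Cube R T σ' → ∀ i, i ∉ T → σ i = σ' i
  h4 : ∀ A σ, Cube R A σ → A.card ≤ 3
  h5 : n.choose 3 ≤ R.card
  h6 : ∀ S, S ⊆ R → (Mixed R S).card ≤ 25 * (bd R S).card

def Full (R S : Finset (Fin n → Bool)) (A : Finset (Fin n)) : Prop := ∀ σ, Cube R A σ → Cube S A σ

open Classical in
def bdry (R S : Finset (Fin n → Bool)) (A : Finset (Fin n)) : Finset (Fin n → Bool) :=
  Finset.univ.filter fun σ => Cube S A σ ∧ ∃ g, Cube R A (fl g σ) ∧ ¬ Cube S A (fl g σ)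

open Classical in
def Rep (R S : Finset (Fin n → Bool)) (A : Finset (Fin n)) : Finset (Fin n → Bool) :=
  if Full R S A then (if h : ∃ σ, Cube R A σ then {h.choose} else ∅) else bdry R S A

lemma mem_bdry {R S : Finset (Fin n → Bool)} {A : Finset (Fin n)} {σ : Fin n → Bool} :
    σ ∈ bdry R S A ↔ Cube S A σ ∧ ∃ g, Cube R A (fl g σ) ∧ ¬ Cube S A (fl g σ) := by
  simp [bdry]

lemma path {R S : Finset (Fin n → Bool)} (hR : Geo R) (A : Finset (Fin n)) (hSR : S ⊆ R)
    (σ' : Fin n → Bool) (h' : Cube R A σ') : ∀ (d : ℕ) (σ : Fin n → Bool), hammingDist σ σ' ≤ d →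
    Cube S A σ → (∃ ρ ∈ bdry R S A, Relation.ReflTransGen (Step S A) σ ρ) ∨
      Relation.ReflTransGen (Step S A) σ σ' := by
  intro d
  induction d with
  | zero =>
    intro σ hd _
    right
    have : σ = σ' := by simpa using hd
    rw [this]
  | succ d ih =>
    intro σ hd hσ
    by_cases e : σ = σ'
    · right; rw [e]
    obtain ⟨g, hg, hc⟩ := hR.h1 A σ σ' (hσ.mono_set hSR) h' e
    by_cases hs : Cube S A (fl g σ)
    · have hlt : hammingDist (fl g σ) σ' < hammingDist σ σ' := by
        unfold hammingDist
        apply Finset.card_lt_card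
        rw [Finset.ssubset_iff_of_subset]
        · refine ⟨g, by simpa using hg, ?_⟩
          simp only [Finset.mem_filter, Finset.mem_univ, true_and, not_not, fl_same]
          revert hg; cases σ g <;> cases σ' g <;> simp
        · intro i hi
          simp only [Finset.mem_filter, Finset.mem_univ, true_and] at hi ⊢
          by_cases hig : i = g
          · rw [hig]; exact hg
          · rwa [fl_ne hig] at hi
      have st : Step S A σ (fl g σ) := ⟨hσ, hs, g, rfl⟩
      rcases ih (fl g σ) (by omega) hs with ⟨ρ, hρ, hr⟩ | hr
      · exact Or.inl ⟨ρ, hρ, Relation.ReflTransGen.head st hr⟩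
      · exact Or.inr (Relation.ReflTransGen.head st hr)
    · left
      exact ⟨σ, mem_bdry.2 ⟨hσ, g, hc, hs⟩, Relation.ReflTransGen.refl⟩

lemma RTG_cube {S : Finset (Fin n → Bool)} {A : Finset (Fin n)} {σ τ : Fin n → Bool}
    (h : Relation.ReflTransGen (Step S A) σ τ) (hσ : Cube S A σ) : Cube S A τ := by
  induction h with
  | refl => exact hσ
  | tail _ hs _ => exact hs.2.1

lemma rep_spec {R S : Finset (Fin n → Bool)} (hR : Geo R) (A : Finset (Fin n)) (hSR : S ⊆ R)
    (σ : Fin n → Bool) (hσ : Cube S A σ) :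
    ∃ ρ ∈ Rep R S A, Relation.ReflTransGen (Step S A) σ ρ := by
  unfold Rep
  by_cases hf : Full R S A
  · have hex : ∃ σ, Cube R A σ := ⟨σ, hσ.mono_set hSR⟩
    rw [if_pos hf, dif_pos hex]
    refine ⟨_, Finset.mem_singleton_self _, ?_⟩
    rcases path hR A hSR _ hex.choose_spec _ σ le_rfl hσ with ⟨ρ, hρ, _⟩ | h
    · obtain ⟨_, g, hg, hg'⟩ := mem_bdry.1 hρ
      exact absurd (hf _ hg) hg'
    · exact h
  · rw [if_neg hf]
    unfold Full at hf
    push Not at hf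
    obtain ⟨σ', h1, h2⟩ := hf
    rcases path hR A hSR _ h1 _ σ le_rfl hσ with h | h
    · exact h
    · exact absurd (RTG_cube h hσ) h2

lemma card_le_sum_rep {R S : Finset (Fin n → Bool)} (hR : Geo R) (hSR : S ⊆ R) :
    S.card ≤ ∑ A : Finset (Fin n), (Rep R S A).card :=
  (card_le_sum_W S).trans (Finset.sum_le_sum fun A _ =>
    W_le_rep S A _ fun σ hσ => rep_spec hR A hSR σ hσ)

lemma ext3 {R : Finset (Fin n → Bool)} (hR : Geo R) (hn : 3 ≤ n) (σ : Fin n → Bool) :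
    ∀ (d : ℕ) (A : Finset (Fin n)), A.card + d = 3 → Cube R A σ →
    ∃ T, A ⊆ T ∧ T.card = 3 ∧ Cube R T σ := by
  intro d
  induction d with
  | zero => intro A h hc; exact ⟨A, Finset.Subset.refl _, by omega, hc⟩
  | succ d ih =>
    intro A h hc
    obtain ⟨g, hg, hc'⟩ := hR.h2 A σ hn (by omega) hc
    obtain ⟨T, h1, h2, h3⟩ := ih (insert g A) (by rw [Finset.card_insert_of_notMem hg]; omega) hc'
    exact ⟨T, (Finset.subset_insert _ _).trans h1, h2, h3⟩

/-- the index sets of size at most two -/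
def low (n : ℕ) : Finset (Finset (Fin n)) := Finset.univ.filter fun A => A.card ≤ 2

lemma bdry_mixed {R S : Finset (Fin n → Bool)} (hR : Geo R) (hn : 3 ≤ n) (hSR : S ⊆ R)
    (A : Finset (Fin n)) (hA : A.card ≤ 2) (σ : Fin n → Bool) (h : σ ∈ bdry R S A) :
    ∃ T ∈ Mixed R S, A ⊆ T ∧ Cube R T σ := by
  obtain ⟨hσ, g, hg, hg'⟩ := mem_bdry.1 h
  have hgA : g ∉ A := by
    intro hgA
    exact hg' (hσ.congr fun i hi => fl_ne (by rintro rfl; exact hi hgA) σ)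
  obtain ⟨T, h1, h2, h3⟩ := ext3 hR hn σ (2 - A.card) (insert g A)
    (by rw [Finset.card_insert_of_notMem hgA]; omega) ((hσ.mono_set hSR).insert hg)
  refine ⟨T, ?_, (Finset.subset_insert _ _).trans h1, h3⟩
  simp only [Mixed, Finset.mem_filter, Finset.mem_univ, true_and]
  refine ⟨h2, σ, h3, hσ.mem, fun hc => hg' (hc.mono_dir ((Finset.subset_insert _ _).trans h1) ?_)⟩
  intro i hi
  exact fl_ne (by rintro rfl; exact hi (h1 (Finset.mem_insert_self _ _))) σ

lemma sum_bdry {R S : Finset (Fin n → Bool)} (hR : Geo R) (hn : 3 ≤ n) (hSR : S ⊆ R) :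
    ∑ A ∈ low n, (bdry R S A).card ≤ 64 * (Mixed R S).card := by
  classical
  rw [← Finset.card_sigma]
  have hex : ∀ x : (_ : Finset (Fin n)) × (Fin n → Bool), ∃ T, x ∈ (low n).sigma (bdry R S) →
      T ∈ Mixed R S ∧ x.1 ⊆ T ∧ Cube R T x.2 := by
    intro x
    by_cases hx : x ∈ (low n).sigma (bdry R S)
    · obtain ⟨h1, h2⟩ := Finset.mem_sigma.1 hx
      obtain ⟨T, h⟩ := bdry_mixed hR hn hSR x.1 (by simpa [low] using h1) x.2 h2
      exact ⟨T, fun _ => h⟩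
    · exact ⟨∅, fun h => absurd h hx⟩
  choose f hf using hex
  refine (Finset.card_le_mul_card_image (f := f) _ 64 ?_).trans ?_
  · intro T hT
    have hT3 : T.card = 3 := by
      obtain ⟨x, hx, rfl⟩ := Finset.mem_image.1 hT
      have := (hf x hx).1
      simp only [Mixed, Finset.mem_filter, Finset.mem_univ, true_and] at this
      exact this.1
    have : (T.powerset ×ˢ T.powerset).card = 64 := by
      rw [Finset.card_product, Finset.card_powerset, hT3]; norm_num
    rw [← this]
    refine Finset.card_le_card_of_injOn (fun x => (x.1, T.filter fun i => x.2 i = true)) ?_ ?_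
    · intro x hx
      obtain ⟨hx1, hx2⟩ := Finset.mem_filter.1 (Finset.mem_coe.1 hx)
      simp only [Finset.coe_product, Set.mem_prod, Finset.mem_coe, Finset.mem_powerset]
      exact ⟨hx2 ▸ (hf x hx1).2.1, Finset.filter_subset _ _⟩
    · intro x hx y hy hxy
      obtain ⟨hx, hx'⟩ := Finset.mem_filter.1 (Finset.mem_coe.1 hx)
      obtain ⟨hy, hy'⟩ := Finset.mem_filter.1 (Finset.mem_coe.1 hy)
      have cx := (hf x hx).2.2
      have cy := (hf y hy).2.2
      rw [hx'] at cx
      rw [hy'] at cy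
      obtain ⟨a, s⟩ := x
      obtain ⟨a', s'⟩ := y
      simp only [Prod.mk.injEq] at hxy
      obtain ⟨rfl, h2⟩ := hxy
      congr 1
      funext i
      by_cases hi : i ∈ T
      · have := Finset.ext_iff.1 h2 i
        simp only [Finset.mem_filter, hi, true_and] at this
        exact Bool.eq_iff_iff.2 this
      · exact hR.h3' T _ _ hT3 cx cy i hi
  · refine Nat.mul_le_mul_left _ (Finset.card_le_card ?_)
    intro T hT
    obtain ⟨x, hx, rfl⟩ := Finset.mem_image.1 hT
    exact (hf x hx).1

open Classical in
/-- the full index sets of size `j` -/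
def FullS (R S : Finset (Fin n → Bool)) (j : ℕ) : Finset (Finset (Fin n)) :=
  Finset.univ.filter fun A => A.card = j ∧ Full R S A

lemma rep_card_le {R S : Finset (Fin n → Bool)} (A : Finset (Fin n)) [Decidable (Full R S A)] :
    (Rep R S A).card ≤ (bdry R S A).card + if Full R S A then 1 else 0 := by
  unfold Rep
  by_cases hf : Full R S A
  · by_cases he : ∃ σ, Cube R A σ <;> simp [hf, he]
  · simp [hf]

lemma sum_rep {R S : Finset (Fin n → Bool)} (hR : Geo R) (hn : 3 ≤ n) (hSR : S ⊆ R) :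
    ∑ A ∈ low n, (Rep R S A).card ≤ 64 * (Mixed R S).card + ((FullS R S 0).card +
      (FullS R S 1).card + (FullS R S 2).card) := by
  classical
  refine (Finset.sum_le_sum fun A _ => rep_card_le A).trans ?_
  rw [Finset.sum_add_distrib]
  refine add_le_add (sum_bdry hR hn hSR) ?_
  rw [Finset.sum_boole, ← Finset.card_union_of_disjoint, ← Finset.card_union_of_disjoint]
  · refine Finset.card_le_card ?_
    intro A hA
    simp only [low, FullS, Finset.mem_filter, Finset.mem_univ, true_and, Finset.mem_union] at hA ⊢
    obtain ⟨h1, h2⟩ := hA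
    simp only [h2, and_true]
    omega
  · rw [Finset.disjoint_left]
    intro A hA hB
    simp only [FullS, Finset.mem_filter, Finset.mem_univ, true_and, Finset.mem_union] at hA hB
    omega
  · rw [Finset.disjoint_left]
    intro A hA hB
    simp only [FullS, Finset.mem_filter, Finset.mem_univ, true_and] at hA hB
    omega

lemma card_le_low_add {R S : Finset (Fin n → Bool)} (hR : Geo R) (hSR : S ⊆ R) :
    S.card ≤ ∑ A ∈ low n, (Rep R S A).card + (Vx S).card := by
  classical
  refine (card_le_sum_rep hR hSR).trans ?_
  rw [← Finset.sum_filter_add_sum_filter_not Finset.univ (fun A : Finset (Fin n) => A.card ≤ 2)]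
  refine add_le_add le_rfl ?_
  have key : ∀ A : Finset (Fin n), ¬ A.card ≤ 2 →
      (Rep R S A).card ≤ if A ∈ Vx S then 1 else 0 := by
    intro A hA
    by_cases hex : ∃ σ, Cube R A σ
    · obtain ⟨σ₀, hσ₀⟩ := hex
      have h3 : A.card = 3 := by have := hR.h4 A σ₀ hσ₀; omega
      by_cases hf : Full R S A
      · have : A ∈ Vx S := by
          simp only [Vx, Finset.mem_filter, Finset.mem_univ, true_and]
          exact ⟨h3, σ₀, hf _ hσ₀⟩
        rw [if_pos this]
        unfold Rep
        rw [if_pos hf, dif_pos ⟨σ₀, hσ₀⟩]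
        simp
      · have : Rep R S A = ∅ := by
          unfold Rep
          rw [if_neg hf, Finset.eq_empty_iff_forall_notMem]
          intro σ hσ
          obtain ⟨hσ, g, hg, hg'⟩ := mem_bdry.1 hσ
          exact hg' (hσ.congr (hR.h3' A _ _ h3 hg (hσ.mono_set hSR)))
        simp [this]
    · have : Rep R S A = ∅ := by
        unfold Rep
        by_cases hf : Full R S A
        · rw [if_pos hf, dif_neg hex]
        · rw [if_neg hf, Finset.eq_empty_iff_forall_notMem]
          intro σ hσ
          exact hex ⟨σ, (mem_bdry.1 hσ).1.mono_set hSR⟩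
      simp [this]
  refine (Finset.sum_le_sum fun A hA => key A (Finset.mem_filter.1 hA).2).trans ?_
  rw [Finset.sum_boole]
  exact_mod_cast Finset.card_le_card (fun A hA => (Finset.mem_filter.1 hA).2)

end Chm

namespace Chm
variable {n : ℕ}

open Classical in
/-- pairs in the support -/
def Qs (S : Finset (Fin n → Bool)) : Finset (Finset (Fin n)) :=
  Finset.univ.filter fun A => A.card = 2 ∧ ∃ σ, Cube S A σ

lemma mem_Qs {S : Finset (Fin n → Bool)} {A : Finset (Fin n)} :
    A ∈ Qs S ↔ A.card = 2 ∧ ∃ σ, Cube S A σ := by simp [Qs]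

lemma mem_Vx {S : Finset (Fin n → Bool)} {A : Finset (Fin n)} :
    A ∈ Vx S ↔ A.card = 3 ∧ ∃ σ, Cube S A σ := by simp [Vx]

lemma mem_FullS {R S : Finset (Fin n → Bool)} {A : Finset (Fin n)} {j : ℕ} :
    A ∈ FullS R S j ↔ A.card = j ∧ Full R S A := by simp [FullS]

lemma full_Vx {R S : Finset (Fin n → Bool)} (hR : Geo R) {A T : Finset (Fin n)}
    (hA : Full R S A) (hT : T.card = 3) (hAT : A ⊆ T) : T ∈ Vx S := by
  rw [mem_Vx]
  obtain ⟨σ, hσ⟩ := hR.h3 T hT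
  exact ⟨hT, σ, fun τ hτ => (hA τ (hσ.mono_dir hAT hτ)).mem⟩

lemma Vx_Qs {S : Finset (Fin n → Bool)} {A T : Finset (Fin n)}
    (hT : T ∈ Vx S) (hAT : A ⊆ T) (hA : A.card = 2) : A ∈ Qs S := by
  rw [mem_Qs]
  obtain ⟨_, σ, hσ⟩ := mem_Vx.1 hT
  exact ⟨hA, σ, hσ.mono_dir hAT fun _ _ => rfl⟩

lemma full_Qs {R S : Finset (Fin n → Bool)} (hR : Geo R) (hn : 3 ≤ n) {A B : Finset (Fin n)}
    (hA : Full R S A) (hB : B.card = 2) (hAB : (A ∪ B).card ≤ 3) : B ∈ Qs S := by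
  obtain ⟨T, hT, hT3⟩ := Finset.exists_superset_card_eq hAB (by simpa using hn)
  exact Vx_Qs (full_Vx hR hA hT3 (Finset.subset_union_left.trans hT))
    (Finset.subset_union_right.trans hT) hB

lemma Qs_le {R S : Finset (Fin n → Bool)} (hR : Geo R) (hn : 3 ≤ n) (hSR : S ⊆ R) :
    (Qs S).card ≤ (FullS R S 2).card + 64 * (Mixed R S).card := by
  classical
  have key : ∀ A ∈ Qs S, 1 ≤ (if Full R S A then 1 else 0) + (bdry R S A).card := by
    intro A hA
    by_cases hf : Full R S A
    · simp [hf]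
    · obtain ⟨_, σ, hσ⟩ := mem_Qs.1 hA
      obtain ⟨ρ, hρ, _⟩ := rep_spec hR A hSR σ hσ
      unfold Rep at hρ
      rw [if_neg hf] at hρ
      have := Finset.card_pos.2 ⟨ρ, hρ⟩
      omega
  rw [Finset.card_eq_sum_ones]
  refine (Finset.sum_le_sum key).trans ?_
  rw [Finset.sum_add_distrib, Finset.sum_boole]
  refine add_le_add ?_ ?_
  · refine Finset.card_le_card fun A hA => ?_
    obtain ⟨h1, h2⟩ := Finset.mem_filter.1 hA
    exact mem_FullS.2 ⟨(mem_Qs.1 h1).1, h2⟩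
  · refine le_trans ?_ (sum_bdry hR hn hSR)
    refine Finset.sum_le_sum_of_subset fun A hA => ?_
    have := (mem_Qs.1 hA).1
    simp [low]; omega

open Classical in
/-- planes containing a full line -/
def Pl (R S : Finset (Fin n → Bool)) : Finset (Fin n) :=
  Finset.univ.filter fun i => ∃ A ∈ FullS R S 2, i ∈ A

lemma e1 {R S : Finset (Fin n → Bool)} (hR : Geo R) (hn : 3 ≤ n) :
    (Pl R S).card * (n - 1) ≤ 2 * (Qs S).card := by
  classical
  have key : ∀ i ∈ Pl R S, n - 1 ≤ ((Qs S).filter fun B => i ∈ B).card := by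
    intro i hi
    simp only [Pl, Finset.mem_filter, Finset.mem_univ, true_and] at hi
    obtain ⟨A, hA, hiA⟩ := hi
    obtain ⟨hA2, hA⟩ := mem_FullS.1 hA
    have : n - 1 = (Finset.univ.erase i).card := by
      rw [Finset.card_erase_of_mem (Finset.mem_univ _)]; simp
    rw [this]
    refine Finset.card_le_card_of_injOn (fun j => {i, j}) ?_ ?_
    · intro j hj
      have hji : i ≠ j := by
        intro h; subst h; simp at hj
      have hc : ({i, j} : Finset (Fin n)).card = 2 := Finset.card_pair hji
      simp only [Finset.coe_filter, Set.mem_setOf_eq]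
      refine ⟨full_Qs hR hn hA hc ?_, by simp⟩
      have : A ∪ {i, j} = insert j A := by
        ext x; simp
        rintro rfl; exact Or.inr hiA
      rw [this]
      exact (Finset.card_insert_le _ _).trans (by omega)
    · intro j hj k hk hjk
      have hj' : j ≠ i := by simpa using hj
      have : j ∈ ({i, k} : Finset (Fin n)) := by
        have h : j ∈ ({i, j} : Finset (Fin n)) := by simp
        simpa only [hjk] using h
      simpa [hj'] using this
  have h1 : (Pl R S).card * (n - 1) ≤ ∑ i ∈ Pl R S, ((Qs S).filter fun B => i ∈ B).card := by
    rw [← smul_eq_mul]; exact Finset.card_nsmul_le_sum _ _ _ key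
  refine h1.trans ?_
  have h2 := Finset.sum_card_bipartiteAbove_eq_sum_card_bipartiteBelow
    (s := Pl R S) (t := Qs S) (fun i B => i ∈ B)
  simp only [Finset.bipartiteAbove, Finset.bipartiteBelow] at h2
  rw [h2, mul_comm, ← smul_eq_mul]
  refine Finset.sum_le_card_nsmul _ _ _ fun B hB => ?_
  rw [← (mem_Qs.1 hB).1]
  exact Finset.card_le_card fun i hi => (Finset.mem_filter.1 hi).2

lemma e2 {R S : Finset (Fin n → Bool)} :
    (FullS R S 2).card ≤ (Pl R S).card.choose 2 := by
  classical
  rw [← Finset.card_powersetCard]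
  refine Finset.card_le_card fun A hA => ?_
  rw [Finset.mem_powersetCard]
  refine ⟨fun i hi => ?_, (mem_FullS.1 hA).1⟩
  simp only [Pl, Finset.mem_filter, Finset.mem_univ, true_and]
  exact ⟨A, hA, hi⟩

lemma FullS_le {R S : Finset (Fin n → Bool)} (j : ℕ) : (FullS R S j).card ≤ n.choose j := by
  classical
  calc _ ≤ (Finset.powersetCard j (Finset.univ : Finset (Fin n))).card :=
        Finset.card_le_card fun A hA => by
          rw [Finset.mem_powersetCard]; exact ⟨Finset.subset_univ _, (mem_FullS.1 hA).1⟩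
    _ = _ := by simp

lemma e3 {R S : Finset (Fin n → Bool)} (hR : Geo R) (hn : 3 ≤ n) :
    (FullS R S 1).card ≤ (Qs S).card := by
  classical
  rcases Finset.eq_empty_or_nonempty (FullS R S 1) with h | ⟨A, hA⟩
  · simp [h]
  · obtain ⟨hA1, hA⟩ := mem_FullS.1 hA
    refine (FullS_le 1).trans ?_
    calc n.choose 1 ≤ n.choose 2 := by
          rw [Nat.choose_one_right, Nat.choose_two_right, Nat.le_div_iff_mul_le (by norm_num)]
          exact Nat.mul_le_mul_left _ (by omega)
      _ = (Finset.powersetCard 2 (Finset.univ : Finset (Fin n))).card := by simp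
      _ ≤ _ := Finset.card_le_card fun B hB => by
        have hB2 := (Finset.mem_powersetCard.1 hB).2
        exact full_Qs hR hn hA hB2 ((Finset.card_union_le _ _).trans (by omega))

lemma e0 {R S : Finset (Fin n → Bool)} (hS : S.card < R.card) : (FullS R S 0).card = 0 := by
  rw [Finset.card_eq_zero, Finset.eq_empty_iff_forall_notMem]
  intro A hA
  obtain ⟨h, hA⟩ := mem_FullS.1 hA
  rw [Finset.card_eq_zero] at h
  subst h
  have : R ⊆ S := by
    intro σ hσ
    refine (hA σ fun τ hτ => ?_).mem
    have : τ = σ := funext fun i => hτ i (by simp)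
    rwa [this]
  exact absurd (Finset.card_le_card this) (by omega)

open Classical in
lemma e4 {R S S' : Finset (Fin n → Bool)} (hR : Geo R) (hd : Disjoint S S') (hS' : S' ⊆ R) (hSR : S ⊆ R) :
    (Vx S').card ≤ (n.choose 2 - (FullS R S 2).card) * n := by
  let N := (Finset.powersetCard 2 (Finset.univ : Finset (Fin n))) \ FullS R S 2
  have hN : N.card = n.choose 2 - (FullS R S 2).card := by
    rw [Finset.card_sdiff_of_subset]
    · simp
    · intro A hA
      rw [Finset.mem_powersetCard]; exact ⟨Finset.subset_univ _, (mem_FullS.1 hA).1⟩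
  have : Vx S' ⊆ (N ×ˢ (Finset.univ : Finset (Fin n))).image fun p => insert p.2 p.1 := by
    intro T hT
    obtain ⟨hT3, σ, hσ⟩ := mem_Vx.1 hT
    obtain ⟨g, hg⟩ : T.Nonempty := by rw [← Finset.card_pos]; omega
    rw [Finset.mem_image]
    refine ⟨(T.erase g, g), ?_, Finset.insert_erase hg⟩
    have hc : (T.erase g).card = 2 := by rw [Finset.card_erase_of_mem hg]; omega
    simp only [N, Finset.mem_product, Finset.mem_sdiff, Finset.mem_powersetCard, Finset.mem_univ,
      and_true, Finset.subset_univ, true_and]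
    refine ⟨hc, fun hf => ?_⟩
    have := full_Vx hR (mem_FullS.1 hf).2 hT3 (Finset.erase_subset _ _)
    obtain ⟨_, σ', hσ'⟩ := mem_Vx.1 this
    have h1 : Cube S T σ := hσ'.congr (hR.h3' T _ _ hT3 (hσ.mono_set hS') (hσ'.mono_set hSR))
    exact Finset.disjoint_left.1 hd h1.mem hσ.mem
  refine (Finset.card_le_card this).trans (Finset.card_image_le.trans ?_)
  rw [Finset.card_product, hN]; simp

open Classical in
lemma mixed_compl {R S : Finset (Fin n → Bool)} : (Mixed R (R \ S)).card ≤ (Mixed R S).card := by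
  refine Finset.card_le_card fun T hT => ?_
  simp only [Mixed, Finset.mem_filter, Finset.mem_univ, true_and] at hT ⊢
  obtain ⟨h3, σ, h1, h2, h4⟩ := hT
  unfold Cube at h4
  push Not at h4
  obtain ⟨τ, hτ, hτ'⟩ := h4
  have hτR := h1 τ hτ
  refine ⟨h3, τ, h1.congr hτ, ?_, fun hc => ?_⟩
  · by_contra h; exact hτ' (Finset.mem_sdiff.2 ⟨hτR, h⟩)
  · exact (Finset.mem_sdiff.1 h2).2 (hc σ fun i hi => (hτ i hi).symm)

open Classical in
lemma e5 {R S : Finset (Fin n → Bool)} (hR : Geo R) (hn : 3 ≤ n) (hSR : S ⊆ R) :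
    R.card - S.card ≤ 64 * (Mixed R S).card + (1 + n + n.choose 2) +
      (n.choose 2 - (FullS R S 2).card) * n := by
  have h1 := card_le_low_add hR (Finset.sdiff_subset : R \ S ⊆ R)
  have h2 := sum_rep hR hn (Finset.sdiff_subset : R \ S ⊆ R)
  have h3 := e4 hR (Finset.disjoint_sdiff : Disjoint S (R \ S)) Finset.sdiff_subset hSR
  have h4 := mixed_compl (R := R) (S := S)
  have f0 := FullS_le (R := R) (S := R \ S) 0
  have f1 := FullS_le (R := R) (S := R \ S) 1
  have f2 := FullS_le (R := R) (S := R \ S) 2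
  rw [Finset.card_sdiff_of_subset hSR] at h1
  simp only [Nat.choose_zero_right, Nat.choose_one_right] at f0 f1
  omega

lemma tri (S : Finset (Fin n → Bool)) : (Vx S).card ^ 2 ≤ (Qs S).card ^ 3 := by
  classical
  rcases Nat.eq_zero_or_pos (Vx S).card with h0 | h0
  · simp [h0]
  have hsized : ((Vx S : Finset (Finset (Fin n))) : Set (Finset (Fin n))).Sized 3 := by
    intro T hT; exact (mem_Vx.1 (Finset.mem_coe.1 hT)).1
  have hle : (Vx S).card ≤ n.choose 3 := by simpa using hsized.card_le
  have hn3 : 3 ≤ n := by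
    by_contra h
    rw [Nat.choose_eq_zero_of_lt (by omega)] at hle
    omega
  -- maximal k
  obtain ⟨k, hk3, hkn, hk1, hk2⟩ : ∃ k, 3 ≤ k ∧ k ≤ n ∧ k.choose 3 ≤ (Vx S).card ∧
      (Vx S).card ≤ (k+1).choose 3 := by
    let P : ℕ → Prop := fun k => k.choose 3 ≤ (Vx S).card
    have hP3 : P 3 := by simpa [P] using h0
    let k := Nat.findGreatest P n
    have a1 : P k := Nat.findGreatest_spec hn3 hP3
    have a2 : 3 ≤ k := Nat.le_findGreatest hn3 hP3
    have a3 : k ≤ n := Nat.findGreatest_le n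
    refine ⟨k, a2, a3, a1, ?_⟩
    by_cases hkn : k = n
    · rw [hkn]; exact hle.trans (Nat.choose_le_choose 3 (Nat.le_succ n))
    · by_contra hc
      have : P (k+1) := by simp only [P]; omega
      have := Nat.le_findGreatest (P := P) (n := n) (by omega) this
      omega
  have kk := Finset.kruskal_katona_lovasz_form (i := 1) (r := 3) (by norm_num) hk3 hkn hsized hk1
  have hsh : (Finset.shadow (Vx S)) ⊆ Qs S := by
    intro A hA
    obtain ⟨T, hT, g, hg, rfl⟩ := Finset.mem_shadow_iff.1 hA
    refine Vx_Qs hT (Finset.erase_subset _ _) ?_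
    rw [Finset.card_erase_of_mem hg, (mem_Vx.1 hT).1]
  have hq : k.choose 2 ≤ (Qs S).card := by
    refine le_trans ?_ (Finset.card_le_card hsh)
    simpa using kk
  have hfin : ((k+1).choose 3) ^ 2 ≤ (k.choose 2) ^ 3 := by
    have c2 : (k.choose 2 : ℚ) = k * (k - 1) / 2 := by rw [Nat.cast_choose_two]
    have c3 : ((k+1).choose 3 : ℚ) = (k+1) * k * (k - 1) / 6 := by
      have := Nat.add_one_mul_choose_eq k 2
      have h : ((k:ℚ)+1) * (k.choose 2 : ℚ) = ((k+1).choose 3 : ℚ) * 3 := by exact_mod_cast this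
      rw [c2] at h
      linarith
    have hk : (3:ℚ) ≤ k := by exact_mod_cast hk3
    have : (((k+1).choose 3 : ℚ)) ^ 2 ≤ (k.choose 2 : ℚ) ^ 3 := by
      rw [c2, c3]
      have h1 : 0 ≤ ((k:ℚ) * (k-1)) ^ 2 := sq_nonneg _
      have h2 : ((k:ℚ)+1)^2/36 ≤ k * (k-1) / 8 := by nlinarith
      have := mul_le_mul_of_nonneg_left h2 h1
      calc _ = ((k:ℚ) * (k-1)) ^ 2 * (((k:ℚ)+1)^2/36) := by ring
        _ ≤ _ := this
        _ = _ := by ring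
    exact_mod_cast this
  calc _ ≤ ((k+1).choose 3) ^ 2 := Nat.pow_le_pow_left hk2 2
    _ ≤ _ := hfin
    _ ≤ _ := Nat.pow_le_pow_left hq 3

lemma bd_pos {R S : Finset (Fin n → Bool)} (hR : Geo R) (hn : 3 ≤ n) (hSR : S ⊆ R)
    (h0 : 0 < S.card) (h1 : S.card < R.card) : 1 ≤ (bd R S).card := by
  obtain ⟨σ, hσ⟩ := Finset.card_pos.1 h0
  have hc : Cube S ∅ σ := fun τ hτ => by
    have : τ = σ := funext fun i => hτ i (by simp)
    rwa [this]
  obtain ⟨ρ, hρ, _⟩ := rep_spec hR ∅ hSR σ hc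
  have hf : ¬ Full R S ∅ := by
    intro hf
    have := e0 h1
    rw [Finset.card_eq_zero] at this
    have h2 : (∅ : Finset (Fin n)) ∈ FullS R S 0 := mem_FullS.2 ⟨rfl, hf⟩
    rw [this] at h2
    simp at h2
  unfold Rep at hρ
  rw [if_neg hf] at hρ
  obtain ⟨T, hT, _⟩ := bdry_mixed hR hn hSR ∅ (by simp) ρ hρ
  have := Finset.card_pos.2 ⟨T, hT⟩
  have := hR.h6 S hSR
  omega

set_option maxHeartbeats 2000000 in
lemma arith (D : ℝ) (hD0 : 0 < D) (hD1 : D < 1) (δ : ℝ) (hδ : δ = (1 - D) / 50)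
    (n b m p Q M r s : ℝ) (hn : 3 ≤ n) (hb : 1 ≤ b) (hm0 : 0 ≤ m) (hp0 : 0 ≤ p)
    (hM : M ≤ 25 * b) (hQ : Q ≤ m + 64 * M) (h1 : p * (n - 1) ≤ 2 * Q)
    (h2 : 2 * m ≤ p * (p - 1)) (h3 : s ≤ D * r) (h4 : n * (n-1) * (n-2) / 6 ≤ r)
    (h5 : r - s ≤ 64 * M + (1 + n + n * (n-1)/2) + (n * (n-1)/2 - m) * n)
    (hm : m ≤ n * (n-1) / 2) :
    m ≤ (3200 / δ + 36 / δ ^ 2) * b := by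
  have hδ0 : 0 < δ := by rw [hδ]; linarith
  have hx : 0 < 3200 / δ := by positivity
  have hy : 0 < 36 / δ ^ 2 := by positivity
  set ε := (1 - D) / 100 with hε
  have hε0 : 0 < ε := by rw [hε]; linarith
  have hε1 : ε ≤ 1/100 := by rw [hε]; linarith
  by_cases hA : ε * m ≤ 1600 * b
  · have : m ≤ 3200 / δ * b := by
      have h2ε : δ = 2 * ε := by rw [hδ, hε]; ring
      rw [h2ε, div_mul_eq_mul_div, le_div_iff₀ (by positivity)]
      nlinarith
    nlinarith
  · push Not at hA
    have hmpos : 0 < m := by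
      by_contra h
      have : m = 0 := by linarith
      rw [this] at hA; nlinarith
    have hppos : 0 < p := by
      rcases hp0.lt_or_eq with h | h
      · exact h
      · rw [← h] at h2; linarith
    have b1 : p * (n - 1) ≤ 2 * (1 + ε) * m := by nlinarith
    have b2 : p * (n - 1) ≤ p * ((1 + ε) * (p - 1)) := by nlinarith
    have b3 : n - 1 ≤ (1 + ε) * (p - 1) := le_of_mul_le_mul_left b2 hppos
    have b4 : n ≤ (1 + ε) * p := by nlinarith
    have b5 : n * (n - 1) ≤ 2 * (1+ε)^2 * m := by
      calc n * (n-1) ≤ ((1+ε) * p) * (n-1) :=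
            mul_le_mul_of_nonneg_right b4 (by linarith)
        _ = (1+ε) * (p * (n-1)) := by ring
        _ ≤ (1+ε) * (2 * (1 + ε) * m) := mul_le_mul_of_nonneg_left b1 (by linarith)
        _ = _ := by ring
    have b6 : n * (n-1)/2 - m ≤ 3 * ε * (n * (n-1)/2) := by
      have : (1+ε)^2 - 1 ≤ 3 * ε := by nlinarith
      calc _ ≤ ((1+ε)^2 - 1) * m := by linarith
        _ ≤ (3 * ε) * m := mul_le_mul_of_nonneg_right this hm0
        _ ≤ _ := mul_le_mul_of_nonneg_left hm (by linarith)
    have b7 : (n * (n-1)/2 - m) * n ≤ 3 * ε * (n * (n-1)/2) * n :=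
      mul_le_mul_of_nonneg_right b6 (by linarith)
    have b8 : 3 * ε * (n * (n-1)/2) * n ≤ 3/2 * ε * n^3 := by
      have : 0 ≤ ε * n^2 := by positivity
      nlinarith
    have b9 : n^3 / 27 ≤ n * (n-1) * (n-2) / 6 := by
      nlinarith [mul_nonneg (by linarith : (0:ℝ) ≤ n) (by nlinarith : 0 ≤ (n-3)*(7*n - 6))]
    have b10 : (1 - D) * (n^3/27) ≤ r - s := by nlinarith
    have b11 : 1 + n + n * (n-1)/2 ≤ 3 * n^2 := by nlinarith
    have hn3 : 0 < n ^ 3 := by positivity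
    have b12 : δ * n^3 ≤ 1600 * b + 3 * n^2 := by
      have : δ * n^3 ≤ (1 - D) * (n^3/27) - 3/2 * ε * n^3 := by
        rw [hδ, hε]
        have : 0 < (1 - D) * n^3 := by apply mul_pos; linarith; exact hn3
        nlinarith
      linarith
    by_cases hB : 6 / δ ≤ n
    · rw [div_le_iff₀ hδ0] at hB
      have c1 : 3 * n^2 ≤ δ * n^3 / 2 := by
        have : 0 ≤ n^2 := by positivity
        nlinarith
      have c2 : m ≤ n^3 := by nlinarith
      have c3 : n^3 ≤ 3200 / δ * b := by
        rw [div_mul_eq_mul_div, le_div_iff₀ hδ0]; linarith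
      nlinarith
    · push Not at hB
      have c1 : n^2 ≤ 36 / δ^2 := by
        have : n^2 ≤ (6/δ)^2 := by
          apply pow_le_pow_left₀ (by linarith) hB.le
        rw [div_pow] at this
        linarith
      have c2 : m ≤ n^2 := by nlinarith
      nlinarith

set_option maxHeartbeats 2000000 in
theorem comb (D : ℝ) (hD0 : 0 < D) (hD1 : D < 1) : ∃ K : ℝ, 1 ≤ K ∧
    ∀ (n : ℕ) (R S : Finset (Fin n → Bool)), Geo R → S ⊆ R → 4 ≤ S.card →
    (S.card : ℝ) ≤ D * R.card →
      (((∑ A ∈ low n, (Rep R S A).card : ℕ) : ℝ) ≤ K * (bd R S).card) ∧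
      ((S.card : ℝ) ^ 2 ≤ 4 * (K * (bd R S).card) ^ 3) := by
  obtain ⟨δ, hδ⟩ : ∃ δ, δ = (1 - D) / 50 := ⟨_, rfl⟩
  have hδ0 : 0 < δ := by rw [hδ]; linarith
  set K0 := 3200 / δ + 36 / δ ^ 2 with hK0
  have hK0p : 0 < K0 := by positivity
  refine ⟨3200 + 2 * K0, by linarith, ?_⟩
  intro n R S hR hSR hS4 hSD
  have hlt : S.card < R.card := by
    have h4 : (4:ℝ) ≤ S.card := by exact_mod_cast hS4
    have : (S.card : ℝ) < R.card := by nlinarith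
    exact_mod_cast this
  have hn : 3 ≤ n := by
    by_contra h
    have h1 : R.card ≤ 2 ^ n := by
      simpa using Finset.card_le_univ R
    have h2 : 2 ^ n ≤ 2 ^ 2 := Nat.pow_le_pow_right (by norm_num) (by omega)
    omega
  have hb := bd_pos hR hn hSR (by omega) hlt
  have hM := hR.h6 S hSR
  have hQ := Qs_le hR hn hSR
  have h1 := e1 (S := S) hR hn
  have h2 := e2 (R := R) (S := S)
  have h5 := e5 hR hn hSR
  have h4 := hR.h5
  have hm := FullS_le (R := R) (S := S) 2
  have h3 := e3 (S := S) hR hn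
  have h0 := e0 hlt
  have hrep := sum_rep hR hn hSR
  have hV := card_le_low_add hR hSR
  have ht := tri S
  set b := (bd R S).card
  set m := (FullS R S 2).card
  set M := (Mixed R S).card
  set Q := (Qs S).card
  set p := (Pl R S).card
  set s := S.card
  set V := (Vx S).card
  set X := ∑ A ∈ low n, (Rep R S A).card
  have c2 : (n.choose 2 : ℝ) = n * (n - 1) / 2 := by rw [Nat.cast_choose_two]
  have hmK : (m : ℝ) ≤ K0 * b := by
    refine arith D hD0 hD1 δ hδ n b m p Q M R.card s (by exact_mod_cast hn) (by exact_mod_cast hb)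
      (by positivity) (by positivity) (by exact_mod_cast hM) (by exact_mod_cast hQ) ?_ ?_ hSD ?_ ?_ ?_
    · have : ((n - 1 : ℕ) : ℝ) = n - 1 := by push_cast [Nat.cast_sub (by omega : 1 ≤ n)]; ring
      rw [← this]; exact_mod_cast h1
    · have : (m : ℝ) ≤ (p.choose 2 : ℕ) := by exact_mod_cast h2
      rw [Nat.cast_choose_two] at this
      linarith
    · obtain ⟨k, rfl⟩ : ∃ k, n = k + 1 := ⟨n - 1, by omega⟩
      have := Nat.add_one_mul_choose_eq k 2
      have h : ((k:ℝ)+1) * (k.choose 2 : ℝ) = ((k+1).choose 3 : ℝ) * 3 := by exact_mod_cast this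
      rw [Nat.cast_choose_two] at h
      have h4' : ((k+1).choose 3 : ℝ) ≤ R.card := by exact_mod_cast h4
      push_cast
      linarith
    · have h5' : R.card ≤ s + (64 * M + (1 + n + n.choose 2) + (n.choose 2 - m) * n) := by omega
      have h5'' : (R.card : ℝ) ≤ s + (64 * M + (1 + n + n.choose 2) + ((n.choose 2 - m : ℕ):ℝ) * n) := by
        exact_mod_cast h5'
      rw [Nat.cast_sub hm, c2] at h5''
      linarith
    · rw [← c2]; exact_mod_cast hm
  have hXn : X ≤ 128 * M + 2 * m := by omega
  have hXr : (X:ℝ) ≤ 128 * M + 2 * m := by exact_mod_cast hXn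
  have hMr : (M:ℝ) ≤ 25 * b := by exact_mod_cast hM
  have hQr : (Q:ℝ) ≤ m + 64 * M := by exact_mod_cast hQ
  have hbr : (1:ℝ) ≤ b := by exact_mod_cast hb
  have hX : (X:ℝ) ≤ (3200 + 2 * K0) * b := by linarith
  refine ⟨hX, ?_⟩
  set x := (3200 + 2 * K0) * (b:ℝ) with hx
  have hx1 : 1 ≤ x := by nlinarith
  have hQx : (Q:ℝ) ≤ x := by nlinarith
  have hV2 : (V:ℝ)^2 ≤ x^3 := by
    have : (V:ℝ)^2 ≤ (Q:ℝ)^3 := by exact_mod_cast ht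
    exact this.trans (pow_le_pow_left₀ (by positivity) hQx 3)
  have hs : (s:ℝ) ≤ X + V := by exact_mod_cast hV
  have hs' : (s:ℝ) ≤ x + V := by linarith
  calc (s:ℝ)^2 ≤ (x + V)^2 := pow_le_pow_left₀ (by positivity) hs' 2
    _ ≤ 2 * x^2 + 2 * (V:ℝ)^2 := by nlinarith [sq_nonneg (x - V)]
    _ ≤ 2 * x^3 + 2 * x^3 := by nlinarith [sq_nonneg x]
    _ = _ := by ring

end Chm

namespace Chm

/-- sign of a boolean -/
def sg (b : Bool) : ℝ := if b then 1 else -1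

lemma sg_not (b : Bool) : sg (!b) = - sg b := by cases b <;> simp [sg]
lemma sg_ne (b : Bool) : sg b ≠ 0 := by cases b <;> simp [sg]
lemma sg_sq (b : Bool) : sg b * sg b = 1 := by cases b <;> simp [sg]

/-- arrangement data in general position -/
structure Arr (n : ℕ) where
  N : Fin n → (Fin 3 → ℝ)
  o : Fin n → ℝ
  li : ∀ A : Finset (Fin n), A.card ≤ 3 → LinearIndependent ℝ (fun i : A => N i.1)
  ng : ∀ A : Finset (Fin n), A.card = 4 → ∀ x, ∃ i ∈ A, (N i) ⬝ᵥ x ≠ o i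

namespace Arr

variable {n : ℕ} (a : Arr n)

/-- the affine form -/
def l (i : Fin n) (x : Fin 3 → ℝ) : ℝ := a.N i ⬝ᵥ x - a.o i

lemma l_add (i : Fin n) (x d : Fin 3 → ℝ) (t : ℝ) : a.l i (x + t • d) = a.l i x + t * (a.N i ⬝ᵥ d) := by
  simp [l, dotProduct_add, dotProduct_smul]; ring

lemma l_comb (i : Fin n) (x y : Fin 3 → ℝ) (t : ℝ) :
    a.l i ((1 - t) • x + t • y) = (1 - t) * a.l i x + t * a.l i y := by
  simp [l, dotProduct_add, dotProduct_smul]; ring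

lemma l_cont (i : Fin n) : Continuous (a.l i) := by
  unfold l dotProduct; fun_prop

lemma mat_surj (A : Finset (Fin n)) (hA : A.card ≤ 3) :
    Function.Surjective (Matrix.of (fun i : A => a.N i.1)).mulVecLin := by
  have h := (a.li A hA).rank_matrix (M := Matrix.of (fun i : A => a.N i.1))
  rw [Matrix.rank] at h
  rw [← LinearMap.range_eq_top]
  apply Submodule.eq_top_of_finrank_eq
  rw [h]; simp

lemma solve (A : Finset (Fin n)) (hA : A.card ≤ 3) (c : Fin n → ℝ) :
    ∃ d, ∀ i ∈ A, a.N i ⬝ᵥ d = c i := by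
  obtain ⟨d, hd⟩ := a.mat_surj A hA (fun i => c i.1)
  refine ⟨d, fun i hi => ?_⟩
  have := congrFun hd ⟨i, hi⟩
  simpa [Matrix.mulVec] using this

lemma inj (A : Finset (Fin n)) (hA : A.card = 3) (d : Fin 3 → ℝ) (h : ∀ i ∈ A, a.N i ⬝ᵥ d = 0) :
    d = 0 := by
  have hs := a.mat_surj A hA.le
  have hi := (LinearMap.injective_iff_surjective_of_finrank_eq_finrank (by simp [hA])).2 hs
  apply hi
  rw [map_zero]
  funext i
  simpa [Matrix.mulVec] using h i.1 i.2

lemma zeros_card (x : Fin 3 → ℝ) (A : Finset (Fin n)) (h : ∀ i ∈ A, a.l i x = 0) : A.card ≤ 3 := by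
  by_contra hc
  obtain ⟨B, hB, hc⟩ := Finset.exists_subset_card_eq (show 4 ≤ A.card by omega)
  obtain ⟨i, hi, hne⟩ := a.ng B hc x
  exact hne (by have := h i (hB hi); unfold l at this; linarith)

lemma exists_vertex (A : Finset (Fin n)) (hA : A.card = 3) : ∃ x, ∀ i ∈ A, a.l i x = 0 := by
  obtain ⟨d, hd⟩ := a.solve A hA.le a.o
  exact ⟨d, fun i hi => by simp [l, hd i hi]⟩

open Classical in
/-- vertex of a triple -/
def v (A : Finset (Fin n)) : Fin 3 → ℝ :=
  if h : A.card = 3 then (a.exists_vertex A h).choose else 0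

lemma v_zero {A : Finset (Fin n)} (hA : A.card = 3) : ∀ i ∈ A, a.l i (a.v A) = 0 := by
  unfold v; rw [dif_pos hA]; exact (a.exists_vertex A hA).choose_spec

lemma v_unique {A : Finset (Fin n)} (hA : A.card = 3) (x : Fin 3 → ℝ) (h : ∀ i ∈ A, a.l i x = 0) :
    x = a.v A := by
  have : x - a.v A = 0 := by
    apply a.inj A hA
    intro i hi
    have h1 := h i hi
    have h2 := a.v_zero hA i hi
    unfold l at h1 h2
    rw [dotProduct_sub]; linarith
  exact sub_eq_zero.1 this

lemma v_ne {A : Finset (Fin n)} (hA : A.card = 3) {i : Fin n} (hi : a.l i (a.v A) = 0) : i ∈ A := by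
  by_contra h
  have := a.zeros_card (a.v A) (insert i A) (by
    intro j hj
    rcases Finset.mem_insert.1 hj with rfl | hj
    · exact hi
    · exact a.v_zero hA j hj)
  rw [Finset.card_insert_of_notMem h] at this
  omega

open Classical in
/-- the sign vectors of chambers -/
def R : Finset (Fin n → Bool) := Finset.univ.filter fun σ => ∃ x, ∀ i, 0 < sg (σ i) * a.l i x

lemma mem_R {σ : Fin n → Bool} : σ ∈ a.R ↔ ∃ x, ∀ i, 0 < sg (σ i) * a.l i x := by
  simp [R]

lemma cube_of_weak {x : Fin 3 → ℝ} {σ : Fin n → Bool} {A : Finset (Fin n)}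
    (hx : ∀ i, 0 ≤ sg (σ i) * a.l i x) (hA : ∀ i ∈ A, a.l i x = 0) : Cube a.R A σ := by
  intro τ hτ
  rw [mem_R]
  classical
  set Z : Finset (Fin n) := Finset.univ.filter fun i => a.l i x = 0 with hZ
  have hZc : Z.card ≤ 3 := a.zeros_card x Z (by simp [hZ])
  obtain ⟨d, hd⟩ := a.solve Z hZc (fun i => sg (τ i))
  have key : ∀ i, ∀ᶠ t in 𝓝[>] (0:ℝ), 0 < sg (τ i) * a.l i (x + t • d) := by
    intro i
    by_cases hi : a.l i x = 0
    · filter_upwards [self_mem_nhdsWithin] with t ht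
      rw [l_add, hi, hd i (by simp [hZ, hi])]
      have : (0:ℝ) < t := ht
      have h2 := sg_sq (τ i)
      nlinarith
    · have hiA : i ∉ A := fun h => hi (hA i h)
      have h1 : 0 < sg (τ i) * a.l i x := by
        rw [hτ i hiA]
        exact lt_of_le_of_ne (hx i) (mul_ne_zero (sg_ne _) hi).symm
      have hc : Continuous fun t : ℝ => sg (τ i) * a.l i (x + t • d) := by
        have := a.l_cont i
        fun_prop
      have h0 : 0 < sg (τ i) * a.l i (x + (0:ℝ) • d) := by simpa using h1
      exact nhdsWithin_le_nhds (hc.continuousAt.eventually (lt_mem_nhds h0))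
  obtain ⟨t, ht⟩ := (Filter.eventually_all.2 key).exists
  exact ⟨_, ht⟩

lemma cell_of_cube {A : Finset (Fin n)} : ∀ {σ : Fin n → Bool}, Cube a.R A σ →
    ∃ x, (∀ i ∈ A, a.l i x = 0) ∧ ∀ i, i ∉ A → 0 < sg (σ i) * a.l i x := by
  classical
  induction A using Finset.induction_on with
  | empty =>
    intro σ h
    obtain ⟨x, hx⟩ := a.mem_R.1 h.mem
    exact ⟨x, by simp, fun i _ => hx i⟩
  | insert g A hg ih =>
    intro σ h
    obtain ⟨x, hx0, hx⟩ := ih (h.mono_dir (Finset.subset_insert _ _) (τ := σ) fun _ _ => rfl)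
    obtain ⟨y, hy0, hy⟩ := ih (h.mono_dir (Finset.subset_insert _ _) (τ := fl g σ) fun i hi => by
      rw [fl_ne]; rintro rfl; simp at hi)
    have h1 := hx g hg
    have h2 := hy g hg
    rw [fl_same, sg_not] at h2
    set p := sg (σ g) * a.l g x
    set q := - sg (σ g) * a.l g y with hq
    have hpq : 0 < p + q := by linarith
    set t := p / (p + q) with ht
    have ht0 : 0 < t := by positivity
    have ht1 : 1 - t = q / (p + q) := by rw [ht]; field_simp; ring
    have ht1' : 0 < 1 - t := by rw [ht1]; positivity
    refine ⟨(1 - t) • x + t • y, ?_, ?_⟩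
    · intro i hi
      rw [l_comb]
      rcases Finset.mem_insert.1 hi with rfl | hi
      · have : sg (σ i) * ((1 - t) * a.l i x + t * a.l i y) = 0 := by
          have : sg (σ i) * ((1 - t) * a.l i x + t * a.l i y) = (1 - t) * p - t * q := by
            simp only [p, hq]; ring
          rw [this, ht1, ht]; ring
        exact (mul_eq_zero.1 this).resolve_left (sg_ne _)
      · rw [hx0 i hi, hy0 i hi]; ring
    · intro i hi
      rw [l_comb]
      have hig : i ≠ g := by rintro rfl; simp at hi
      have hiA : i ∉ A := fun h => hi (by simp [h])
      have h1 := hx i hiA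
      have h2 := hy i hiA
      rw [fl_ne hig] at h2
      have := mul_pos ht1' h1
      have := mul_pos ht0 h2
      nlinarith

lemma weak_v {T : Finset (Fin n)} (hT : T.card = 3) {σ : Fin n → Bool} (h : Cube a.R T σ) :
    (∀ i, i ∉ T → 0 < sg (σ i) * a.l i (a.v T)) ∧ ∀ i, 0 ≤ sg (σ i) * a.l i (a.v T) := by
  obtain ⟨x, hx0, hx⟩ := a.cell_of_cube h
  rw [a.v_unique hT x hx0] at hx
  refine ⟨hx, fun i => ?_⟩
  by_cases hi : i ∈ T
  · rw [a.v_zero hT i hi]; simp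
  · exact (hx i hi).le

end Arr

lemma fh {ι : Type*} (B : Finset ι) (u w : ι → ℝ) (h0 : ι) (hB : h0 ∈ B) (hu : u h0 ≠ 0)
    (hw : u h0 * w h0 ≤ 0) : ∃ t : ℝ, 0 < t ∧ t ≤ 1 ∧
      (∀ h ∈ B, 0 ≤ u h * ((1 - t) * u h + t * w h)) ∧
      ∃ h ∈ B, u h ≠ 0 ∧ (1 - t) * u h + t * w h = 0 := by
  classical
  set B' := B.filter fun h => u h ≠ 0 ∧ u h * w h ≤ 0 with hB'
  have hne : B'.Nonempty := ⟨h0, by simp [hB', hB, hu, hw]⟩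
  obtain ⟨m, hm, hmin⟩ := B'.exists_min_image (fun h => u h * u h / (u h * u h - u h * w h)) hne
  have pos : ∀ h ∈ B', 0 < u h * u h ∧ u h * w h ≤ 0 := by
    intro h hh
    have := (Finset.mem_filter.1 hh).2
    exact ⟨mul_self_pos.2 this.1, this.2⟩
  obtain ⟨p1, p2⟩ := pos m hm
  have hd : 0 < u m * u m - u m * w m := by linarith
  set t := u m * u m / (u m * u m - u m * w m) with ht
  have ht0 : 0 < t := by positivity
  have ht1 : t ≤ 1 := by rw [ht, div_le_one hd]; linarith
  refine ⟨t, ht0, ht1, ?_, m, (Finset.mem_filter.1 hm).1, ?_, ?_⟩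
  · intro h hh
    by_cases hc : h ∈ B'
    · obtain ⟨q1, q2⟩ := pos h hc
      have h1 := hmin h hc
      have hdd : 0 < u h * u h - u h * w h := by linarith
      have h1' : t ≤ u h * u h / (u h * u h - u h * w h) := h1
      rw [le_div_iff₀ hdd] at h1'
      nlinarith
    · have hc' : u h = 0 ∨ 0 < u h * w h := by
        by_contra hcon
        push Not at hcon
        exact hc (Finset.mem_filter.2 ⟨hh, hcon⟩)
      rcases hc' with hc' | hc'
      · simp [hc']
      · have := mul_nonneg (by linarith : 0 ≤ 1 - t) (mul_self_nonneg (u h))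
        have := mul_pos ht0 hc'
        nlinarith
  · exact fun h => by rw [h] at p1; simp at p1
  · have hum : u m ≠ 0 := fun h => by rw [h] at p1; simp at p1
    have : u m * ((1 - t) * u m + t * w m) = 0 := by
      have : t * (u m * u m - u m * w m) = u m * u m := by rw [ht]; exact div_mul_cancel₀ _ hd.ne'
      linarith
    exact (mul_eq_zero.1 this).resolve_left hum

namespace Arr

variable {n : ℕ} (a : Arr n)

lemma g4 (A : Finset (Fin n)) (σ) (h : Cube a.R A σ) : A.card ≤ 3 := by
  obtain ⟨x, hx, _⟩ := a.cell_of_cube h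
  exact a.zeros_card x A hx

lemma exists_sign (x : Fin 3 → ℝ) : ∃ σ : Fin n → Bool, ∀ i, 0 ≤ sg (σ i) * a.l i x := by
  classical
  refine ⟨fun i => decide (0 ≤ a.l i x), fun i => ?_⟩
  by_cases h : 0 ≤ a.l i x
  · simp [sg, h]
  · simp [sg, h]; linarith

lemma g3 (T : Finset (Fin n)) (hT : T.card = 3) : ∃ σ, Cube a.R T σ := by
  obtain ⟨σ, hσ⟩ := a.exists_sign (a.v T)
  exact ⟨σ, a.cube_of_weak hσ (a.v_zero hT)⟩

lemma sg_eq_of {b c : Bool} {x : ℝ} (h1 : 0 < sg b * x) (h2 : 0 < sg c * x) : b = c := by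
  revert h1 h2
  cases b <;> cases c <;> simp [sg] <;> intros <;> linarith

lemma g3' (T : Finset (Fin n)) (σ σ') (hT : T.card = 3) (h : Cube a.R T σ) (h' : Cube a.R T σ') :
    ∀ i, i ∉ T → σ i = σ' i := fun i hi =>
  sg_eq_of ((a.weak_v hT h).1 i hi) ((a.weak_v hT h').1 i hi)

/-- weak sign from product -/
lemma weak_of {b : Bool} {x z : ℝ} (h1 : 0 < sg b * x) (h2 : 0 ≤ x * z) : 0 ≤ sg b * z := by
  revert h1
  cases b <;> simp [sg] <;> intro h1
  · by_contra h; push Not at h; nlinarith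
  · by_contra h; push Not at h; nlinarith

/-- first hit inside a cell -/
lemma hit (A B : Finset (Fin n)) (σ : Fin n → Bool) (x y : Fin 3 → ℝ)
    (hx0 : ∀ i ∈ A, a.l i x = 0) (hx : ∀ i, i ∉ A → 0 < sg (σ i) * a.l i x)
    (hy0 : ∀ i ∈ A, a.l i y = 0) (h0 : Fin n) (h0B : h0 ∈ B) (h0A : h0 ∉ A)
    (hy : sg (σ h0) * a.l h0 y ≤ 0) :
    ∃ t : ℝ, 0 < t ∧ t ≤ 1 ∧ (∀ i ∈ A, a.l i ((1 - t) • x + t • y) = 0) ∧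
      (∀ i ∈ B, 0 ≤ sg (σ i) * a.l i ((1 - t) • x + t • y)) ∧
      ∃ g ∈ B, g ∉ A ∧ a.l g ((1 - t) • x + t • y) = 0 := by
  have hxh := hx h0 h0A
  have hne : a.l h0 x ≠ 0 := fun h => by rw [h] at hxh; simp at hxh
  have hle : a.l h0 x * a.l h0 y ≤ 0 := by
    have : (sg (σ h0) * a.l h0 x) * (sg (σ h0) * a.l h0 y) ≤ 0 :=
      mul_nonpos_of_nonneg_of_nonpos hxh.le hy
    have h2 := sg_sq (σ h0)
    have e : (sg (σ h0) * a.l h0 x) * (sg (σ h0) * a.l h0 y) = (sg (σ h0) * sg (σ h0)) * (a.l h0 x * a.l h0 y) := by ring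
    rw [e, h2] at this; linarith
  obtain ⟨t, ht0, ht1, hw, g, hgB, hgx, hg⟩ := fh B (fun i => a.l i x) (fun i => a.l i y) h0 h0B hne hle
  have z0 : ∀ i ∈ A, a.l i ((1 - t) • x + t • y) = 0 := by
    intro i hi; rw [l_comb, hx0 i hi, hy0 i hi]; ring
  refine ⟨t, ht0, ht1, z0, ?_, g, hgB, fun h => hgx (hx0 g h), by rw [l_comb]; exact hg⟩
  intro i hi
  by_cases hA : i ∈ A
  · rw [z0 i hA]; simp
  · refine weak_of (hx i hA) ?_
    rw [l_comb]; exact hw i hi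

lemma g1 (A : Finset (Fin n)) (σ σ') (h : Cube a.R A σ) (h' : Cube a.R A σ') (hne : σ ≠ σ') :
    ∃ g, σ g ≠ σ' g ∧ Cube a.R A (fl g σ) := by
  classical
  by_cases hc : ∃ g ∈ A, σ g ≠ σ' g
  · obtain ⟨g, hg, hgn⟩ := hc
    refine ⟨g, hgn, h.congr fun i hi => fl_ne ?_ σ⟩
    rintro rfl; exact hi hg
  · push Not at hc
    obtain ⟨g0, hg0⟩ := Function.ne_iff.1 hne
    have hg0A : g0 ∉ A := fun h => hg0 (hc g0 h)
    obtain ⟨x, hx0, hx⟩ := a.cell_of_cube h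
    obtain ⟨y, hy0, hy⟩ := a.cell_of_cube h'
    obtain ⟨t, ht0, ht1, z0, zw, g, _, hgA, hg⟩ := a.hit A Finset.univ σ x y hx0 hx hy0 g0
      (Finset.mem_univ _) hg0A (by
        have := hy g0 hg0A
        have e : σ g0 = !σ' g0 := by
          revert hg0; cases σ g0 <;> cases σ' g0 <;> simp
        rw [e, sg_not]; linarith)
    refine ⟨g, ?_, ?_⟩
    · intro e
      have h1 := hx g hgA
      have h2 := hy g hgA
      rw [← e] at h2
      have h3 : sg (σ g) * a.l g ((1 - t) • x + t • y) = 0 := by rw [hg]; simp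
      rw [l_comb] at h3
      have := mul_pos ht0 h2
      have := mul_nonneg (by linarith : 0 ≤ 1 - t) h1.le
      nlinarith
    · have : Cube a.R (insert g A) σ := a.cube_of_weak (fun i => zw i (Finset.mem_univ _)) (by
        intro i hi
        rcases Finset.mem_insert.1 hi with rfl | hi
        · exact hg
        · exact z0 i hi)
      refine this.mono_dir (Finset.subset_insert _ _) fun i hi => fl_ne ?_ σ
      rintro rfl; simp at hi

/-- extension within a set `B` -/
lemma ext_hit (A B : Finset (Fin n)) (σ) (hA : A.card < 3) (hB : ¬ B ⊆ A) (h : Cube a.R A σ) :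
    ∃ g ∈ B, g ∉ A ∧ ∃ z, a.l g z = 0 ∧ (∀ i ∈ A, a.l i z = 0) ∧ ∀ i ∈ B, 0 ≤ sg (σ i) * a.l i z := by
  classical
  obtain ⟨g0, hg0B, hg0⟩ := Finset.not_subset.1 hB
  obtain ⟨x, hx0, hx⟩ := a.cell_of_cube h
  obtain ⟨d, hd⟩ := a.solve (insert g0 A) ((Finset.card_insert_le _ _).trans (by omega))
    (fun i => - a.l i x)
  obtain ⟨t, ht0, ht1, z0, zw, g, hgB, hgA, hg⟩ := a.hit A B σ x (x + (1:ℝ) • d) hx0 hx (by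
    intro i hi; rw [l_add, hd i (by simp [hi])]; ring) g0 hg0B hg0 (by
    rw [l_add, hd g0 (by simp)]; simp)
  exact ⟨g, hgB, hgA, _, hg, z0, zw⟩

lemma g2 (A : Finset (Fin n)) (σ) (hn : 3 ≤ n) (hA : A.card < 3) (h : Cube a.R A σ) :
    ∃ g, g ∉ A ∧ Cube a.R (insert g A) σ := by
  have : ¬ (Finset.univ : Finset (Fin n)) ⊆ A := by
    intro h
    have := Finset.card_le_card h
    simp at this; omega
  obtain ⟨g, _, hgA, z, h1, h2, h3⟩ := a.ext_hit A Finset.univ σ hA this h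
  refine ⟨g, hgA, a.cube_of_weak (fun i => h3 i (Finset.mem_univ _)) ?_⟩
  intro i hi
  rcases Finset.mem_insert.1 hi with rfl | hi
  · exact h1
  · exact h2 i hi

end Arr

end Chm

namespace Chm
namespace Arr

variable {n : ℕ} (a : Arr n)

lemma gen : ∃ p : Fin 3 → ℝ, ∀ A : Finset (Fin n), A.card = 3 → ∃ c : Fin n → ℝ,
    (∀ x, p ⬝ᵥ x = ∑ i ∈ A, c i * (a.N i ⬝ᵥ x)) ∧ ∀ i ∈ A, c i ≠ 0 := by
  classical
  set F : Finset (Subspace ℝ (Fin 3 → ℝ)) :=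
    ((Finset.univ : Finset (Finset (Fin n))).filter fun B => B.card ≤ 2).image
      (fun B : Finset (Fin n) => Submodule.span ℝ (a.N '' (B : Set (Fin n)))) with hF
  have hT : ⊤ ∉ F := by
    intro h
    obtain ⟨B, hB, hB'⟩ := Finset.mem_image.1 h
    have hB2 := (Finset.mem_filter.1 hB).2
    have h1 := finrank_span_finset_le_card (R := ℝ) (B.image a.N)
    have h2 : Set.finrank ℝ ((B.image a.N : Finset _) : Set (Fin 3 → ℝ)) = 3 := by
      unfold Set.finrank
      rw [Finset.coe_image, hB']; simp
    have := Finset.card_image_le (s := B) (f := a.N)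
    omega
  have hne := Subspace.biUnion_ne_univ_of_top_notMem hT
  obtain ⟨p, hp⟩ := (Set.ne_univ_iff_exists_notMem _).1 hne
  refine ⟨p, fun A hA => ?_⟩
  have hpB : ∀ B : Finset (Fin n), B.card ≤ 2 → p ∉ Submodule.span ℝ (a.N '' (B : Set (Fin n))) := by
    intro B hB h
    apply hp
    simp only [Set.mem_iUnion]
    exact ⟨_, Finset.mem_image.2 ⟨B, by simp [hB], rfl⟩, h⟩
  have htop : p ∈ Submodule.span ℝ (a.N '' (A : Set (Fin n))) := by
    have h := (a.li A hA.le).span_eq_top_of_card_eq_finrank' (by simp [hA])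
    have e : Set.range (fun i : A => a.N i.1) = a.N '' (A : Set (Fin n)) := by
      ext x; simp
    rw [← e, h]; trivial
  obtain ⟨c, hc⟩ := (Submodule.mem_span_image_finset_iff_exists_fun' ℝ).1 htop
  refine ⟨c, fun x => ?_, fun i hi h0 => ?_⟩
  · rw [← hc, sum_dotProduct]
    exact Finset.sum_congr rfl fun i _ => by rw [smul_dotProduct]; rfl
  · apply hpB (A.erase i) (by rw [Finset.card_erase_of_mem hi]; omega)
    rw [← hc]
    refine Submodule.sum_mem _ fun j hj => ?_
    by_cases hji : j = i
    · rw [hji, h0, zero_smul]; exact Submodule.zero_mem _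
    · exact Submodule.smul_mem _ _ (Submodule.subset_span ⟨j, by simp [hji, hj], rfl⟩)

/-- generic direction -/
def p : Fin 3 → ℝ := a.gen.choose

open Classical in
/-- coefficients -/
def c (A : Finset (Fin n)) : Fin n → ℝ :=
  if h : A.card = 3 then (a.gen.choose_spec A h).choose else 0

lemma c_ne {A : Finset (Fin n)} (hA : A.card = 3) : ∀ i ∈ A, a.c A i ≠ 0 := by
  unfold c; rw [dif_pos hA]; exact (a.gen.choose_spec A hA).choose_spec.2

lemma p_eq {A : Finset (Fin n)} (hA : A.card = 3) (x : Fin 3 → ℝ) :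
    a.p ⬝ᵥ x - a.p ⬝ᵥ a.v A = ∑ i ∈ A, a.c A i * a.l i x := by
  have h : ∀ x, a.p ⬝ᵥ x = ∑ i ∈ A, a.c A i * (a.N i ⬝ᵥ x) := by
    unfold c p; rw [dif_pos hA]; exact (a.gen.choose_spec A hA).choose_spec.1
  rw [h, h, ← Finset.sum_sub_distrib]
  refine Finset.sum_congr rfl fun i hi => ?_
  have := a.v_zero hA i hi
  unfold l at this ⊢
  have e : a.N i ⬝ᵥ a.v A = a.o i := by linarith
  rw [e]; ring

/-- extremality -/
def Ex (s : ℝ) (σ : Fin n → Bool) (A F : Finset (Fin n)) : Prop :=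
  ∀ i ∈ A, i ∉ F → 0 < s * (a.c A i * sg (σ i))

lemma ex_le {s : ℝ} {σ : Fin n → Bool} {A B F : Finset (Fin n)} (hA : A.card = 3) (hB : B.card = 3)
    (hFB : F ⊆ B) (eA : a.Ex s σ A F)
    (wB : ∀ i ∈ A, 0 ≤ sg (σ i) * a.l i (a.v B)) :
    (∀ i ∈ A, 0 ≤ s * (a.c A i * a.l i (a.v B))) ∧
    (∀ i ∈ A, s * (a.c A i * a.l i (a.v B)) = 0 → a.l i (a.v B) = 0) := by
  have key : ∀ i, s * (a.c A i * a.l i (a.v B)) =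
      (s * (a.c A i * sg (σ i))) * (sg (σ i) * a.l i (a.v B)) := by
    intro i
    have := sg_sq (σ i)
    linear_combination (- s * a.c A i * a.l i (a.v B)) * this
  refine ⟨fun i hi => ?_, fun i hi h => ?_⟩
  · by_cases hF : i ∈ F
    · rw [a.v_zero hB i (hFB hF)]; simp
    · rw [key]; exact mul_nonneg (eA i hi hF).le (wB i hi)
  · by_cases hF : i ∈ F
    · exact a.v_zero hB i (hFB hF)
    · rw [key] at h
      have h1 := (mul_eq_zero.1 h).resolve_left (eA i hi hF).ne'
      exact (mul_eq_zero.1 h1).resolve_left (sg_ne _)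

lemma uniq {s : ℝ} {σ : Fin n → Bool} {A B F : Finset (Fin n)} (hA : A.card = 3) (hB : B.card = 3)
    (hFA : F ⊆ A) (hFB : F ⊆ B) (eA : a.Ex s σ A F) (eB : a.Ex s σ B F)
    (wA : ∀ i ∈ B, 0 ≤ sg (σ i) * a.l i (a.v A)) (wB : ∀ i ∈ A, 0 ≤ sg (σ i) * a.l i (a.v B)) :
    A = B := by
  obtain ⟨h1, h1'⟩ := a.ex_le hA hB hFB eA wB
  obtain ⟨h2, _⟩ := a.ex_le hB hA hFA eB wA
  have s1 := Finset.sum_nonneg h1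
  have s2 := Finset.sum_nonneg h2
  rw [← Finset.mul_sum, ← a.p_eq hA] at s1
  rw [← Finset.mul_sum, ← a.p_eq hB] at s2
  have s3 : ∑ i ∈ A, s * (a.c A i * a.l i (a.v B)) = 0 := by
    rw [← Finset.mul_sum, ← a.p_eq hA]; linarith
  have h3 := (Finset.sum_eq_zero_iff_of_nonneg h1).1 s3
  refine Finset.eq_of_subset_of_card_le (fun i hi => ?_) (by omega)
  exact a.v_ne hB (h1' i hi (h3 i hi))

lemma g5 : n.choose 3 ≤ a.R.card := by
  classical
  have : n.choose 3 = (Finset.powersetCard 3 (Finset.univ : Finset (Fin n))).card := by simp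
  rw [this]
  refine Finset.card_le_card_of_forall_subsingleton
    (fun T σ => Cube a.R T σ ∧ a.Ex 1 σ T ∅) ?_ ?_
  · intro T hT
    have hT3 := (Finset.mem_powersetCard.1 hT).2
    obtain ⟨σ, hσ⟩ := a.g3 T hT3
    have hτ : Cube a.R T (fun i => if i ∈ T then decide (0 < a.c T i) else σ i) :=
      hσ.congr fun i hi => by simp [hi]
    refine ⟨_, hτ.mem, hτ, ?_⟩
    intro i hi _
    simp only [hi, if_true]
    have := a.c_ne hT3 i hi
    by_cases h : 0 < a.c T i
    · simp [sg, h]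
    · simp [sg, h]; exact lt_of_le_of_ne (not_lt.1 h) this
  · rintro σ - A ⟨hA, cA, eA⟩ B ⟨hB, cB, eB⟩
    have hA3 := (Finset.mem_powersetCard.1 hA).2
    have hB3 := (Finset.mem_powersetCard.1 hB).2
    exact a.uniq hA3 hB3 (by simp) (by simp) eA eB (fun i _ => (a.weak_v hA3 cA).2 i)
      (fun i _ => (a.weak_v hB3 cB).2 i)

end Arr

lemma flip_ind {n : ℕ} (T : Finset (Fin n)) (P : (Fin n → Bool) → Prop)
    (hP : ∀ σ, P σ → ∀ y ∈ T, P (fl y σ)) {σ τ : Fin n → Bool} (h : P σ)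
    (hτ : ∀ i, i ∉ T → τ i = σ i) : P τ := by
  classical
  induction T using Finset.induction_on generalizing σ with
  | empty =>
    have : τ = σ := funext fun i => hτ i (by simp)
    rwa [this]
  | insert g T hg ih =>
    have hP' : ∀ σ, P σ → ∀ y ∈ T, P (fl y σ) := fun σ hσ y hy => hP σ hσ y (by simp [hy])
    by_cases e : τ g = σ g
    · refine ih hP' h fun i hi => ?_
      by_cases hig : i = g
      · rw [hig, e]
      · exact hτ i (by simp [hig, hi])
    · refine ih hP' (hP σ h g (by simp)) fun i hi => ?_
      by_cases hig : i = g
      · rw [hig, fl_same]; revert e; cases τ g <;> cases σ g <;> simp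
      · rw [fl_ne hig]; exact hτ i (by simp [hig, hi])

lemma fl_comm {n : ℕ} (x y : Fin n) (σ : Fin n → Bool) : fl x (fl y σ) = fl y (fl x σ) := by
  by_cases h : x = y
  · rw [h]
  · funext i
    by_cases h1 : i = x
    · subst h1; simp [fl, h]
    · by_cases h2 : i = y
      · subst h2; simp [fl, h1]
      · simp [fl, h1, h2]

lemma Cube.flip {n : ℕ} {R : Finset (Fin n → Bool)} {T : Finset (Fin n)} {σ : Fin n → Bool}
    (h : Cube R T σ) {y : Fin n} (hy : y ∈ T) : Cube R T (fl y σ) :=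
  h.congr fun i hi => fl_ne (by rintro rfl; exact hi hy) σ

open Classical in
/-- boundary directions at a chamber -/
def Bd {n : ℕ} (R S : Finset (Fin n → Bool)) (σ : Fin n → Bool) : Finset (Fin n) :=
  Finset.univ.filter fun x => fl x σ ∈ R ∧ ¬ (fl x σ ∈ S ↔ σ ∈ S)

lemma mem_Bd {n : ℕ} {R S : Finset (Fin n → Bool)} {σ : Fin n → Bool} {x : Fin n} :
    x ∈ Bd R S σ ↔ fl x σ ∈ R ∧ ¬ (fl x σ ∈ S ↔ σ ∈ S) := by simp [Bd]

lemma sum_Bd {n : ℕ} {R S : Finset (Fin n → Bool)} (hSR : S ⊆ R) :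
    ∑ σ ∈ R, (Bd R S σ).card ≤ 2 * (bd R S).card := by
  classical
  rw [← Finset.card_sigma]
  have hsub : (R.sigma fun σ => Bd R S σ) ⊆
      ((bd R S).image fun q => (⟨q.1, q.2⟩ : Σ _ : Fin n → Bool, Fin n)) ∪
      ((bd R S).image fun q => (⟨fl q.2 q.1, q.2⟩ : Σ _ : Fin n → Bool, Fin n)) := by
    rintro ⟨σ, x⟩ h
    simp only [Finset.mem_sigma, mem_Bd] at h
    obtain ⟨h1, h2, h3⟩ := h
    rw [Finset.mem_union]
    by_cases hs : σ ∈ S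
    · left
      have : fl x σ ∉ S := by tauto
      exact Finset.mem_image.2 ⟨(σ, x), by simp [bd, hs, h2, this], rfl⟩
    · right
      have : fl x σ ∈ S := by tauto
      exact Finset.mem_image.2 ⟨(fl x σ, x), by simp [bd, this, fl_fl, h1, hs], by simp [fl_fl]⟩
  have h1 := Finset.card_le_card hsub
  change (R.sigma (Bd R S)).card ≤ _ at h1
  have h2 := h1.trans (Finset.card_union_le _ _)
  have h3 := Finset.card_image_le (s := bd R S) (f := fun q => (⟨q.1, q.2⟩ : Σ _ : Fin n → Bool, Fin n))
  have h4 := Finset.card_image_le (s := bd R S) (f := fun q => (⟨fl q.2 q.1, q.2⟩ : Σ _ : Fin n → Bool, Fin n))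
  omega

/-- non-flat vertices at a chamber -/
def NFp {n : ℕ} (R S : Finset (Fin n → Bool)) (σ : Fin n → Bool) (T : Finset (Fin n)) : Prop :=
  T.card = 3 ∧ Cube R T σ ∧ ∃ x ∈ T, ∃ z ∈ T, x ≠ z ∧ x ∈ Bd R S σ ∧ z ∈ Bd R S σ

lemma flat {n : ℕ} {R S : Finset (Fin n → Bool)} {T : Finset (Fin n)} (hT : T ∈ Mixed R S)
    (hN : ∀ σ, ¬ NFp R S σ T) (f : Fin n → Bool) :
    ∃ q ∈ bd R S, Cube R T q.1 ∧ q.2 ∈ T ∧ ∀ i ∈ T, i ≠ q.2 → q.1 i = f i := by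
  classical
  simp only [Mixed, Finset.mem_filter, Finset.mem_univ, true_and] at hT
  obtain ⟨hT3, σ, hσR, hσS, hσ⟩ := hT
  have h1 : ∃ ρ, Cube R T ρ ∧ ∃ k ∈ T, k ∈ Bd R S ρ := by
    by_contra hc
    push Not at hc
    apply hσ
    intro τ hτ
    refine (flip_ind T (fun ρ => Cube R T ρ ∧ ρ ∈ S) ?_ ⟨hσR, hσS⟩ hτ).2
    rintro ρ ⟨hρ, hρS⟩ y hy
    have h2 := hc ρ hρ y hy
    rw [mem_Bd] at h2
    have h3 := (hρ.flip hy).mem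
    exact ⟨hρ.flip hy, by tauto⟩
  obtain ⟨ρ, hρ, k, hkT, hk⟩ := h1
  have h2 : ∀ τ, (∀ i, i ∉ T → τ i = ρ i) → Cube R T τ ∧ k ∈ Bd R S τ := by
    intro τ hτ
    refine flip_ind T (fun ρ => Cube R T ρ ∧ k ∈ Bd R S ρ) ?_ ⟨hρ, hk⟩ hτ
    rintro ρ ⟨hρ, hk⟩ y hy
    refine ⟨hρ.flip hy, ?_⟩
    by_cases hyk : y = k
    · subst hyk
      rw [mem_Bd, fl_fl]
      rw [mem_Bd] at hk
      exact ⟨hρ.mem, by tauto⟩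
    · have e1 : y ∉ Bd R S ρ := fun h => hN ρ ⟨hT3, hρ, y, hy, k, hkT, hyk, h, hk⟩
      have hk' : k ∈ Bd R S (fl k ρ) := by
        rw [mem_Bd, fl_fl]
        rw [mem_Bd] at hk
        exact ⟨hρ.mem, by tauto⟩
      have e2 : y ∉ Bd R S (fl k ρ) := fun h =>
        hN (fl k ρ) ⟨hT3, hρ.flip hkT, y, hy, k, hkT, hyk, h, hk'⟩
      rw [mem_Bd] at e1 e2 hk ⊢
      rw [fl_comm] at e2
      have r1 := (hρ.flip hy).mem
      have r2 := ((hρ.flip hy).flip hkT).mem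
      have r3 := r2
      rw [fl_comm] at r3
      tauto
  set τ : Fin n → Bool := fun i => if i ∈ T then f i else ρ i with hτ
  obtain ⟨c1, c2⟩ := h2 τ (fun i hi => by simp [hτ, hi])
  by_cases hs : τ ∈ S
  · refine ⟨(τ, k), ?_, c1, hkT, fun i hi _ => by simp [hτ, hi]⟩
    rw [mem_Bd] at c2
    simp only [bd, Finset.mem_filter, Finset.mem_univ, true_and]
    tauto
  · refine ⟨(fl k τ, k), ?_, c1.flip hkT, hkT, fun i hi hik => ?_⟩
    · rw [mem_Bd] at c2
      simp only [bd, Finset.mem_filter, Finset.mem_univ, true_and, fl_fl]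
      have := c1.mem
      tauto
    · have hik' : i ≠ k := hik
      show fl k τ i = f i
      rw [fl_ne hik']; simp [hτ, hi]

namespace Arr

variable {n : ℕ} (a : Arr n)

open Classical in
lemma flat_card (S : Finset (Fin n → Bool)) :
    ((Mixed a.R S).filter fun T => ∀ σ, ¬ NFp a.R S σ T).card ≤ (bd a.R S).card := by
  refine Finset.card_le_card_of_forall_subsingleton
    (fun T q => Cube a.R T q.1 ∧ q.2 ∈ T ∧ a.Ex 1 q.1 T {q.2}) ?_ ?_
  · intro T hT
    obtain ⟨hT, hN⟩ := Finset.mem_filter.1 hT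
    have hT3 : T.card = 3 := (Finset.mem_filter.1 hT).2.1
    obtain ⟨q, hq, hc, hk, h⟩ := flat hT hN (fun i => decide (0 < a.c T i))
    refine ⟨q, hq, hc, hk, ?_⟩
    intro i hi hik
    rw [h i hi (by simpa using hik)]
    have := a.c_ne hT3 i hi
    by_cases h : 0 < a.c T i
    · simp [sg, h]
    · simp [sg, h]; exact lt_of_le_of_ne (not_lt.1 h) this
  · rintro q - A ⟨hA, cA, kA, eA⟩ B ⟨hB, cB, kB, eB⟩
    have hA3 : A.card = 3 := (Finset.mem_filter.1 (Finset.mem_filter.1 hA).1).2.1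
    have hB3 : B.card = 3 := (Finset.mem_filter.1 (Finset.mem_filter.1 hB).1).2.1
    exact a.uniq hA3 hB3 (by simpa using kA) (by simpa using kB) eA eB
      (fun i _ => (a.weak_v hA3 cA).2 i) (fun i _ => (a.weak_v hB3 cB).2 i)

/-- a triple supported in `B` -/
def Trp (B : Finset (Fin n)) (σ : Fin n → Bool) (U : Finset (Fin n)) : Prop :=
  U ⊆ B ∧ U.card = 3 ∧ ∀ i ∈ B, 0 ≤ sg (σ i) * a.l i (a.v U)

lemma sg_mul_cases {x : ℝ} (hx : x ≠ 0) : ∃ b : Bool, 0 < sg b * x := by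
  rcases hx.lt_or_gt with h | h
  · exact ⟨false, by simp [sg, h]⟩
  · exact ⟨true, by simp [sg, h]⟩

open Classical in
lemma tr_card (B : Finset (Fin n)) (σ : Fin n → Bool) :
    (Finset.univ.filter fun U => a.Trp B σ U).card ≤ B.card * 2 := by
  have : B.card * 2 = (B ×ˢ (Finset.univ : Finset Bool)).card := by simp [Finset.card_product]
  rw [this]
  refine Finset.card_le_card_of_forall_subsingleton
    (fun U q => q.1 ∈ U ∧ a.Ex (sg q.2) σ U {q.1}) ?_ ?_
  · intro U hU
    obtain ⟨hUB, hU3, hw⟩ := (Finset.mem_filter.1 hU).2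
    obtain ⟨x, y, z, hxy, hxz, hyz, rfl⟩ := Finset.card_eq_three.1 hU3
    set U : Finset (Fin n) := {x, y, z} with hUd
    have hb : ∀ i ∈ U, ∃ b : Bool, 0 < sg b * (a.c U i * sg (σ i)) := fun i hi =>
      sg_mul_cases (mul_ne_zero (a.c_ne hU3 i hi) (sg_ne _))
    obtain ⟨b1, h1⟩ := hb x (by simp [hUd])
    obtain ⟨b2, h2⟩ := hb y (by simp [hUd])
    obtain ⟨b3, h3⟩ := hb z (by simp [hUd])
    have hx : x ∈ B := hUB (by simp [hUd])
    have hy : y ∈ B := hUB (by simp [hUd])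
    have hz : z ∈ B := hUB (by simp [hUd])
    have hc : b1 = b2 ∨ b1 = b3 ∨ b2 = b3 := by
      cases b1 <;> cases b2 <;> cases b3 <;> simp
    rcases hc with rfl | rfl | rfl
    · refine ⟨(z, b1), by simp [hz], by simp [hUd], ?_⟩
      intro i hi hne
      simp only [hUd, Finset.mem_insert, Finset.mem_singleton] at hi hne
      rcases hi with rfl | rfl | rfl
      · exact h1
      · exact h2
      · exact absurd rfl hne
    · refine ⟨(y, b1), by simp [hy], by simp [hUd], ?_⟩
      intro i hi hne
      simp only [hUd, Finset.mem_insert, Finset.mem_singleton] at hi hne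
      rcases hi with rfl | rfl | rfl
      · exact h1
      · exact absurd rfl hne
      · exact h3
    · refine ⟨(x, b2), by simp [hx], by simp [hUd], ?_⟩
      intro i hi hne
      simp only [hUd, Finset.mem_insert, Finset.mem_singleton] at hi hne
      rcases hi with rfl | rfl | rfl
      · exact absurd rfl hne
      · exact h2
      · exact h3
  · rintro q - A ⟨hA, kA, eA⟩ C ⟨hC, kC, eC⟩
    obtain ⟨hAB, hA3, wA⟩ := (Finset.mem_filter.1 hA).2
    obtain ⟨hCB, hC3, wC⟩ := (Finset.mem_filter.1 hC).2
    exact a.uniq hA3 hC3 (by simpa using kA) (by simpa using kC) eA eC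
      (fun i hi => wA i (hCB hi)) (fun i hi => wC i (hAB hi))

/-- pairs that lie on an edge of a chamber -/
def PQ (B : Finset (Fin n)) (σ : Fin n → Bool) (Q : Finset (Fin n)) : Prop :=
  Q ⊆ B ∧ Q.card = 2 ∧ Cube a.R Q σ

open Classical in
lemma pq_card (B : Finset (Fin n)) (σ : Fin n → Bool) :
    (Finset.univ.filter fun Q => a.PQ B σ Q).card ≤ 6 * B.card := by
  by_cases hB : B.card < 3
  · have : (Finset.univ.filter fun Q => a.PQ B σ Q) ⊆ B.powersetCard 2 := by
      intro Q hQ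
      obtain ⟨h1, h2, _⟩ := (Finset.mem_filter.1 hQ).2
      exact Finset.mem_powersetCard.2 ⟨h1, h2⟩
    have h := Finset.card_le_card this
    rw [Finset.card_powersetCard] at h
    refine h.trans ?_
    interval_cases B.card <;> decide
  · push Not at hB
    have hsub : (Finset.univ.filter fun Q => a.PQ B σ Q) ⊆
        (Finset.univ.filter fun U => a.Trp B σ U).biUnion fun U => U.powersetCard 2 := by
      intro Q hQ
      obtain ⟨h1, h2, h3⟩ := (Finset.mem_filter.1 hQ).2
      have hnot : ¬ B ⊆ Q := fun h => by have := Finset.card_le_card h; omega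
      obtain ⟨g, hgB, hgQ, z, z1, z2, z3⟩ := a.ext_hit Q B σ (by omega) hnot h3
      have hU3 : (insert g Q).card = 3 := by rw [Finset.card_insert_of_notMem hgQ]; omega
      have hz : z = a.v (insert g Q) := a.v_unique hU3 z (by
        intro i hi
        rcases Finset.mem_insert.1 hi with rfl | hi
        · exact z1
        · exact z2 i hi)
      rw [Finset.mem_biUnion]
      refine ⟨insert g Q, ?_, Finset.mem_powersetCard.2 ⟨Finset.subset_insert _ _, h2⟩⟩
      simp only [Finset.mem_filter, Finset.mem_univ, true_and]
      exact ⟨Finset.insert_subset hgB h1, hU3, by rw [← hz]; exact z3⟩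
    have h := (Finset.card_le_card hsub).trans (Finset.card_biUnion_le_card_mul _ _ 3 (by
      intro U hU
      obtain ⟨_, hU3, _⟩ := (Finset.mem_filter.1 hU).2
      rw [Finset.card_powersetCard, hU3]; decide))
    have := a.tr_card B σ
    omega

open Classical in
lemma nf_card (S : Finset (Fin n → Bool)) (σ : Fin n → Bool) :
    (Finset.univ.filter fun T => NFp a.R S σ T).card ≤ 12 * (Bd a.R S σ).card := by
  have h1 := a.pq_card (Bd a.R S σ) σ
  have h2 : (Finset.univ.filter fun T => NFp a.R S σ T).card ≤
      ((Finset.univ.filter fun Q => a.PQ (Bd a.R S σ) σ Q) ×ˢ (Finset.univ : Finset Bool)).card := by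
    refine Finset.card_le_card_of_forall_subsingleton
      (fun T q => q.1 ⊆ T ∧ a.Ex (sg q.2) σ T q.1) ?_ ?_
    · intro T hT
      obtain ⟨hT3, hc, x, hx, z, hz, hxz, hxB, hzB⟩ := (Finset.mem_filter.1 hT).2
      have hQT : ({x, z} : Finset (Fin n)) ⊆ T := by
        intro i hi; simp at hi; rcases hi with rfl | rfl <;> assumption
      have hQB : ({x, z} : Finset (Fin n)) ⊆ Bd a.R S σ := by
        intro i hi; simp at hi; rcases hi with rfl | rfl <;> assumption
      have hQ2 : ({x, z} : Finset (Fin n)).card = 2 := Finset.card_pair hxz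
      have h1 : (T \ {x, z}).card = 1 := by
        rw [Finset.card_sdiff_of_subset hQT]; omega
      obtain ⟨y, hy⟩ := Finset.card_eq_one.1 h1
      have hyT : y ∈ T := by
        have : y ∈ T \ {x, z} := by rw [hy]; simp
        exact (Finset.mem_sdiff.1 this).1
      obtain ⟨b, hb⟩ := sg_mul_cases (mul_ne_zero (a.c_ne hT3 y hyT) (sg_ne (σ y)))
      refine ⟨({x, z}, b), ?_, hQT, ?_⟩
      · simp only [Finset.mem_product, Finset.mem_filter, Finset.mem_univ, true_and, and_true]
        exact ⟨hQB, hQ2, hc.mono_dir hQT fun _ _ => rfl⟩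
      · intro i hi hne
        have : i ∈ T \ {x, z} := Finset.mem_sdiff.2 ⟨hi, hne⟩
        rw [hy, Finset.mem_singleton] at this
        rw [this]; exact hb
    · rintro q - A ⟨hA, kA, eA⟩ C ⟨hC, kC, eC⟩
      obtain ⟨hA3, cA, _⟩ := (Finset.mem_filter.1 hA).2
      obtain ⟨hC3, cC, _⟩ := (Finset.mem_filter.1 hC).2
      exact a.uniq hA3 hC3 kA kC eA eC
        (fun i _ => (a.weak_v hA3 cA).2 i) (fun i _ => (a.weak_v hC3 cC).2 i)
  rw [Finset.card_product] at h2
  simp only [Finset.card_univ, Fintype.card_bool] at h2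
  omega

lemma g6 (S : Finset (Fin n → Bool)) (hS : S ⊆ a.R) :
    (Mixed a.R S).card ≤ 25 * (bd a.R S).card := by
  classical
  have h1 := a.flat_card S
  have hsub : Mixed a.R S ⊆ ((Mixed a.R S).filter fun T => ∀ σ, ¬ NFp a.R S σ T) ∪
      a.R.biUnion fun σ => Finset.univ.filter fun T => NFp a.R S σ T := by
    intro T hT
    rw [Finset.mem_union]
    by_cases h : ∀ σ, ¬ NFp a.R S σ T
    · left; exact Finset.mem_filter.2 ⟨hT, h⟩
    · right
      push Not at h
      obtain ⟨σ, hσ⟩ := h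
      exact Finset.mem_biUnion.2 ⟨σ, hσ.2.1.mem, by simp [hσ]⟩
  have h2 := (Finset.card_le_card hsub).trans (Finset.card_union_le _ _)
  have h3 : (a.R.biUnion fun σ => Finset.univ.filter fun T => NFp a.R S σ T).card ≤
      24 * (bd a.R S).card := by
    refine Finset.card_biUnion_le.trans ?_
    have := Finset.sum_le_sum fun σ (_ : σ ∈ a.R) => a.nf_card S σ
    refine (this.trans ?_)
    rw [← Finset.mul_sum]
    have := sum_Bd hS
    omega
  omega

theorem geo : Geo a.R where
  h1 := a.g1
  h2 := a.g2
  h3 := a.g3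
  h3' := a.g3'
  h4 := a.g4
  h5 := a.g5
  h6 := a.g6

end Arr
end Chm

namespace Chm

variable {n : ℕ}

/-- conversion -/
def toArr (𝓗 : Arrangement 3 n) (hG : 𝓗.GeneralPosition) : Arr n where
  N := 𝓗.normal
  o := 𝓗.offset
  li := hG.1
  ng := by
    intro A hA x
    by_contra h
    push Not at h
    have : x ∈ ⋂ i ∈ A, 𝓗.H i := by
      simp only [Set.mem_iInter]
      exact fun i hi => h i hi
    rw [hG.2 A hA] at this
    exact this

namespace Arr

variable (a : Arr n)

/-- the chamber of a sign vector -/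
def ch (σ : Fin n → Bool) : Set (Fin 3 → ℝ) := {x | ∀ i, 0 < sg (σ i) * a.l i x}

/-- weak signs -/
def wk (σ : Fin n → Bool) (x : Fin 3 → ℝ) : Prop := ∀ i, 0 ≤ sg (σ i) * a.l i x

/-- cell -/
def cl (A : Finset (Fin n)) (σ : Fin n → Bool) : Set (Fin 3 → ℝ) :=
  {x | (∀ i ∈ A, a.l i x = 0) ∧ ∀ i, i ∉ A → 0 < sg (σ i) * a.l i x}

lemma ch_ne {σ : Fin n → Bool} : σ ∈ a.R ↔ (a.ch σ).Nonempty := a.mem_R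

lemma ch_inj {σ τ : Fin n → Bool} {x : Fin 3 → ℝ} (h : x ∈ a.ch σ) (h' : x ∈ a.ch τ) : σ = τ :=
  funext fun i => sg_eq_of (h i) (h' i)

lemma ch_open (σ : Fin n → Bool) : IsOpen (a.ch σ) := by
  have : a.ch σ = ⋂ i, {x | 0 < sg (σ i) * a.l i x} := by ext x; simp [ch]
  rw [this]
  refine isOpen_iInter_of_finite fun i => ?_
  have := a.l_cont i
  exact isOpen_lt continuous_const (by fun_prop)

lemma comb_mem {σ : Fin n → Bool} {A : Finset (Fin n)} {x y : Fin 3 → ℝ} (hx : a.wk σ x)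
    (hxA : ∀ i ∈ A, a.l i x = 0) (hy : y ∈ a.cl A σ) {t : ℝ} (ht : 0 < t) (ht1 : t ≤ 1) :
    (1 - t) • x + t • y ∈ a.cl A σ := by
  refine ⟨fun i hi => ?_, fun i hi => ?_⟩
  · rw [l_comb, hxA i hi, hy.1 i hi]; ring
  · rw [l_comb]
    have h1 := mul_pos ht (hy.2 i hi)
    have h2 := mul_nonneg (by linarith : 0 ≤ 1 - t) (hx i)
    nlinarith

lemma cl_empty (σ : Fin n → Bool) : a.cl ∅ σ = a.ch σ := by
  ext x; simp [cl, ch]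

lemma ch_sub_wk {σ : Fin n → Bool} {x} (h : x ∈ a.ch σ) : a.wk σ x := fun i => (h i).le

lemma ch_conn (σ : Fin n → Bool) : IsPreconnected (a.ch σ) := by
  apply Convex.isPreconnected
  rw [convex_iff_forall_pos]
  intro x hx y hy s t hs ht hst
  have h := a.comb_mem (A := ∅) (a.ch_sub_wk hx) (by simp) (by rw [cl_empty]; exact hy) ht (by linarith)
  rw [cl_empty] at h
  have : s = 1 - t := by linarith
  rwa [this]

lemma wk_closure {σ : Fin n → Bool} {x : Fin 3 → ℝ} (h : a.wk σ x) : x ∈ closure (a.ch σ) := by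
  have hR : σ ∈ a.R := (a.cube_of_weak (A := ∅) h (by simp)).mem
  obtain ⟨y, hy⟩ := a.ch_ne.1 hR
  have hc : Continuous fun t : ℝ => (1 - t) • x + t • y := by fun_prop
  have ht : Filter.Tendsto (fun t : ℝ => (1 - t) • x + t • y) (𝓝[>] 0) (𝓝 x) := by
    have := hc.tendsto 0
    simp only [sub_zero, one_smul, zero_smul, add_zero] at this
    exact this.mono_left nhdsWithin_le_nhds
  refine mem_closure_of_tendsto ht ?_
  have h1 : ∀ᶠ t in 𝓝[>] (0:ℝ), t < 1 := nhdsWithin_le_nhds (gt_mem_nhds one_pos)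
  filter_upwards [self_mem_nhdsWithin, h1] with t ht ht1
  have := a.comb_mem (A := ∅) h (by simp) (by rw [cl_empty]; exact hy) ht ht1.le
  rwa [cl_empty] at this

end Arr

section

variable (𝓗 : Arrangement 3 n) (hG : 𝓗.GeneralPosition)

lemma mem_H {i : Fin n} {x : Fin 3 → ℝ} : x ∈ 𝓗.H i ↔ (toArr 𝓗 hG).l i x = 0 := by
  show _ = _ ↔ _ - _ = _
  rw [sub_eq_zero]; rfl

lemma mem_pos {i : Fin n} {x : Fin 3 → ℝ} : x ∈ 𝓗.pos i ↔ 0 < (toArr 𝓗 hG).l i x := by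
  show (_ : ℝ) < _ ↔ (0 : ℝ) < _ - _
  rw [sub_pos]; rfl

lemma mem_neg {i : Fin n} {x : Fin 3 → ℝ} : x ∈ 𝓗.neg i ↔ (toArr 𝓗 hG).l i x < 0 := by
  show (_ : ℝ) < _ ↔ _ - _ < (0 : ℝ)
  rw [sub_neg]; rfl

lemma mem_free {x : Fin 3 → ℝ} : x ∈ 𝓗.free ↔ ∀ i, (toArr 𝓗 hG).l i x ≠ 0 := by
  show (∀ i, _) ↔ _
  exact forall_congr' fun i => not_congr (mem_H 𝓗 hG)

lemma ch_free {σ : Fin n → Bool} : (toArr 𝓗 hG).ch σ ⊆ 𝓗.free := by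
  intro x hx
  rw [mem_free 𝓗 hG]
  intro i h
  have := hx i
  rw [h] at this; simp at this

lemma free_ch {x : Fin 3 → ℝ} (hx : x ∈ 𝓗.free) : ∃ σ, x ∈ (toArr 𝓗 hG).ch σ := by
  rw [mem_free 𝓗 hG] at hx
  obtain ⟨σ, hσ⟩ := (toArr 𝓗 hG).exists_sign x
  exact ⟨σ, fun i => lt_of_le_of_ne (hσ i) (mul_ne_zero (sg_ne _) (hx i)).symm⟩

lemma comp_eq {x : Fin 3 → ℝ} {σ : Fin n → Bool} (hx : x ∈ (toArr 𝓗 hG).ch σ) :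
    connectedComponentIn 𝓗.free x = (toArr 𝓗 hG).ch σ := by
  apply Subset.antisymm
  · intro y hy
    have hyf := connectedComponentIn_subset _ _ hy
    obtain ⟨τ, hτ⟩ := free_ch 𝓗 hG hyf
    have hxc := mem_connectedComponentIn (ch_free 𝓗 hG hx)
    have hpre := isPreconnected_connectedComponentIn (F := 𝓗.free) (x := x)
    suffices σ = τ by rw [this]; exact hτ
    funext i
    by_contra hne
    have hc : ContinuousOn (fun z => sg (σ i) * (toArr 𝓗 hG).l i z) (connectedComponentIn 𝓗.free x) := by
      have := (toArr 𝓗 hG).l_cont i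
      fun_prop
    have h1 := hx i
    have h2 := hτ i
    have e : τ i = !σ i := by revert hne; cases σ i <;> cases τ i <;> simp
    rw [e, sg_not] at h2
    have h0 : (0:ℝ) ∈ Set.Icc (sg (σ i) * (toArr 𝓗 hG).l i y) (sg (σ i) * (toArr 𝓗 hG).l i x) :=
      ⟨by linarith, h1.le⟩
    obtain ⟨z, hz, hz0⟩ := hpre.intermediate_value hy hxc hc h0
    have hzf := connectedComponentIn_subset _ _ hz
    rw [mem_free 𝓗 hG] at hzf
    exact hzf i ((mul_eq_zero.1 hz0).resolve_left (sg_ne _))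
  · exact ((toArr 𝓗 hG).ch_conn σ).subset_connectedComponentIn hx (ch_free 𝓗 hG)

lemma chambers_eq : 𝓗.chambers = (toArr 𝓗 hG).ch '' ((toArr 𝓗 hG).R : Set (Fin n → Bool)) := by
  ext C
  constructor
  · rintro ⟨x, hx, rfl⟩
    obtain ⟨σ, hσ⟩ := free_ch 𝓗 hG hx
    exact ⟨σ, (toArr 𝓗 hG).ch_ne.2 ⟨x, hσ⟩, (comp_eq 𝓗 hG hσ).symm⟩
  · rintro ⟨σ, hσ, rfl⟩
    obtain ⟨x, hx⟩ := (toArr 𝓗 hG).ch_ne.1 hσ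
    exact ⟨x, ch_free 𝓗 hG hx, (comp_eq 𝓗 hG hx).symm⟩

lemma ch_injOn : Set.InjOn (toArr 𝓗 hG).ch ((toArr 𝓗 hG).R : Set (Fin n → Bool)) := by
  intro σ hσ τ _ h
  obtain ⟨x, hx⟩ := (toArr 𝓗 hG).ch_ne.1 hσ
  exact (toArr 𝓗 hG).ch_inj hx (h ▸ hx)

lemma chambers_card : 𝓗.chambers.ncard = (toArr 𝓗 hG).R.card := by
  rw [chambers_eq 𝓗 hG, Set.ncard_image_of_injOn (ch_injOn 𝓗 hG), Set.ncard_coe_finset]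

open Classical in
/-- sign vectors of a set of chambers -/
def sv (S : Set (Set (Fin 3 → ℝ))) : Finset (Fin n → Bool) :=
  (toArr 𝓗 hG).R.filter fun σ => (toArr 𝓗 hG).ch σ ∈ S

variable {S : Set (Set (Fin 3 → ℝ))}

lemma mem_sv {σ : Fin n → Bool} : σ ∈ sv 𝓗 hG S ↔ σ ∈ (toArr 𝓗 hG).R ∧ (toArr 𝓗 hG).ch σ ∈ S := by
  simp [sv]

lemma sv_sub : sv 𝓗 hG S ⊆ (toArr 𝓗 hG).R := fun _ h => ((mem_sv 𝓗 hG).1 h).1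

lemma sv_image (hS : S ⊆ 𝓗.chambers) : S = (toArr 𝓗 hG).ch '' (sv 𝓗 hG S : Set (Fin n → Bool)) := by
  ext C
  constructor
  · intro hC
    have := hS hC
    rw [chambers_eq 𝓗 hG] at this
    obtain ⟨σ, hσ, rfl⟩ := this
    exact ⟨σ, (mem_sv 𝓗 hG).2 ⟨hσ, hC⟩, rfl⟩
  · rintro ⟨σ, hσ, rfl⟩
    exact ((mem_sv 𝓗 hG).1 hσ).2

lemma S_card (hS : S ⊆ 𝓗.chambers) : S.ncard = (sv 𝓗 hG S).card := by
  conv_lhs => rw [sv_image 𝓗 hG hS]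
  rw [Set.ncard_image_of_injOn ((ch_injOn 𝓗 hG).mono (by exact_mod_cast sv_sub 𝓗 hG)),
    Set.ncard_coe_finset]

lemma sep_iff {e : Fin n} {σ τ : Fin n → Bool} (hσ : σ ∈ (toArr 𝓗 hG).R) (hτ : τ ∈ (toArr 𝓗 hG).R) :
    𝓗.Separates e ((toArr 𝓗 hG).ch σ) ((toArr 𝓗 hG).ch τ) ↔ σ e ≠ τ e := by
  have hp : ∀ {ρ : Fin n → Bool}, ρ ∈ (toArr 𝓗 hG).R → ((toArr 𝓗 hG).ch ρ ⊆ 𝓗.pos e ↔ ρ e = true) := by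
    intro ρ hρ
    obtain ⟨x, hx⟩ := (toArr 𝓗 hG).ch_ne.1 hρ
    constructor
    · intro h
      have h1 := (mem_pos 𝓗 hG).1 (h hx)
      have h2 := hx e
      by_contra hc
      have hc' : ρ e = false := by simpa using hc
      rw [hc'] at h2; simp [sg] at h2; linarith
    · intro h y hy
      rw [mem_pos 𝓗 hG]
      have := hy e
      rw [h] at this; simpa [sg] using this
  have hn : ∀ {ρ : Fin n → Bool}, ρ ∈ (toArr 𝓗 hG).R → ((toArr 𝓗 hG).ch ρ ⊆ 𝓗.neg e ↔ ρ e = false) := by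
    intro ρ hρ
    obtain ⟨x, hx⟩ := (toArr 𝓗 hG).ch_ne.1 hρ
    constructor
    · intro h
      have h1 := (mem_neg 𝓗 hG).1 (h hx)
      have h2 := hx e
      by_contra hc
      have hc' : ρ e = true := by simpa using hc
      rw [hc'] at h2; simp [sg] at h2; linarith
    · intro h y hy
      rw [mem_neg 𝓗 hG]
      have := hy e
      rw [h] at this; simpa [sg] using this
  unfold Arrangement.Separates
  rw [hp hσ, hn hτ, hn hσ, hp hτ]
  cases σ e <;> cases τ e <;> simp

lemma bd_le (hS : S ⊆ 𝓗.chambers) :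
    (bd (toArr 𝓗 hG).R (sv 𝓗 hG S)).card ≤ (𝓗.edgeBoundary S).ncard := by
  have hfin : (𝓗.edgeBoundary S).Finite := by
    have hc : 𝓗.chambers.Finite := by
      rw [chambers_eq 𝓗 hG]; exact (Finset.finite_toSet _).image _
    refine (hc.prod hc).subset ?_
    rintro ⟨C, C'⟩ ⟨h1, h2, h3⟩
    exact ⟨h3.1, h3.2.1⟩
  rw [← Set.ncard_coe_finset]
  refine Set.ncard_le_ncard_of_injOn
    (fun q => ((toArr 𝓗 hG).ch q.1, (toArr 𝓗 hG).ch (fl q.2 q.1))) ?_ ?_ hfin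
  · rintro ⟨σ, g⟩ hq
    simp only [bd, Finset.coe_filter, Finset.mem_univ, true_and, Set.mem_setOf_eq] at hq
    obtain ⟨h1, h2, h3⟩ := hq
    have h1' := (mem_sv 𝓗 hG).1 h1
    refine ⟨h1'.2, fun h => h3 ((mem_sv 𝓗 hG).2 ⟨h2, h⟩), ?_, ?_, g, ?_, ?_⟩
    · exact hS h1'.2
    · rw [chambers_eq 𝓗 hG]; exact ⟨_, h2, rfl⟩
    · show 𝓗.Separates g ((toArr 𝓗 hG).ch σ) ((toArr 𝓗 hG).ch (fl g σ))
      rw [sep_iff 𝓗 hG h1'.1 h2, fl_same]; simp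
    · intro e he
      have he' : 𝓗.Separates e ((toArr 𝓗 hG).ch σ) ((toArr 𝓗 hG).ch (fl g σ)) := he
      rw [sep_iff 𝓗 hG h1'.1 h2] at he'
      by_contra hne
      exact he' (fl_ne hne σ).symm
  · rintro ⟨σ, g⟩ hq ⟨τ, k⟩ hq' heq
    simp only [bd, Finset.coe_filter, Finset.mem_univ, true_and, Set.mem_setOf_eq] at hq hq'
    simp only [Prod.mk.injEq] at heq
    have e1 := ch_injOn 𝓗 hG (sv_sub 𝓗 hG hq.1) (sv_sub 𝓗 hG hq'.1) heq.1
    subst e1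
    have e2 := ch_injOn 𝓗 hG hq.2.1 hq'.2.1 heq.2
    have : g = k := by
      by_contra hne
      have := congrFun e2 g
      rw [fl_same, fl_ne hne] at this
      simp at this
    rw [this]

lemma mem_thick (hS : S ⊆ 𝓗.chambers) {x : Fin 3 → ℝ} :
    x ∈ thickening S ↔ ∀ σ, (toArr 𝓗 hG).wk σ x → σ ∈ sv 𝓗 hG S := by
  constructor
  · intro hx σ hσ
    have h1 := (toArr 𝓗 hG).wk_closure hσ
    obtain ⟨y, hy1, hy2⟩ := mem_closure_iff.1 h1 _ isOpen_interior hx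
    have hy3 := interior_subset hy1
    obtain ⟨z, hz1, hz2⟩ := mem_closure_iff.1 hy3 _ ((toArr 𝓗 hG).ch_open σ) hy2
    simp only [Set.mem_iUnion] at hz2
    obtain ⟨C, hC, hzC⟩ := hz2
    rw [sv_image 𝓗 hG hS] at hC
    obtain ⟨τ, hτ, rfl⟩ := hC
    rw [(toArr 𝓗 hG).ch_inj hz1 hzC]; exact hτ
  · intro h
    unfold thickening
    rw [mem_interior]
    refine ⟨⋂ i, {y | (toArr 𝓗 hG).l i x ≠ 0 → 0 < (toArr 𝓗 hG).l i x * (toArr 𝓗 hG).l i y}, ?_, ?_, ?_⟩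
    · intro y hy
      simp only [Set.mem_iInter, Set.mem_setOf_eq] at hy
      obtain ⟨τ, hτ⟩ := (toArr 𝓗 hG).exists_sign y
      have hτx : (toArr 𝓗 hG).wk τ x := by
        intro i
        by_cases h0 : (toArr 𝓗 hG).l i x = 0
        · rw [h0]; simp
        · have h1 := hy i h0
          have h2 := hτ i
          have h3 : 0 < sg (τ i) * (toArr 𝓗 hG).l i y := lt_of_le_of_ne h2
            (mul_ne_zero (sg_ne _) (fun e => by rw [e] at h1; simp at h1)).symm
          exact Arr.weak_of h3 (by linarith)
      have hτS := (mem_sv 𝓗 hG).1 (h τ hτx)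
      exact closure_mono (Set.subset_biUnion_of_mem (u := fun C => C) hτS.2)
        ((toArr 𝓗 hG).wk_closure hτ)
    · refine isOpen_iInter_of_finite fun i => ?_
      by_cases h0 : (toArr 𝓗 hG).l i x = 0
      · simp [h0]
      · have := (toArr 𝓗 hG).l_cont i
        simp only [ne_eq, h0, not_false_eq_true, true_imp_iff]
        exact isOpen_lt continuous_const (by fun_prop)
    · simp only [Set.mem_iInter, Set.mem_setOf_eq]
      exact fun i hi => mul_self_pos.2 hi

lemma mem_stratum (hS : S ⊆ 𝓗.chambers) {A : Finset (Fin n)} {x : Fin 3 → ℝ} :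
    x ∈ 𝓗.stratum S A ↔ (∀ σ, (toArr 𝓗 hG).wk σ x → σ ∈ sv 𝓗 hG S) ∧
      ∀ i ∈ A, (toArr 𝓗 hG).l i x = 0 := by
  unfold Arrangement.stratum
  rw [Set.mem_inter_iff, mem_thick 𝓗 hG hS]
  simp only [Set.mem_iInter, mem_H 𝓗 hG]

lemma wk_eq {a : Arr n} {A : Finset (Fin n)} {σ τ : Fin n → Bool} {x : Fin 3 → ℝ}
    (hx : x ∈ a.cl A σ) (hτ : a.wk τ x) : ∀ i, i ∉ A → τ i = σ i := by
  intro i hi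
  have h1 := hx.2 i hi
  have h2 : 0 < sg (τ i) * a.l i x := lt_of_le_of_ne (hτ i)
    (mul_ne_zero (sg_ne _) (fun e => by rw [e] at h1; simp at h1)).symm
  exact Arr.sg_eq_of h2 h1

lemma cl_sub (hS : S ⊆ 𝓗.chambers) {A : Finset (Fin n)} {σ : Fin n → Bool}
    (h : Cube (sv 𝓗 hG S) A σ) : (toArr 𝓗 hG).cl A σ ⊆ 𝓗.stratum S A := by
  intro x hx
  rw [mem_stratum 𝓗 hG hS]
  exact ⟨fun τ hτ => h τ (wk_eq hx hτ), hx.1⟩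

lemma join (hS : S ⊆ 𝓗.chambers) {A : Finset (Fin n)} {σ : Fin n → Bool} {x y : Fin 3 → ℝ}
    (hx : x ∈ 𝓗.stratum S A) (hσ : (toArr 𝓗 hG).wk σ x) (hy : y ∈ (toArr 𝓗 hG).cl A σ) :
    connectedComponentIn (𝓗.stratum S A) x = connectedComponentIn (𝓗.stratum S A) y := by
  have hx' := (mem_stratum 𝓗 hG hS).1 hx
  have hcube : Cube (sv 𝓗 hG S) A σ := by
    intro τ hτ
    refine hx'.1 τ fun i => ?_
    by_cases hi : i ∈ A
    · rw [hx'.2 i hi]; simp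
    · rw [hτ i hi]; exact hσ i
  have hseg : segment ℝ x y ⊆ 𝓗.stratum S A := by
    rintro z ⟨s, t, hs, ht, hst, rfl⟩
    have e : s = 1 - t := by linarith
    rcases ht.eq_or_lt with h0 | h0
    · rw [← h0] at e ⊢
      simp at e; rw [e]; simpa using hx
    · rw [e]
      exact cl_sub 𝓗 hG hS hcube ((toArr 𝓗 hG).comb_mem hσ hx'.2 hy h0 (by linarith))
  have hpre : IsPreconnected (segment ℝ x y) := (convex_segment x y).isPreconnected
  have := hpre.subset_connectedComponentIn (left_mem_segment ℝ x y) hseg (right_mem_segment ℝ x y)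
  exact connectedComponentIn_eq this

lemma cl_ne (hS : S ⊆ 𝓗.chambers) {A : Finset (Fin n)} {σ : Fin n → Bool}
    (h : Cube (sv 𝓗 hG S) A σ) : ((toArr 𝓗 hG).cl A σ).Nonempty :=
  (toArr 𝓗 hG).cell_of_cube (h.mono_set (sv_sub 𝓗 hG))

lemma step_comp (hS : S ⊆ 𝓗.chambers) {A : Finset (Fin n)} {σ τ : Fin n → Bool} {x y : Fin 3 → ℝ}
    (h : Step (sv 𝓗 hG S) A σ τ) (hx : x ∈ (toArr 𝓗 hG).cl A σ) (hy : y ∈ (toArr 𝓗 hG).cl A τ) :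
    connectedComponentIn (𝓗.stratum S A) x = connectedComponentIn (𝓗.stratum S A) y := by
  obtain ⟨h1, h2, g, rfl⟩ := h
  have h3 := h1.insert h2
  obtain ⟨z, hz⟩ := cl_ne 𝓗 hG hS h3
  have hzs : z ∈ 𝓗.stratum S A := by
    have := (mem_stratum 𝓗 hG hS).1 (cl_sub 𝓗 hG hS h3 hz)
    exact (mem_stratum 𝓗 hG hS).2 ⟨this.1, fun i hi => this.2 i (by simp [hi])⟩
  have w1 : (toArr 𝓗 hG).wk σ z := by
    intro i
    by_cases hi : i ∈ insert g A
    · rw [hz.1 i hi]; simp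
    · exact (hz.2 i hi).le
  have w2 : (toArr 𝓗 hG).wk (fl g σ) z := by
    intro i
    by_cases hi : i ∈ insert g A
    · rw [hz.1 i hi]; simp
    · rw [fl_ne (by rintro rfl; simp at hi)]; exact (hz.2 i hi).le
  rw [← join 𝓗 hG hS hzs w1 hx, ← join 𝓗 hG hS hzs w2 hy]

lemma rtg_comp (hS : S ⊆ 𝓗.chambers) {A : Finset (Fin n)} {σ τ : Fin n → Bool} {x : Fin 3 → ℝ}
    (h : Relation.ReflTransGen (Step (sv 𝓗 hG S) A) σ τ) (hσ : Cube (sv 𝓗 hG S) A σ)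
    (hx : x ∈ (toArr 𝓗 hG).cl A σ) : ∀ y ∈ (toArr 𝓗 hG).cl A τ,
    connectedComponentIn (𝓗.stratum S A) x = connectedComponentIn (𝓗.stratum S A) y := by
  induction h with
  | refl =>
    intro y hy
    refine join 𝓗 hG hS (cl_sub 𝓗 hG hS hσ hx) ?_ hy
    intro i
    by_cases hi : i ∈ A
    · rw [hx.1 i hi]; simp
    · exact (hx.2 i hi).le
  | tail h1 h2 ih =>
    intro y hy
    obtain ⟨z, hz⟩ := cl_ne 𝓗 hG hS h2.1
    rw [ih z hz, step_comp 𝓗 hG hS h2 hz hy]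

open Classical in
lemma comps_le (hS : S ⊆ 𝓗.chambers) (A : Finset (Fin n)) :
    (connComps (𝓗.stratum S A)).ncard ≤ (Rep (toArr 𝓗 hG).R (sv 𝓗 hG S) A).card := by
  let f : (Fin n → Bool) → Set (Fin 3 → ℝ) := fun σ =>
    if h : ((toArr 𝓗 hG).cl A σ).Nonempty then connectedComponentIn (𝓗.stratum S A) h.choose else ∅
  have hsub : connComps (𝓗.stratum S A) ⊆
      f '' (Rep (toArr 𝓗 hG).R (sv 𝓗 hG S) A : Set (Fin n → Bool)) := by
    rintro c ⟨x, hx, rfl⟩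
    obtain ⟨σ, hσ⟩ := (toArr 𝓗 hG).exists_sign x
    have hx' := (mem_stratum 𝓗 hG hS).1 hx
    have hcube : Cube (sv 𝓗 hG S) A σ := by
      intro τ hτ
      refine hx'.1 τ fun i => ?_
      by_cases hi : i ∈ A
      · rw [hx'.2 i hi]; simp
      · rw [hτ i hi]; exact hσ i
    obtain ⟨ρ, hρ, hpath⟩ := rep_spec (toArr 𝓗 hG).geo A (sv_sub 𝓗 hG) σ hcube
    obtain ⟨y, hy⟩ := cl_ne 𝓗 hG hS hcube
    have hρc : Cube (sv 𝓗 hG S) A ρ := by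
      rcases Relation.ReflTransGen.cases_tail hpath with h | ⟨_, _, h⟩
      · rw [h]; exact hcube
      · exact h.2.1
    have hne := cl_ne 𝓗 hG hS hρc
    refine ⟨ρ, hρ, ?_⟩
    simp only [f, dif_pos hne]
    rw [join 𝓗 hG hS hx hσ hy]
    exact (rtg_comp 𝓗 hG hS hpath hcube hy _ hne.choose_spec).symm
  calc _ ≤ (f '' (Rep (toArr 𝓗 hG).R (sv 𝓗 hG S) A : Set (Fin n → Bool))).ncard :=
        Set.ncard_le_ncard hsub ((Finset.finite_toSet _).image _)
    _ ≤ _ := Set.ncard_image_le (Finset.finite_toSet _)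
    _ = _ := Set.ncard_coe_finset _

end

lemma gch3 (k : ℝ) : ∑ i ∈ Finset.range 3, gchoose k i = (k^2 + k + 2) / 2 := by
  simp [gchoose, Finset.sum_range_succ, Finset.prod_range_succ, Nat.factorial]; ring

lemma gch4 (k : ℝ) : ∑ i ∈ Finset.range 4, gchoose k i = (k^3 + 5 * k + 6) / 6 := by
  simp [gchoose, Finset.sum_range_succ, Finset.prod_range_succ, Nat.factorial]; ring

lemma rpow_bound {s y : ℝ} (hs : 0 ≤ s) (hy : 0 ≤ y) (h : s ^ 2 ≤ y ^ 3) : s ^ ((2:ℝ)/3) ≤ y := by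
  have h1 : s ^ ((2:ℝ)/3) = (s ^ 2) ^ ((1:ℝ)/3) := by
    rw [← Real.rpow_natCast s 2, ← Real.rpow_mul hs]; norm_num
  have h2 : y = (y ^ 3) ^ ((1:ℝ)/3) := by
    rw [← Real.rpow_natCast y 3, ← Real.rpow_mul hy]; norm_num
  rw [h1, h2]
  exact Real.rpow_le_rpow (by positivity) h (by norm_num)

end Chm

/-- For every `D ∈ (0,1)` there is a constant `C = C(D) > 0` such
that: for every arrangement in general position in `ℝ³` and every set `S` of chambers
with `|S| = ∑_{i=0}^3 C(k,i)`, `k ≥ 2`, occupying at most a `D`-proportion of all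
chambers, one has `|∂S| ≥ C·∑_{|A| ≤ 2} |conn(T_S(A))|`; in particular
`|∂S| ≥ C·∑_{i=0}^2 C(k,i)`, and hence `|∂S| = Ω(|S|^{2/3})`. -/
theorem stmt10 (D : ℝ) (hD0 : 0 < D) (hD1 : D < 1) :
    ∃ C : ℝ, 0 < C ∧
      ∀ (n : ℕ) (𝓗 : Arrangement 3 n), 𝓗.GeneralPosition →
        ∀ S : Set (Set (Fin 3 → ℝ)), S ⊆ 𝓗.chambers →
          ∀ k : ℝ, 2 ≤ k →
            (S.ncard : ℝ) = ∑ i ∈ Finset.range 4, gchoose k i →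
            (S.ncard : ℝ) ≤ D * ((𝓗.chambers).ncard : ℝ) →
            (C * ∑ A ∈ Finset.univ.filter (fun A : Finset (Fin n) => A.card ≤ 2),
                ((connComps (𝓗.stratum S A)).ncard : ℝ) ≤
              ((𝓗.edgeBoundary S).ncard : ℝ)) ∧
            (C * ∑ i ∈ Finset.range 3, gchoose k i ≤
              ((𝓗.edgeBoundary S).ncard : ℝ)) ∧
            (C * (S.ncard : ℝ) ^ ((2 : ℝ) / 3) ≤
              ((𝓗.edgeBoundary S).ncard : ℝ)) := by
  obtain ⟨K, hK, hcomb⟩ := Chm.comb D hD0 hD1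
  refine ⟨1 / (16 * K), by positivity, ?_⟩
  intro n 𝓗 hG S hS k hk hcard hD
  have e1 := Chm.S_card 𝓗 hG hS
  have e2 := Chm.chambers_card 𝓗 hG
  rw [Chm.gch4] at hcard
  have h4 : (4:ℝ) ≤ S.ncard := by
    rw [hcard]
    have : (8:ℝ) ≤ k^3 := by
      calc (8:ℝ) = 2^3 := by norm_num
        _ ≤ k^3 := pow_le_pow_left₀ (by norm_num) hk 3
    linarith
  have hk3 : k^3 ≤ 6 * S.ncard := by rw [hcard]; linarith
  have h4' : 4 ≤ (Chm.sv 𝓗 hG S).card := by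
    rw [← e1]; exact_mod_cast h4
  obtain ⟨c1, c2⟩ := hcomb n _ _ (Chm.toArr 𝓗 hG).geo (Chm.sv_sub 𝓗 hG) h4' (by
    rw [← e1, ← e2]; exact hD)
  have hb := Chm.bd_le 𝓗 hG hS
  have hbr : ((Chm.bd (Chm.toArr 𝓗 hG).R (Chm.sv 𝓗 hG S)).card : ℝ) ≤ (𝓗.edgeBoundary S).ncard := by
    exact_mod_cast hb
  rw [← e1] at c2
  set b : ℝ := ((Chm.bd (Chm.toArr 𝓗 hG).R (Chm.sv 𝓗 hG S)).card : ℝ)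
  set E : ℝ := ((𝓗.edgeBoundary S).ncard : ℝ)
  have hb0 : 0 ≤ b := by positivity
  have hKb : K * b ≤ K * E := mul_le_mul_of_nonneg_left hbr (by linarith)
  have hKb0 : 0 ≤ K * b := by positivity
  have red : ∀ X : ℝ, X ≤ 16 * (K * b) → 1 / (16 * K) * X ≤ E := by
    intro X hX
    rw [one_div, inv_mul_le_iff₀ (by positivity)]
    linarith
  refine ⟨red _ ?_, red _ ?_, red _ ?_⟩
  · have hle : ∑ A ∈ Finset.univ.filter (fun A : Finset (Fin n) => A.card ≤ 2),
        ((connComps (𝓗.stratum S A)).ncard : ℝ) ≤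
        ((∑ A ∈ Chm.low n, (Chm.Rep (Chm.toArr 𝓗 hG).R (Chm.sv 𝓗 hG S) A).card : ℕ) : ℝ) := by
      push_cast
      unfold Chm.low
      exact Finset.sum_le_sum fun A _ => by exact_mod_cast Chm.comps_le 𝓗 hG hS A
    linarith
  · rw [Chm.gch3]
    have hk2 : k ^ 2 ≤ 6 * (K * b) := by
      by_contra hc
      push Not at hc
      have h1 : (6 * (K * b))^3 < (k^2)^3 := pow_lt_pow_left₀ hc (by positivity) (by norm_num)
      have h2 : (k^3)^2 ≤ (6 * (S.ncard : ℝ))^2 := pow_le_pow_left₀ (by positivity) hk3 2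
      have h3 : (k^2)^3 = (k^3)^2 := by ring
      nlinarith
    nlinarith
  · have : (S.ncard : ℝ) ^ ((2:ℝ)/3) ≤ 2 * (K * b) := by
      apply Chm.rpow_bound (by positivity) (by positivity)
      have : 0 ≤ (K * b)^3 := by positivity
      nlinarith
    linarith
end
end

section
/- Let F be a bounded two-dimensional convex polygon contained in an affine plane H in ℝ³, let p be a vertex of F, and let α_F(p) := π − ∠_F(p) be the exterior angle of F at p in H. If v is chosen uniformly at random from the unit sphere S², then the probability that the linear functional x ↦ ⟨x, v⟩ attains its minimum on F at p equals α_F(p)/(2π). More generally, if F is any (possibly unbounded) two-dimensional convex polyhedron in H with vertex p, this probability is at least α_F(p)/(2π). -/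
open Set MeasureTheory
open scoped RealInnerProductSpace
noncomputable section

abbrev E3 := EuclideanSpace ℝ (Fin 3)

def rotMap (t : ℝ) : E3 →ₗ[ℝ] E3 where
  toFun v := !₂[Real.cos t * v 0 - Real.sin t * v 1, Real.sin t * v 0 + Real.cos t * v 1, v 2]
  map_add' x y := by
    ext i; fin_cases i <;> simp <;> ring
  map_smul' c x := by
    ext i; fin_cases i <;> simp <;> ring

def rot (t : ℝ) : E3 ≃ₗᵢ[ℝ] E3 :=
  LinearIsometry.toLinearIsometryEquiv (F := E3)
    ⟨rotMap t, by
      intro v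
      rw [EuclideanSpace.norm_eq, EuclideanSpace.norm_eq]
      congr 1
      simp only [Fin.sum_univ_three, rotMap, LinearMap.coe_mk, AddHom.coe_mk, Real.norm_eq_abs, sq_abs]
      simp
      linear_combination (v 0 ^ 2 + v 1 ^ 2) * Real.sin_sq_add_cos_sq t⟩ rfl

lemma rot_zero (t : ℝ) (v : E3) : rot t v 0 = Real.cos t * v 0 - Real.sin t * v 1 := by
  simp [rot, rotMap]
lemma rot_one (t : ℝ) (v : E3) : rot t v 1 = Real.sin t * v 0 + Real.cos t * v 1 := by
  simp [rot, rotMap]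

lemma arc_eq (θ : ℝ) (h0 : 0 < θ) (h1 : θ < Real.pi) :
    {s | 0 ≤ Real.cos s ∧ 0 ≤ Real.cos (s - θ)} ∩ Ioc (-Real.pi) Real.pi
      = Icc (θ - Real.pi / 2) (Real.pi / 2) := by
  ext s
  simp only [mem_inter_iff, mem_ofPred_eq, mem_Ioc, mem_Icc]
  constructor
  · rintro ⟨⟨a, b⟩, c, d⟩
    have e1 : s ≤ Real.pi / 2 := by
      by_contra! h
      have := Real.cos_neg_of_pi_div_two_lt_of_lt h (by linarith)
      linarith
    have e2 : -(Real.pi / 2) ≤ s := by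
      by_contra! h
      have := Real.cos_neg_of_pi_div_two_lt_of_lt (x := -s) (by linarith) (by linarith)
      rw [Real.cos_neg] at this
      linarith
    refine ⟨?_, e1⟩
    by_contra! h
    have := Real.cos_neg_of_pi_div_two_lt_of_lt (x := -(s - θ)) (by linarith) (by linarith)
    rw [Real.cos_neg] at this
    linarith
  · rintro ⟨a, b⟩
    refine ⟨⟨Real.cos_nonneg_of_mem_Icc ⟨by linarith, b⟩,
      Real.cos_nonneg_of_mem_Icc ⟨by linarith, by linarith⟩⟩, by linarith, by linarith [Real.pi_pos]⟩

lemma arc_vol (θ φ : ℝ) (h0 : 0 < θ) (h1 : θ < Real.pi) :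
    volume ({s | 0 ≤ Real.cos (s + φ) ∧ 0 ≤ Real.cos (s + φ - θ)} ∩ Ioc (-Real.pi) Real.pi)
      = ENNReal.ofReal (Real.pi - θ) := by
  have hT : MeasurableSet {s | 0 ≤ Real.cos s ∧ 0 ≤ Real.cos (s - θ)} :=
    by
    rw [ofPred_and]
    refine MeasurableSet.inter ?_ ?_
    · exact (isClosed_le continuous_const (by fun_prop)).measurableSet
    · exact (isClosed_le continuous_const (by fun_prop)).measurableSet
  have hpi : (0:ℝ) < 2 * Real.pi := by positivity
  have A : {s | 0 ≤ Real.cos (s + φ) ∧ 0 ≤ Real.cos (s + φ - θ)} ∩ Ioc (-Real.pi) Real.pi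
     = (fun s => s + φ) ⁻¹' ({s | 0 ≤ Real.cos s ∧ 0 ≤ Real.cos (s - θ)} ∩
        Ioc (-Real.pi + φ) (-Real.pi + φ + 2 * Real.pi)) := by
    ext s
    simp only [mem_inter_iff, mem_ofPred_eq, mem_Ioc, mem_preimage]
    constructor
    · rintro ⟨a, b, c⟩; exact ⟨a, by linarith, by linarith⟩
    · rintro ⟨a, b, c⟩; exact ⟨a, by linarith, by linarith⟩
  rw [A, measure_preimage_add_right]
  have B := (isAddFundamentalDomain_Ioc hpi (-Real.pi + φ) volume).measure_set_eq
    (isAddFundamentalDomain_Ioc hpi (-Real.pi) volume) hT (by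
      rintro ⟨g, n, rfl⟩
      ext s
      have e : (n • (2 * Real.pi)) + s = s + n * (2 * Real.pi) := by simp; ring
      have e' : s + n * (2 * Real.pi) - θ = s - θ + n * (2 * Real.pi) := by ring
      simp only [mem_preimage, mem_ofPred_eq, AddSubgroup.vadd_def, vadd_eq_add, e, e',
        Real.cos_add_int_mul_two_pi])
  rw [B, show -Real.pi + 2 * Real.pi = Real.pi by ring, arc_eq θ h0 h1, Real.volume_Icc]
  congr 1; ring

lemma null_axis (μ : Measure E3) [IsProbabilityMeasure μ]
    (hsph : μ (Metric.sphere 0 1) = 1)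
    (hinv : ∀ R : E3 ≃ₗᵢ[ℝ] E3, Measure.map R μ = μ) :
    ∀ᵐ v ∂μ, ¬ (v 0 = 0 ∧ v 1 = 0) := by
  have hs : ∀ᵐ v ∂μ, v ∈ Metric.sphere (0 : E3) 1 := by
    rw [← prob_compl_eq_zero_iff Metric.isClosed_sphere.measurableSet] at hsph
    exact hsph
  have hsing : ∀ x y : E3, ‖x‖ = ‖y‖ → μ {x} = μ {y} := by
    intro x y h
    have := Submodule.reflection_sub (F := E3) h
    set R := Submodule.reflection (ℝ ∙ (x - y))ᗮ
    have h2 := hinv R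
    have h3 : Measure.map R μ {y} = μ {x} := by
      rw [Measure.map_apply R.continuous.measurable (measurableSet_singleton _)]
      congr 1
      ext z
      simp only [mem_preimage, mem_singleton_iff]
      rw [← this, R.injective.eq_iff]
    rw [← h3, h2]
  have hinf : (Metric.sphere (0:E3) 1).Infinite := by
    refine IsPreconnected.infinite_of_nontrivial (isPreconnected_sphere ?_ 0 1) ?_
    · rw [← Module.finrank_eq_rank]; simp
    · refine ⟨EuclideanSpace.single 0 1, by simp, EuclideanSpace.single 1 1, by simp, ?_⟩
      intro h
      have := congrArg (fun v : E3 => v 0) h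
      simp at this
  have hz : ∀ x : E3, ‖x‖ = 1 → μ {x} = 0 := by
    intro x hx
    by_contra h
    have := hinf.meas_eq_top (μ := μ) ⟨μ {x}, h, fun y hy => (hsing x y (by simp at hy; rw [hx, hy])).le⟩
    rw [hsph] at this
    simp at this
  have h1 : ∀ᵐ v ∂μ, v ≠ EuclideanSpace.single 2 (1:ℝ) := by
    rw [ae_iff]; simpa using hz (EuclideanSpace.single 2 1) (by simp)
  have h2 : ∀ᵐ v ∂μ, v ≠ EuclideanSpace.single 2 (-1:ℝ) := by
    rw [ae_iff]; simpa using hz (EuclideanSpace.single 2 (-1)) (by simp)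
  filter_upwards [hs, h1, h2] with v a b c ⟨d, e⟩
  simp only [mem_sphere_iff_norm, sub_zero] at a
  have : v 2 ^ 2 = 1 := by
    have := EuclideanSpace.real_norm_sq_eq v
    rw [a, Fin.sum_univ_three, d, e] at this
    linarith
  rcases eq_or_eq_neg_of_sq_eq_sq (v 2) 1 (by rw [this]; norm_num) with h | h
  · apply b; ext i; fin_cases i <;> simp [d, e, h]
  · apply c; ext i; fin_cases i <;> simp [d, e, h]

lemma lune (μ : Measure E3) [IsProbabilityMeasure μ]
    (hsph : μ (Metric.sphere 0 1) = 1)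
    (hinv : ∀ R : E3 ≃ₗᵢ[ℝ] E3, Measure.map R μ = μ)
    (θ : ℝ) (h0 : 0 < θ) (h1 : θ < Real.pi) :
    (μ {v | 0 ≤ v 0 ∧ 0 ≤ Real.cos θ * v 0 + Real.sin θ * v 1}).toReal
      = (Real.pi - θ) / (2 * Real.pi) := by
  set S : Set E3 := {v | 0 ≤ v 0 ∧ 0 ≤ Real.cos θ * v 0 + Real.sin θ * v 1} with hS
  have hSm : MeasurableSet S := by
    rw [hS, ofPred_and]
    refine MeasurableSet.inter ?_ ?_
    · exact (isClosed_le continuous_const (by fun_prop)).measurableSet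
    · exact (isClosed_le continuous_const (by fun_prop)).measurableSet
  set A : Set (ℝ × E3) := {q | 0 ≤ Real.cos q.1 * q.2 0 - Real.sin q.1 * q.2 1 ∧
    0 ≤ Real.cos θ * (Real.cos q.1 * q.2 0 - Real.sin q.1 * q.2 1) +
      Real.sin θ * (Real.sin q.1 * q.2 0 + Real.cos q.1 * q.2 1)} with hA
  have hAm : MeasurableSet A := by
    rw [hA, ofPred_and]
    refine MeasurableSet.inter ?_ ?_
    · exact (isClosed_le continuous_const (by fun_prop)).measurableSet
    · exact (isClosed_le continuous_const (by fun_prop)).measurableSet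
  set ν : Measure ℝ := volume.restrict (Ioc (-Real.pi) Real.pi) with hν
  have I1 : (ν.prod μ) A = ENNReal.ofReal (2 * Real.pi) * μ S := by
    rw [Measure.prod_apply hAm]
    have : ∀ t, μ (Prod.mk t ⁻¹' A) = μ S := by
      intro t
      conv_rhs => rw [← hinv (rot t), Measure.map_apply (rot t).continuous.measurable hSm]
      have : Prod.mk t ⁻¹' A = rot t ⁻¹' S := by
        ext v
        simp only [hA, hS, mem_preimage, mem_ofPred_eq, rot_zero, rot_one]
      rw [this]
    simp only [this, lintegral_const]
    rw [hν, Measure.restrict_apply_univ, Real.volume_Ioc, mul_comm, show Real.pi - -Real.pi = 2 * Real.pi by ring]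
  have I2 : (ν.prod μ) A = ENNReal.ofReal (Real.pi - θ) := by
    rw [Measure.prod_apply_symm hAm]
    have : ∀ᵐ v ∂μ, ν ((fun t => (t, v)) ⁻¹' A) = ENNReal.ofReal (Real.pi - θ) := by
      filter_upwards [null_axis μ hsph hinv] with v hv
      rw [hν, Measure.restrict_apply (hAm.preimage (by fun_prop))]
      set z : ℂ := ⟨v 0, v 1⟩ with hz
      have hz0 : z ≠ 0 := by
        intro h
        exact hv ⟨congrArg Complex.re h, congrArg Complex.im h⟩
      have hn : 0 < ‖z‖ := by positivity
      have e0 : v 0 = ‖z‖ * Real.cos z.arg := (Complex.norm_mul_cos_arg z).symm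
      have e1 : v 1 = ‖z‖ * Real.sin z.arg := (Complex.norm_mul_sin_arg z).symm
      rw [← arc_vol θ z.arg h0 h1]
      congr 2
      ext t
      have f1 : Real.cos t * v 0 - Real.sin t * v 1 = ‖z‖ * Real.cos (t + z.arg) := by
        rw [e0, e1, Real.cos_add]; ring
      have f2 : Real.sin t * v 0 + Real.cos t * v 1 = ‖z‖ * Real.sin (t + z.arg) := by
        rw [e0, e1, Real.sin_add]; ring
      have f3 : Real.cos θ * (‖z‖ * Real.cos (t + z.arg)) + Real.sin θ * (‖z‖ * Real.sin (t + z.arg))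
        = ‖z‖ * Real.cos (t + z.arg - θ) := by
        rw [Real.cos_sub]; ring
      simp only [hA, mem_preimage, mem_ofPred_eq, f1, f2, f3, mul_nonneg_iff_of_pos_left hn]
    rw [lintegral_congr_ae this]
    simp
  have I3 := congrArg ENNReal.toReal (I1.symm.trans I2)
  rw [ENNReal.toReal_mul, ENNReal.toReal_ofReal (by positivity),
    ENNReal.toReal_ofReal (by linarith)] at I3
  rw [← I3]
  field_simp

lemma exists_coord (u₁ u₂ : E3) (hu₁ : u₁ ≠ 0) (hu₂ : u₂ ≠ 0)
    (hangle₀ : 0 < InnerProductGeometry.angle u₁ u₂)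
    (hangleπ : InnerProductGeometry.angle u₁ u₂ < Real.pi) :
    ∃ b : OrthonormalBasis (Fin 3) ℝ E3, u₁ = ‖u₁‖ • b 0 ∧
      u₂ = ‖u₂‖ • (Real.cos (InnerProductGeometry.angle u₁ u₂) • b 0 +
        Real.sin (InnerProductGeometry.angle u₁ u₂) • b 1) := by
  set θ := InnerProductGeometry.angle u₁ u₂ with hθ
  have hs : 0 < Real.sin θ := Real.sin_pos_of_pos_of_lt_pi hangle₀ hangleπ
  have n1 : 0 < ‖u₁‖ := by positivity
  have n2 : 0 < ‖u₂‖ := by positivity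
  have hin : ⟪u₁, u₂⟫ = ‖u₁‖ * ‖u₂‖ * Real.cos θ := by
    rw [hθ, mul_comm, InnerProductGeometry.cos_angle_mul_norm_mul_norm]
  obtain ⟨e1, he1⟩ : ∃ e1 : E3, e1 = ‖u₁‖⁻¹ • u₁ := ⟨_, rfl⟩
  obtain ⟨d, hd⟩ : ∃ d : E3, d = ‖u₂‖⁻¹ • u₂ := ⟨_, rfl⟩
  obtain ⟨e2, he2⟩ : ∃ e2 : E3, e2 = (Real.sin θ)⁻¹ • (d - Real.cos θ • e1) := ⟨_, rfl⟩
  have i11 : ⟪e1, e1⟫ = 1 := by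
    simp only [he1, inner_smul_left, inner_smul_right, real_inner_self_eq_norm_sq]
    simp; field_simp
  have i1u : ⟪e1, d⟫ = Real.cos θ := by
    simp only [he1, hd, inner_smul_left, inner_smul_right, hin]
    simp; field_simp
  have iu1 : ⟪d, e1⟫ = Real.cos θ := by rw [real_inner_comm, i1u]
  have iuu : ⟪d, d⟫ = 1 := by
    simp only [hd, inner_smul_left, inner_smul_right, real_inner_self_eq_norm_sq]
    simp; field_simp
  have i12 : ⟪e1, e2⟫ = 0 := by
    rw [he2, inner_smul_right, inner_sub_right, inner_smul_right, i11, i1u]; ring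
  have i21 : ⟪e2, e1⟫ = 0 := by rw [real_inner_comm, i12]
  have i22 : ⟪e2, e2⟫ = 1 := by
    simp only [he2, real_inner_smul_left, real_inner_smul_right, inner_sub_right, inner_sub_left,
      i11, i1u, iu1, iuu]
    field_simp
    linear_combination -Real.sin_sq_add_cos_sq θ
  have hor : Orthonormal ℝ (({0, 1} : Set (Fin 3)).domRestrict ![e1, e2, 0]) := by
    rw [orthonormal_iff_ite]
    rintro ⟨i, hi⟩ ⟨j, hj⟩
    simp only [mem_insert_iff, mem_singleton_iff] at hi hj
    rcases hi with hi | hi <;> rcases hj with hj | hj <;> subst hi <;> subst hj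
    · simpa [-inner_self_eq_norm_sq_to_K] using i11
    · simpa [-inner_self_eq_norm_sq_to_K] using i12
    · simpa [-inner_self_eq_norm_sq_to_K] using i21
    · simpa [-inner_self_eq_norm_sq_to_K] using i22
  obtain ⟨b, hb⟩ := hor.exists_orthonormalBasis_extension_of_card_eq (by simp)
  have b0 : b 0 = e1 := hb 0 (by simp)
  have b1 : b 1 = e2 := hb 1 (by simp)
  refine ⟨b, ?_, ?_⟩
  · rw [b0, he1, smul_smul, mul_inv_cancel₀ n1.ne', one_smul]
  · rw [b0, b1, he2, smul_inv_smul₀ hs.ne', add_sub_cancel, hd, smul_inv_smul₀ n2.ne']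

/-- Let `F` be a two-dimensional convex polyhedron contained in an
affine plane `H ⊆ ℝ³` (the plane through `p` with normal `w`), having `p` as a vertex:
near `p`, `F` coincides with the cone `p + {a•u₁ + b•u₂ : a,b ≥ 0}`, so that the
interior angle of `F` at `p` is `∠(u₁,u₂) ∈ (0,π)` and the exterior angle is
`α = π − ∠(u₁,u₂)`.  Let `μ` be the uniform (rotation-invariant) probability measure
on the unit sphere `S²`.  Then the probability that `x ↦ ⟪x,v⟫` attains its minimum
on `F` at `p` is at least `α/(2π)`, with equality when `F` is bounded. -/
theorem stmt12 (F : Set (EuclideanSpace ℝ (Fin 3))) (hF : Convex ℝ F)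
    (p : EuclideanSpace ℝ (Fin 3)) (hp : p ∈ F)
    (w : EuclideanSpace ℝ (Fin 3)) (hw : w ≠ 0)
    (hplane : ∀ x ∈ F, ⟪x - p, w⟫ = 0)
    (u₁ u₂ : EuclideanSpace ℝ (Fin 3)) (hu₁ : u₁ ≠ 0) (hu₂ : u₂ ≠ 0)
    (hu₁w : ⟪u₁, w⟫ = 0) (hu₂w : ⟪u₂, w⟫ = 0)
    (hangle₀ : 0 < InnerProductGeometry.angle u₁ u₂)
    (hangleπ : InnerProductGeometry.angle u₁ u₂ < Real.pi)
    (r : ℝ) (hr : 0 < r)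
    (hcone : F ∩ Metric.ball p r =
      {x | ∃ a b : ℝ, 0 ≤ a ∧ 0 ≤ b ∧ x = p + a • u₁ + b • u₂} ∩ Metric.ball p r)
    (μ : Measure (EuclideanSpace ℝ (Fin 3))) [IsProbabilityMeasure μ]
    (hsph : μ (Metric.sphere 0 1) = 1)
    (hinv : ∀ R : EuclideanSpace ℝ (Fin 3) ≃ₗᵢ[ℝ] EuclideanSpace ℝ (Fin 3),
      Measure.map R μ = μ) :
    (Real.pi - InnerProductGeometry.angle u₁ u₂) / (2 * Real.pi) ≤
      (μ {v | ∀ x ∈ F, ⟪p, v⟫ ≤ ⟪x, v⟫}).toReal ∧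
    (Bornology.IsBounded F →
      (μ {v | ∀ x ∈ F, ⟪p, v⟫ ≤ ⟪x, v⟫}).toReal =
        (Real.pi - InnerProductGeometry.angle u₁ u₂) / (2 * Real.pi)) := by
  suffices h : (μ {v | ∀ x ∈ F, ⟪p, v⟫ ≤ ⟪x, v⟫}).toReal =
        (Real.pi - InnerProductGeometry.angle u₁ u₂) / (2 * Real.pi) from ⟨h.ge, fun _ => h⟩
  have hset : {v | ∀ x ∈ F, ⟪p, v⟫ ≤ ⟪x, v⟫} = {v | 0 ≤ ⟪u₁, v⟫ ∧ 0 ≤ ⟪u₂, v⟫} := by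
    have hlocal : ∀ y : EuclideanSpace ℝ (Fin 3), ∃ t : ℝ, 0 < t ∧ t ≤ 1 ∧
        p + t • y ∈ Metric.ball p r := by
      intro y
      refine ⟨min 1 (r / (2 * (‖y‖ + 1))), by positivity, min_le_left _ _, ?_⟩
      have hy : 0 ≤ ‖y‖ := norm_nonneg y
      rw [mem_ball_iff_norm, add_sub_cancel_left, norm_smul, Real.norm_of_nonneg (by positivity)]
      calc min 1 (r / (2 * (‖y‖ + 1))) * ‖y‖ ≤ r / (2 * (‖y‖ + 1)) * ‖y‖ := by
            gcongr; exact min_le_right _ _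
        _ < r := by
            rw [div_mul_eq_mul_div, div_lt_iff₀ (by positivity)]
            nlinarith
    have hdir : ∀ a b : ℝ, 0 ≤ a → 0 ≤ b → ∃ t : ℝ, 0 < t ∧ p + t • (a • u₁ + b • u₂) ∈ F := by
      intro a b ha hb
      obtain ⟨t, ht0, -, ht⟩ := hlocal (a • u₁ + b • u₂)
      refine ⟨t, ht0, ?_⟩
      have : p + t • (a • u₁ + b • u₂) ∈ F ∩ Metric.ball p r := by
        rw [hcone]
        refine ⟨⟨t * a, t * b, by positivity, by positivity, ?_⟩, ht⟩
        module
      exact this.1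
    ext v
    simp only [mem_ofPred_eq]
    constructor
    · intro h
      constructor
      · obtain ⟨t, ht, hm⟩ := hdir 1 0 (by simp) (by simp)
        have := h _ hm
        rw [one_smul, zero_smul, add_zero, inner_add_left, real_inner_smul_left] at this
        exact (mul_nonneg_iff_of_pos_left ht).1 (by linarith)
      · obtain ⟨t, ht, hm⟩ := hdir 0 1 (by simp) (by simp)
        have := h _ hm
        rw [one_smul, zero_smul, zero_add, inner_add_left, real_inner_smul_left] at this
        exact (mul_nonneg_iff_of_pos_left ht).1 (by linarith)
    · rintro ⟨h1, h2⟩ x hx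
      obtain ⟨t, ht0, ht1, ht⟩ := hlocal (x - p)
      have hm : p + t • (x - p) ∈ F := hF.add_smul_sub_mem hp hx ⟨ht0.le, ht1⟩
      have hm2 : p + t • (x - p) ∈ F ∩ Metric.ball p r := ⟨hm, ht⟩
      rw [hcone] at hm2
      obtain ⟨⟨a, b, ha, hb, hab⟩, -⟩ := hm2
      have e : t • (x - p) = a • u₁ + b • u₂ := by
        rw [add_assoc] at hab
        exact add_left_cancel hab
      have e2 := congrArg (fun y => ⟪y, v⟫) e
      simp only [real_inner_smul_left, inner_add_left, inner_sub_left] at e2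
      have : 0 ≤ t * (⟪x, v⟫ - ⟪p, v⟫) := by rw [e2]; positivity
      have := (mul_nonneg_iff_of_pos_left ht0).1 this
      linarith
  rw [hset, ← lune μ hsph hinv _ hangle₀ hangleπ]
  obtain ⟨b, hb1, hb2⟩ := exists_coord u₁ u₂ hu₁ hu₂ hangle₀ hangleπ
  set θ := InnerProductGeometry.angle u₁ u₂ with hθ
  have hSm : MeasurableSet {v : E3 | 0 ≤ v 0 ∧ 0 ≤ Real.cos θ * v 0 + Real.sin θ * v 1} := by
    rw [ofPred_and]
    refine MeasurableSet.inter ?_ ?_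
    · exact (isClosed_le continuous_const (by fun_prop)).measurableSet
    · exact (isClosed_le continuous_const (by fun_prop)).measurableSet
  conv_rhs => rw [← hinv b.repr, Measure.map_apply b.repr.continuous.measurable hSm]
  congr 2
  ext v
  have n1 : 0 < ‖u₁‖ := by positivity
  have n2 : 0 < ‖u₂‖ := by positivity
  have f1 : ⟪u₁, v⟫ = ‖u₁‖ * b.repr v 0 := by
    rw [b.repr_apply_apply, ← real_inner_smul_left, ← hb1]
  have f2 : ⟪u₂, v⟫ = ‖u₂‖ * (Real.cos θ * b.repr v 0 + Real.sin θ * b.repr v 1) := by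
    rw [b.repr_apply_apply, b.repr_apply_apply, ← real_inner_smul_left, ← real_inner_smul_left,
      ← inner_add_left, ← real_inner_smul_left, ← hb2]
  simp only [mem_ofPred_eq, mem_preimage, f1, f2, mul_nonneg_iff_of_pos_left n1,
    mul_nonneg_iff_of_pos_left n2]
end
end

section
/- Let F₁ and F₂ be two-dimensional convex polyhedra contained in the same affine plane H in ℝ³, both having p as a vertex, and suppose that their angular sectors at p are neighboring in H, i.e., they share a boundary ray, so that the interior angles satisfy ∠_{F₁}(p) + ∠_{F₂}(p) = π. If v is chosen uniformly at random from the unit sphere S², then Pr[the minimum of x ↦ ⟨x,v⟩ on F₁ is attained at p] + Pr[the minimum of x ↦ ⟨x,v⟩ on F₂ is attained at p] ≥ 1/2. -/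
open Set MeasureTheory
open scoped RealInnerProductSpace

noncomputable section

theorem aux_incl (F : Set (EuclideanSpace ℝ (Fin 3))) (hF : Convex ℝ F)
    (p : EuclideanSpace ℝ (Fin 3)) (hp : p ∈ F) (a b : EuclideanSpace ℝ (Fin 3))
    (r : ℝ) (hr : 0 < r)
    (hcone : F ∩ Metric.ball p r =
      {x | ∃ s t : ℝ, 0 ≤ s ∧ 0 ≤ t ∧ x = p + s • a + t • b} ∩ Metric.ball p r) :
    {v | 0 ≤ ⟪a, v⟫ ∧ 0 ≤ ⟪b, v⟫} ⊆ {v | ∀ x ∈ F, ⟪p, v⟫ ≤ ⟪x, v⟫} := by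
  rintro v ⟨h1, h2⟩ x hx
  obtain ⟨e, he0, he1, he⟩ : ∃ e : ℝ, 0 < e ∧ e ≤ 1 ∧ e * ‖x - p‖ < r := by
    have hn := norm_nonneg (x - p)
    refine ⟨min 1 (r / (‖x - p‖ + 1)), by positivity, min_le_left _ _, ?_⟩
    calc _ ≤ (r / (‖x - p‖ + 1)) * ‖x - p‖ := by gcongr; exact min_le_right _ _
      _ < (r / (‖x - p‖ + 1)) * (‖x - p‖ + 1) := by gcongr; linarith
      _ = r := by field_simp
  have hm : p + e • (x - p) ∈ F ∩ Metric.ball p r := by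
    refine ⟨hF.add_smul_sub_mem hp hx ⟨he0.le, he1⟩, ?_⟩
    rw [mem_ball_iff_norm, add_sub_cancel_left, norm_smul, Real.norm_of_nonneg he0.le]
    exact he
  rw [hcone] at hm
  obtain ⟨⟨s, t, hs, ht, hst⟩, -⟩ := hm
  rw [add_assoc, add_right_inj] at hst
  have h3 : e * (⟪x, v⟫ - ⟪p, v⟫) = s * ⟪a, v⟫ + t * ⟪b, v⟫ := by
    have := congrArg (fun y => ⟪y, v⟫) hst
    simpa [inner_add_left, inner_sub_left, real_inner_smul_left] using this
  have h4 : 0 ≤ e * (⟪x, v⟫ - ⟪p, v⟫) := by rw [h3]; positivity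
  have := nonneg_of_mul_nonneg_right h4 he0
  linarith

/-- Let `F₁`, `F₂` be two-dimensional convex polyhedra in the same
affine plane `H ⊆ ℝ³` (through `p`, with normal `w`), both having `p` as a vertex,
whose angular sectors at `p` are neighboring: near `p` they are the cones spanned by
`{a, b₁}` and `{a, b₂}` respectively (sharing the boundary ray in direction `a`), and
their interior angles satisfy `∠(a,b₁) + ∠(a,b₂) = π`.  If `v` is drawn from the
uniform rotation-invariant probability measure on `S²`, then the probabilities that
`x ↦ ⟪x,v⟫` attains its minimum on `F₁` at `p`, resp. on `F₂` at `p`, sum to at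
least `1/2`. -/
theorem stmt13 (F₁ F₂ : Set (EuclideanSpace ℝ (Fin 3)))
    (hF₁ : Convex ℝ F₁) (hF₂ : Convex ℝ F₂)
    (p : EuclideanSpace ℝ (Fin 3)) (hp₁ : p ∈ F₁) (hp₂ : p ∈ F₂)
    (w : EuclideanSpace ℝ (Fin 3)) (hw : w ≠ 0)
    (hplane₁ : ∀ x ∈ F₁, ⟪x - p, w⟫ = 0)
    (hplane₂ : ∀ x ∈ F₂, ⟪x - p, w⟫ = 0)
    (a b₁ b₂ : EuclideanSpace ℝ (Fin 3))
    (ha : a ≠ 0) (hb₁ : b₁ ≠ 0) (hb₂ : b₂ ≠ 0)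
    (haw : ⟪a, w⟫ = 0) (hb₁w : ⟪b₁, w⟫ = 0) (hb₂w : ⟪b₂, w⟫ = 0)
    (hang₁0 : 0 < InnerProductGeometry.angle a b₁)
    (hang₁π : InnerProductGeometry.angle a b₁ < Real.pi)
    (hang₂0 : 0 < InnerProductGeometry.angle a b₂)
    (hang₂π : InnerProductGeometry.angle a b₂ < Real.pi)
    (hsum : InnerProductGeometry.angle a b₁ + InnerProductGeometry.angle a b₂ =
      Real.pi)
    (r : ℝ) (hr : 0 < r)
    (hcone₁ : F₁ ∩ Metric.ball p r =
      {x | ∃ s t : ℝ, 0 ≤ s ∧ 0 ≤ t ∧ x = p + s • a + t • b₁} ∩ Metric.ball p r)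
    (hcone₂ : F₂ ∩ Metric.ball p r =
      {x | ∃ s t : ℝ, 0 ≤ s ∧ 0 ≤ t ∧ x = p + s • a + t • b₂} ∩ Metric.ball p r)
    (μ : Measure (EuclideanSpace ℝ (Fin 3))) [IsProbabilityMeasure μ]
    (hsph : μ (Metric.sphere 0 1) = 1)
    (hinv : ∀ R : EuclideanSpace ℝ (Fin 3) ≃ₗᵢ[ℝ] EuclideanSpace ℝ (Fin 3),
      Measure.map R μ = μ) :
    1 / 2 ≤ (μ {v | ∀ x ∈ F₁, ⟪p, v⟫ ≤ ⟪x, v⟫}).toReal +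
      (μ {v | ∀ x ∈ F₂, ⟪p, v⟫ ≤ ⟪x, v⟫}).toReal := by
  set E₁ : Set (EuclideanSpace ℝ (Fin 3)) := {v | 0 ≤ ⟪a, v⟫ ∧ 0 ≤ ⟪b₁, v⟫} with hE₁
  set E₂ : Set (EuclideanSpace ℝ (Fin 3)) := {v | 0 ≤ ⟪a, v⟫ ∧ 0 ≤ ⟪b₂, v⟫} with hE₂
  have i1 : μ E₁ ≤ _ := measure_mono (aux_incl F₁ hF₁ p hp₁ a b₁ r hr hcone₁)
  have i2 : μ E₂ ≤ _ := measure_mono (aux_incl F₂ hF₂ p hp₂ a b₂ r hr hcone₂)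
  have n1 : 0 < ‖b₁‖ := norm_pos_iff.2 hb₁
  have n2 : 0 < ‖b₂‖ := norm_pos_iff.2 hb₂
  have na : 0 < ‖a‖ := norm_pos_iff.2 ha
  set u := ‖b₁‖ • b₂ with hu
  set u' := -(‖b₂‖ • b₁) with hu'
  have hnorm : ‖u‖ = ‖u'‖ := by
    simp [hu, hu', norm_smul, mul_comm]
  have hin : ⟪a, u - u'⟫ = 0 := by
    have c : Real.cos (InnerProductGeometry.angle a b₂)
        = - Real.cos (InnerProductGeometry.angle a b₁) := by
      rw [← Real.cos_pi_sub]; congr 1; linarith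
    have e1 := InnerProductGeometry.cos_angle_mul_norm_mul_norm a b₁
    have e2 := InnerProductGeometry.cos_angle_mul_norm_mul_norm a b₂
    rw [inner_sub_right, hu, hu', inner_neg_right, real_inner_smul_right,
      real_inner_smul_right, ← e1, ← e2, c]
    ring
  set R := (Submodule.span ℝ {u - u'})ᗮ.reflection with hR
  have hRu : R u = u' := Submodule.reflection_sub hnorm
  have hRa : R a = a := by
    apply Submodule.reflection_mem_subspace_eq_self
    rw [Submodule.mem_orthogonal_singleton_iff_inner_left]
    exact hin
  have hmeas : ∀ y : EuclideanSpace ℝ (Fin 3), MeasurableSet {v | 0 ≤ ⟪y, v⟫} := fun y =>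
    (isClosed_le continuous_const (by fun_prop)).measurableSet
  set E₃ : Set (EuclideanSpace ℝ (Fin 3)) := {v | 0 ≤ ⟪a, v⟫ ∧ 0 ≤ ⟪u', v⟫} with hE₃
  have m3 : MeasurableSet E₃ := (hmeas a).inter (hmeas u')
  have h23 : μ E₃ = μ E₂ := by
    conv_lhs => rw [← hinv R]
    rw [Measure.map_apply R.continuous.measurable m3]
    congr 1
    ext v
    have ea : ⟪a, R v⟫ = ⟪a, v⟫ := by
      conv_lhs => rw [← hRa]
      exact R.inner_map_map a v
    have eu : ⟪u', R v⟫ = ⟪u, v⟫ := by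
      rw [← hRu]
      exact R.inner_map_map u v
    simp only [hE₃, hE₂, mem_preimage, mem_setOf_eq, ea, eu]
    rw [hu, real_inner_smul_left, mul_nonneg_iff_of_pos_left n1]
  have hcov : {v | 0 ≤ ⟪a, v⟫} ⊆ E₁ ∪ E₃ := by
    intro v hv
    rcases le_total 0 ⟪b₁, v⟫ with h | h
    · exact Or.inl ⟨hv, h⟩
    · refine Or.inr ⟨hv, ?_⟩
      rw [hu', inner_neg_left, real_inner_smul_left]
      nlinarith
  have hneg : μ {v | 0 ≤ ⟪-a, v⟫} = μ {v | 0 ≤ ⟪a, v⟫} := by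
    conv_rhs => rw [← hinv (LinearIsometryEquiv.neg ℝ)]
    rw [Measure.map_apply (LinearIsometryEquiv.continuous _).measurable (hmeas a)]
    congr 1
    ext v
    simp
  have hone : (1 : ENNReal) ≤ μ {v | 0 ≤ ⟪a, v⟫} + μ {v | 0 ≤ ⟪-a, v⟫} := by
    rw [← measure_univ (μ := μ)]
    refine le_trans (measure_mono ?_) (measure_union_le _ _)
    intro v _
    rcases le_total 0 ⟪a, v⟫ with h | h
    · exact Or.inl h
    · right
      simpa using h
  have hle : μ {v | 0 ≤ ⟪a, v⟫} ≤ μ E₁ + μ E₂ := by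
    rw [← h23]
    exact (measure_mono hcov).trans (measure_union_le _ _)
  rw [hneg] at hone
  have hle' := hle.trans (add_le_add i1 i2)
  have k1 := ENNReal.toReal_mono (by finiteness) hone
  have k2 := ENNReal.toReal_mono (by finiteness) hle'
  rw [ENNReal.toReal_add (by finiteness) (by finiteness)] at k1 k2
  rw [ENNReal.toReal_one] at k1
  linarith
end
end

section
/- Let F be an unbounded two-dimensional pointed convex polyhedron (an unbounded convex polygon having at least one vertex, hence containing no line) contained in an affine plane H in ℝ³. Then the set of directions v ∈ S² for which the linear functional x ↦ ⟨x, v⟩ does not attain a minimum on F has uniform spherical measure at least 1/2. -/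
open Set MeasureTheory
open scoped RealInnerProductSpace

noncomputable section

lemma aux_null (μ : Measure E3) [IsProbabilityMeasure μ]
    (hsph : μ (Metric.sphere 0 1) = 1)
    (hinv : ∀ R : E3 ≃ₗᵢ[ℝ] E3, Measure.map R μ = μ) (u : E3) (hu : u ≠ 0) :
    μ {v | ⟪u, v⟫ = 0} = 0 := by
  have h0 : ∀ᵐ v ∂μ, v ≠ 0 := by
    have : ∀ᵐ v ∂μ, v ∈ Metric.sphere (0 : E3) 1 :=
      (mem_ae_iff_prob_eq_one Metric.isClosed_sphere.measurableSet).2 hsph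
    filter_upwards [this] with v hv h
    simp [h] at hv
  have h1 : ∀ᵐ v ∂μ, ∀ᵐ u' ∂(volume : Measure E3), ¬ ⟪u', v⟫ = 0 := by
    filter_upwards [h0] with v hv
    rw [ae_iff]
    have : {a : E3 | ¬ ¬ ⟪a, v⟫ = 0} = ((Submodule.span ℝ {v})ᗮ : Submodule ℝ E3) := by
      ext a
      simp [Submodule.mem_orthogonal_singleton_iff_inner_left]
    rw [this]
    apply Measure.addHaar_submodule
    intro h
    have : v ∈ (Submodule.span ℝ {v})ᗮ := by rw [h]; trivial
    rw [Submodule.mem_orthogonal_singleton_iff_inner_left] at this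
    exact hv (inner_self_eq_zero.1 this)
  have hm : MeasurableSet {x : E3 × E3 | ¬ ⟪x.2, x.1⟫ = 0} := by
    apply IsOpen.measurableSet
    exact isOpen_ne_fun (by fun_prop) (by fun_prop)
  have h2 := (Measure.ae_ae_comm (μ := μ) (ν := (volume : Measure E3)) (p := fun v u' => ¬ ⟪u', v⟫ = 0) hm).1 h1
  have h3 : ∀ᵐ u' ∂(volume : Measure E3), u' ≠ 0 := by
    simp [ae_iff]
  obtain ⟨u', hu', hn⟩ := (h2.and h3).exists
  set s : E3 := (‖u'‖ / ‖u‖) • u with hs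
  have hnu : 0 < ‖u‖ := norm_pos_iff.2 hu
  have hnu' : 0 < ‖u'‖ := norm_pos_iff.2 hn
  have hsn : ‖s‖ = ‖u'‖ := by
    rw [hs, norm_smul, Real.norm_of_nonneg (by positivity)]
    field_simp
  set R : E3 ≃ₗᵢ[ℝ] E3 := (Submodule.span ℝ {s - u'})ᗮ.reflection
  have hR : R s = u' := Submodule.reflection_sub hsn
  have hms : MeasurableSet {v : E3 | ⟪u', v⟫ = 0} :=
    (isClosed_eq (by fun_prop) (by fun_prop)).measurableSet
  have h4 : μ {v : E3 | ⟪u', v⟫ = 0} = 0 := by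
    simpa [ae_iff] using hu'
  rw [← hinv R, Measure.map_apply R.continuous.measurable hms] at h4
  convert h4 using 2
  ext v
  simp only [mem_setOf_eq, mem_preimage]
  rw [← hR, R.inner_map_map, hs, inner_smul_left]
  simp [hn, hu]

lemma aux_half (μ : Measure E3) [IsProbabilityMeasure μ]
    (hsph : μ (Metric.sphere 0 1) = 1)
    (hinv : ∀ R : E3 ≃ₗᵢ[ℝ] E3, Measure.map R μ = μ) (u : E3) (hu : u ≠ 0) :
    (1 : ENNReal) / 2 ≤ μ {v | ⟪u, v⟫ < 0} := by
  have h0 := aux_null μ hsph hinv u hu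
  have hm : MeasurableSet {v : E3 | ⟪u, v⟫ < 0} :=
    (isOpen_lt (by fun_prop) (by fun_prop)).measurableSet
  have h1 : μ {v | 0 < ⟪u, v⟫} = μ {v | ⟪u, v⟫ < 0} := by
    conv_rhs => rw [← hinv (LinearIsometryEquiv.neg ℝ)]
    rw [Measure.map_apply (LinearIsometryEquiv.continuous _).measurable hm]
    congr 1
    ext v
    simp
  have h2 : (1 : ENNReal) ≤ μ {v | ⟪u, v⟫ < 0} + μ {v | ⟪u, v⟫ < 0} := by
    calc (1 : ENNReal) = μ univ := by simp
      _ ≤ μ (({v | ⟪u, v⟫ < 0} ∪ {v | 0 < ⟪u, v⟫}) ∪ {v | ⟪u, v⟫ = 0}) := by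
        apply measure_mono
        intro v _
        rcases lt_trichotomy ⟪u, v⟫ 0 with h | h | h <;> simp [h]
      _ ≤ μ {v | ⟪u, v⟫ < 0} + μ {v | 0 < ⟪u, v⟫} + μ {v | ⟪u, v⟫ = 0} :=
        (measure_union_le _ _).trans (by gcongr; exact measure_union_le _ _)
      _ = _ := by rw [h0, h1, add_zero]
  rw [← two_mul] at h2
  exact ENNReal.div_le_of_le_mul' h2

lemma aux_rec (F : Set E3) (hne : F.Nonempty) (hunb : ¬ Bornology.IsBounded F) :
    ∃ u : E3, u ≠ 0 ∧ ∀ (g : E3) (C : ℝ), (∀ x ∈ F, ⟪x, g⟫ ≤ C) → ⟪u, g⟫ ≤ 0 := by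
  obtain ⟨x0, hx0⟩ := hne
  have hx : ∀ n : ℕ, ∃ x ∈ F, (n : ℝ) + 1 < ‖x - x0‖ := by
    intro n
    by_contra! h
    apply hunb
    refine (Metric.isBounded_iff_subset_closedBall x0).2 ⟨n + 1, fun x hx => ?_⟩
    simpa [dist_eq_norm] using h x hx
  choose x hxF hxn using hx
  have hpos : ∀ n, 0 < ‖x n - x0‖ := fun n => lt_trans (by positivity) (hxn n)
  obtain ⟨u, hu, φ, hφ, hlim⟩ := (isCompact_sphere (0 : E3) 1).tendsto_subseq
    (x := fun n => (‖x n - x0‖)⁻¹ • (x n - x0)) (by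
      intro n
      have := hpos n
      simp [norm_smul, this.ne'])
  refine ⟨u, by rintro rfl; simp at hu, fun g C hg => ?_⟩
  have hl : Filter.Tendsto (fun n => ⟪(‖x (φ n) - x0‖)⁻¹ • (x (φ n) - x0), g⟫) Filter.atTop
      (nhds ⟪u, g⟫) := hlim.inner tendsto_const_nhds
  have hr : Filter.Tendsto (fun n : ℕ => |C - ⟪x0, g⟫| * (1 / ((φ n : ℝ) + 1))) Filter.atTop
      (nhds (|C - ⟪x0, g⟫| * 0)) :=
    (tendsto_one_div_add_atTop_nhds_zero_nat.comp hφ.tendsto_atTop).const_mul _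
  rw [mul_zero] at hr
  refine le_of_tendsto_of_tendsto' hl hr fun n => ?_
  rw [real_inner_smul_left, inner_sub_left, mul_comm]
  have h1 : ⟪x (φ n), g⟫ - ⟪x0, g⟫ ≤ |C - ⟪x0, g⟫| :=
    le_trans (by linarith [hg _ (hxF (φ n))]) (le_abs_self _)
  have h2 : ‖x (φ n) - x0‖⁻¹ ≤ 1 / ((φ n : ℝ) + 1) := by
    rw [← one_div]
    exact one_div_le_one_div_of_le (by positivity) (hxn _).le
  have h3 := (inv_pos.2 (hpos (φ n))).le
  calc _ ≤ |C - ⟪x0, g⟫| * ‖x (φ n) - x0‖⁻¹ := by gcongr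
    _ ≤ _ := by gcongr


/-- Let `F` be an unbounded, pointed (containing no affine line),
two-dimensional convex polyhedron contained in an affine plane `H ⊆ ℝ³`: `F` is the
intersection of the plane `{x | ⟪x - p₀, w⟫ = 0}` with finitely many half-spaces, is
nonempty, unbounded, contains no line, and has nonempty interior relative to the
plane.  Then, for the uniform rotation-invariant probability measure `μ` on the unit
sphere `S²`, the set of directions `v` for which `x ↦ ⟪x, v⟫` does not attain a
minimum on `F` has measure at least `1/2`. -/
theorem stmt14 (F : Set (EuclideanSpace ℝ (Fin 3)))
    (p₀ w : EuclideanSpace ℝ (Fin 3)) (hw : w ≠ 0)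
    (m : ℕ) (f : Fin m → EuclideanSpace ℝ (Fin 3)) (c : Fin m → ℝ)
    (hF : F = {x | ⟪x - p₀, w⟫ = 0} ∩ ⋂ i, {x | ⟪x, f i⟫ ≤ c i})
    (hne : F.Nonempty)
    (hunb : ¬ Bornology.IsBounded F)
    (hpointed : ∀ x u : EuclideanSpace ℝ (Fin 3), u ≠ 0 →
      ¬ (∀ t : ℝ, x + t • u ∈ F))
    (h2d : ∃ (q : EuclideanSpace ℝ (Fin 3)) (r : ℝ), 0 < r ∧
      {x | ⟪x - p₀, w⟫ = 0} ∩ Metric.ball q r ⊆ F)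
    (μ : Measure (EuclideanSpace ℝ (Fin 3))) [IsProbabilityMeasure μ]
    (hsph : μ (Metric.sphere 0 1) = 1)
    (hinv : ∀ R : EuclideanSpace ℝ (Fin 3) ≃ₗᵢ[ℝ] EuclideanSpace ℝ (Fin 3),
      Measure.map R μ = μ) :
    (1 : ENNReal) / 2 ≤
      μ {v | ¬ ∃ x ∈ F, ∀ y ∈ F, ⟪x, v⟫ ≤ ⟪y, v⟫} := by

  obtain ⟨u, hu, hrec⟩ := aux_rec F hne hunb
  refine (aux_half μ hsph hinv u hu).trans (measure_mono ?_)
  rintro v hv ⟨x, hxF, hmin⟩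
  have hadd : x + u ∈ F := by
    have hmem : ∀ y, y ∈ F ↔ ⟪y - p₀, w⟫ = 0 ∧ ∀ i, ⟪y, f i⟫ ≤ c i := by
      intro y; rw [hF]; simp
    rw [hmem]
    have hx := (hmem x).1 hxF
    have ha : ⟪u, w⟫ ≤ 0 := hrec w ⟪p₀, w⟫ fun y hy => by
      have := ((hmem y).1 hy).1
      rw [inner_sub_left] at this; linarith
    have hb : ⟪u, -w⟫ ≤ 0 := hrec (-w) (-⟪p₀, w⟫) fun y hy => by
      have := ((hmem y).1 hy).1
      rw [inner_sub_left] at this; rw [inner_neg_right]; linarith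
    rw [inner_neg_right] at hb
    refine ⟨?_, fun i => ?_⟩
    · have := hx.1
      rw [inner_sub_left] at this ⊢
      rw [inner_add_left]; linarith
    · have := hrec (f i) (c i) fun y hy => ((hmem y).1 hy).2 i
      rw [inner_add_left]; linarith [hx.2 i]
  have := hmin _ hadd
  rw [inner_add_left] at this
  have hv' : ⟪u, v⟫ < 0 := hv
  linarith
end
end

section
/- Let 𝓗 be an arrangement of n hyperplanes in general position in ℝ³ and let S be a set of chambers with |S| = Σ_{i=0}^3 C(k,i) for some real k ≥ 2 satisfying (k−2)/(n−2) ≤ c for some constant c < 1 (generalized binomial coefficients). Let L be the number of pairs {e,f} ⊆ [n] such that the entire line H_e ∩ H_f is contained in T_S, and let M be the number of e ∈ [n] such that the entire plane H_e is contained in T_S. Then L ≤ C(k,2)·(k−2)/(n−2), M ≤ k(k−1)(k−2)/((n−1)(n−2)) ≤ k·(k−2)/(n−2), and consequently L + M ≤ c · Σ_{i=0}^2 C(k,i). -/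
open Set Topology

noncomputable section

open Finset in
lemma aux_F_card {n : ℕ} (𝒜 : Finset (Finset (Fin n))) :
    #{A : Finset (Fin n) | ¬ (𝒜ᶜ).Shatters Aᶜ} ≤ #𝒜 := by
  classical
  have h1 : #(𝒜ᶜ) ≤ #((𝒜ᶜ).shatterer) := Finset.card_le_card_shatterer _
  have h2 : #{A : Finset (Fin n) | (𝒜ᶜ).Shatters Aᶜ} = #((𝒜ᶜ).shatterer) := by
    apply Finset.card_bij (fun A _ => Aᶜ)
    · intro A hA
      simpa using hA
    · intro A _ B _ h
      simpa using h
    · intro B hB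
      exact ⟨Bᶜ, by simpa using hB, by simp⟩
  have h3 := Finset.card_filter_add_card_filter_not (s := (univ : Finset (Finset (Fin n))))
    (fun A => (𝒜ᶜ).Shatters Aᶜ)
  have h4 := Finset.card_compl_add_card 𝒜
  rw [Finset.card_univ] at h3
  omega

lemma aux_surj {n : ℕ} (𝓗 : Arrangement 3 n) (hgp : 𝓗.GeneralPosition) (A : Finset (Fin n))
    (hA : A.card ≤ 3) (v : Fin n → ℝ) :
    ∃ u : Fin 3 → ℝ, ∀ i ∈ A, ∑ j, 𝓗.normal i j * u j = v i := by
  have h := hgp.1 A hA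
  let M : Matrix A (Fin 3) ℝ := fun i => 𝓗.normal i.1
  have hr : M.rank = Fintype.card A := LinearIndependent.rank_matrix (M := M) h
  have hs : Function.Surjective M.mulVecLin := by
    rw [← LinearMap.range_eq_top]
    apply Submodule.eq_top_of_finrank_eq
    rw [Module.finrank_fintype_fun_eq_card]
    exact hr
  obtain ⟨u, hu⟩ := hs (fun i => v i.1)
  refine ⟨u, fun i hi => ?_⟩
  have := congrFun hu ⟨i, hi⟩
  exact this

lemma aux_cont {d : ℕ} (a : Fin d → ℝ) : Continuous (fun x : Fin d → ℝ => ∑ j, a j * x j) := by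
  fun_prop

lemma aux_chamber {n : ℕ} (𝓗 : Arrangement 3 n) (C : Set (Fin 3 → ℝ)) (hC : C ∈ 𝓗.chambers)
    (y : Fin 3 → ℝ) (hy : y ∈ C) (i : Fin n) : C ⊆ 𝓗.pos i ↔ y ∈ 𝓗.pos i := by
  refine ⟨fun h => h hy, fun h => ?_⟩
  obtain ⟨x, hx, rfl⟩ := hC
  have ho1 : IsOpen (𝓗.pos i) := isOpen_lt continuous_const (aux_cont _)
  have ho2 : IsOpen (𝓗.neg i) := isOpen_lt (aux_cont _) continuous_const
  refine IsPreconnected.subset_left_of_subset_union ho1 ho2 ?_ ?_ ⟨y, hy, h⟩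
    isPreconnected_connectedComponentIn
  · rw [Set.disjoint_left]
    intro z hz hz'
    simp only [Arrangement.pos, Arrangement.neg, Set.mem_ofPred_eq] at hz hz'
    linarith
  · intro z hz
    have := connectedComponentIn_subset _ _ hz i
    simp only [Arrangement.H, Set.mem_ofPred_eq] at this
    rcases lt_or_gt_of_ne this with h | h
    · exact Or.inr h
    · exact Or.inl h

lemma aux_ball {n : ℕ} (𝓗 : Arrangement 3 n) (p u : Fin 3 → ℝ) (T : Set (Fin 3 → ℝ))
    (hT : IsOpen T) (hp : p ∈ T) (A : Finset (Fin n)) (hA : ∀ i, i ∉ A → p ∉ 𝓗.H i) :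
    ∃ ε : ℝ, 0 < ε ∧ p + ε • u ∈ T ∧ ∀ i, i ∉ A →
      ((p ∈ 𝓗.pos i → p + ε • u ∈ 𝓗.pos i) ∧ (p ∈ 𝓗.neg i → p + ε • u ∈ 𝓗.neg i)) := by
  have hc : Continuous (fun ε : ℝ => p + ε • u) := by fun_prop
  have ht : Filter.Tendsto (fun ε : ℝ => p + ε • u) (𝓝[>] 0) (𝓝 p) := by
    have := (hc.tendsto 0).mono_left (nhdsWithin_le_nhds (s := Set.Ioi 0))
    simpa using this
  have e1 : ∀ᶠ ε in 𝓝[>] (0:ℝ), p + ε • u ∈ T := ht (hT.mem_nhds hp)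
  have e2 : ∀ᶠ ε in 𝓝[>] (0:ℝ), ∀ i, (p ∈ 𝓗.pos i → p + ε • u ∈ 𝓗.pos i) := by
    rw [Filter.eventually_all]
    intro i
    by_cases h : p ∈ 𝓗.pos i
    · have ho1 : IsOpen (𝓗.pos i) := isOpen_lt continuous_const (aux_cont _)
      filter_upwards [ht (ho1.mem_nhds h)] with ε hε _ using hε
    · simp [h]
  have e3 : ∀ᶠ ε in 𝓝[>] (0:ℝ), ∀ i, (p ∈ 𝓗.neg i → p + ε • u ∈ 𝓗.neg i) := by
    rw [Filter.eventually_all]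
    intro i
    by_cases h : p ∈ 𝓗.neg i
    · have ho1 : IsOpen (𝓗.neg i) := isOpen_lt (aux_cont _) continuous_const
      filter_upwards [ht (ho1.mem_nhds h)] with ε hε _ using hε
    · simp [h]
  obtain ⟨ε, ⟨⟨h1, h2⟩, h3⟩, h4⟩ := (((e1.and e2).and e3).and self_mem_nhdsWithin).exists
  exact ⟨ε, h4, h1, fun i _ => ⟨h2 i, h3 i⟩⟩

open Classical in
/-- sign vector of a chamber -/
def auxSig {n : ℕ} (𝓗 : Arrangement 3 n) (C : Set (Fin 3 → ℝ)) : Finset (Fin n) :=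
  Finset.univ.filter (fun i => C ⊆ 𝓗.pos i)

lemma aux_tri {n : ℕ} (𝓗 : Arrangement 3 n) (hgp : 𝓗.GeneralPosition)
    (S : Set (Set (Fin 3 → ℝ))) (hS : S ⊆ 𝓗.chambers) (𝒜 : Finset (Finset (Fin n)))
    (h𝒜 : ∀ C ∈ S, auxSig 𝓗 C ∈ 𝒜) (A : Finset (Fin n)) (hA : A.card = 3)
    (p : Fin 3 → ℝ) (hpA : ∀ i ∈ A, p ∈ 𝓗.H i) (hpT : p ∈ thickening S) :
    ¬ (𝒜ᶜ).Shatters Aᶜ := by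
  classical
  have hA' : ∀ i, i ∉ A → p ∉ 𝓗.H i := by
    intro i hi hpi
    have := hgp.2 (insert i A) (by rw [Finset.card_insert_of_notMem hi, hA])
    have hm : p ∈ ⋂ j ∈ insert i A, 𝓗.H j := by
      simp only [Set.mem_iInter]
      intro j hj
      rcases Finset.mem_insert.1 hj with rfl | hj
      · exact hpi
      · exact hpA j hj
    rw [this] at hm
    exact hm
  intro hsh
  obtain ⟨U, hU, hUA⟩ := hsh (t := (Finset.univ.filter (fun i => p ∈ 𝓗.pos i)) ∩ Aᶜ)
    Finset.inter_subset_right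
  apply Finset.mem_compl.1 hU
  obtain ⟨u, hu⟩ := aux_surj 𝓗 hgp A hA.le (fun i => if i ∈ U then 1 else -1)
  obtain ⟨ε, hε, hqT, hq⟩ := aux_ball 𝓗 p u (thickening S) isOpen_interior hpT A hA'
  set q := p + ε • u with hqdef
  have hlin : ∀ i, ∑ j, 𝓗.normal i j * q j
      = (∑ j, 𝓗.normal i j * p j) + ε * ∑ j, 𝓗.normal i j * u j := by
    intro i
    rw [Finset.mul_sum, ← Finset.sum_add_distrib]
    refine Finset.sum_congr rfl fun j _ => ?_
    simp [hqdef]; ring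
  have hqU : ∀ i, (i ∈ U → q ∈ 𝓗.pos i) ∧ (i ∉ U → q ∈ 𝓗.neg i) := by
    intro i
    by_cases hi : i ∈ A
    · have h1 := hpA i hi
      have h2 := hu i hi
      have h3 := hlin i
      simp only [Arrangement.H, Arrangement.pos, Arrangement.neg, Set.mem_ofPred_eq] at *
      constructor <;> intro hiU <;> simp only [hiU, if_true, if_false] at h2 <;>
        rw [h3, h1, h2] <;> linarith
    · have h1 : i ∈ U ↔ p ∈ 𝓗.pos i := by
        have := congrArg (fun s => i ∈ s) hUA
        simpa [hi] using this
      refine ⟨fun h => (hq i hi).1 (h1.1 h), fun h => (hq i hi).2 ?_⟩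
      have h2 := hA' i hi
      rw [h1] at h
      simp only [Arrangement.H, Arrangement.pos, Arrangement.neg, Set.mem_ofPred_eq] at *
      exact lt_of_le_of_ne (not_lt.1 h) h2
  have hqc : q ∈ closure (⋃ C ∈ S, C) := interior_subset hqT
  let N : Set (Fin 3 → ℝ) := ⋂ i, (if i ∈ U then 𝓗.pos i else 𝓗.neg i)
  have hN : IsOpen N := by
    apply isOpen_iInter_of_finite
    intro i
    split_ifs
    · exact isOpen_lt continuous_const (aux_cont _)
    · exact isOpen_lt (aux_cont _) continuous_const
  have hqN : q ∈ N := by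
    simp only [N, Set.mem_iInter]
    intro i
    split_ifs with h
    · exact (hqU i).1 h
    · exact (hqU i).2 h
  obtain ⟨y, hyN, hyS⟩ := mem_closure_iff.1 hqc N hN hqN
  simp only [Set.mem_iUnion] at hyS
  obtain ⟨C, hC, hyC⟩ := hyS
  have : auxSig 𝓗 C = U := by
    ext i
    simp only [auxSig, Finset.mem_filter, Finset.mem_univ, true_and]
    rw [aux_chamber 𝓗 C (hS hC) y hyC i]
    have hi := Set.mem_iInter.1 hyN i
    split_ifs at hi with h
    · simp [hi, h]
    · simp only [Arrangement.pos, Arrangement.neg, Set.mem_ofPred_eq] at *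
      simp only [h, iff_false, not_lt]
      exact hi.le
  rw [← this]
  exact h𝒜 C hC

open Finset in
lemma aux_handshake {n : ℕ} (G : Finset (Finset (Fin n))) (m : ℕ) (h : ∀ A ∈ G, #A = m) :
    ∑ v, #{A ∈ G | v ∈ A} = #G * m := by
  classical
  have := Finset.sum_card_bipartiteAbove_eq_sum_card_bipartiteBelow
    (s := (univ : Finset (Fin n))) (t := G) (fun v A => v ∈ A)
  simp only [Finset.bipartiteAbove, Finset.bipartiteBelow] at this
  rw [this, Finset.sum_congr rfl (g := fun _ => m), Finset.sum_const, smul_eq_mul]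
  intro A hA
  simpa using h A hA

open Finset in
/-- Kruskal-Katona-type bound. -/
lemma aux_KK {n : ℕ} (F : Finset (Finset (Fin n)))
    (hF : ∀ A ∈ F, ∀ B ⊆ A, B ∈ F) (k : ℝ) (hk : 2 ≤ k)
    (hcard : (#F : ℝ) ≤ 1 + k + k * (k - 1) / 2 + k * (k - 1) * (k - 2) / 6) :
    (#{A ∈ F | #A = 3} : ℝ) ≤ k * (k - 1) * (k - 2) / 6 := by
  classical
  set T : Finset (Finset (Fin n)) := {A ∈ F | #A = 3} with hT
  set E : Finset (Finset (Fin n)) := {A ∈ F | #A = 2} with hE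
  set V : Finset (Finset (Fin n)) := {A ∈ F | #A = 1} with hV
  have hkk : 0 ≤ k * (k - 1) * (k - 2) / 6 := by
    have := mul_nonneg (mul_nonneg (by linarith : 0 ≤ k) (by linarith : 0 ≤ k - 1))
      (by linarith : 0 ≤ k - 2)
    linarith
  by_cases hT0 : T = ∅
  · rw [hT0]; simpa using hkk
  obtain ⟨B₀, hB₀⟩ := Finset.nonempty_iff_ne_empty.2 hT0
  have hB₀' := Finset.mem_filter.1 hB₀
  have hempty : ∅ ∈ F := hF _ hB₀'.1 _ (by simp)
  -- total count
  have htot : 1 + #V + #E + #T ≤ #F := by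
    have hd1 : Disjoint ({∅} : Finset (Finset (Fin n))) V := by
      simp [hV]
    have hd2 : Disjoint ({∅} ∪ V) E := by
      rw [Finset.disjoint_left]
      intro A hA hA'
      simp only [hV, hE, Finset.mem_union, Finset.mem_filter, Finset.mem_singleton] at hA hA'
      rcases hA with rfl | hA
      · simp at hA'
      · omega
    have hd3 : Disjoint ({∅} ∪ V ∪ E) T := by
      rw [Finset.disjoint_left]
      intro A hA hA'
      simp only [hV, hE, hT, Finset.mem_union, Finset.mem_filter, Finset.mem_singleton] at hA hA'
      rcases hA with (rfl | hA) | hA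
      · simp at hA'
      · omega
      · omega
    have hsub : {∅} ∪ V ∪ E ∪ T ⊆ F := by
      intro A hA
      simp only [hV, hE, hT, Finset.mem_union, Finset.mem_filter, Finset.mem_singleton] at hA
      rcases hA with ((rfl | hA) | hA) | hA
      · exact hempty
      · exact hA.1
      · exact hA.1
      · exact hA.1
    have := Finset.card_le_card hsub
    rwa [Finset.card_union_of_disjoint hd3, Finset.card_union_of_disjoint hd2,
      Finset.card_union_of_disjoint hd1, Finset.card_singleton] at this
  -- E nonempty
  have hE1 : 1 ≤ #E := by
    obtain ⟨P, hP, hP2⟩ := Finset.exists_subset_card_eq (s := B₀) (n := 2) (by omega)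
    exact Finset.card_pos.2 ⟨P, Finset.mem_filter.2 ⟨hF _ hB₀'.1 _ hP, hP2⟩⟩
  -- vertices
  have hEV : #E ≤ (#V).choose 2 := by
    let W : Finset (Fin n) := {v | {v} ∈ F}
    have hW : #W ≤ #V := by
      apply Finset.card_le_card_of_injOn (fun v => ({v} : Finset (Fin n)))
      · intro v hv
        have : {v} ∈ F := by simpa [W] using hv
        simp [hV, this]
      · intro a _ b _ h
        simpa using h
    have hsub : E ⊆ powersetCard 2 W := by
      intro A hA
      have hA := Finset.mem_filter.1 hA
      rw [Finset.mem_powersetCard]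
      refine ⟨fun v hv => ?_, hA.2⟩
      simp only [W, Finset.mem_filter, Finset.mem_univ, true_and]
      exact hF _ hA.1 _ (by simpa using hv)
    calc #E ≤ _ := Finset.card_le_card hsub
      _ = (#W).choose 2 := Finset.card_powersetCard _ _
      _ ≤ _ := Nat.choose_le_choose 2 hW
  -- local
  have hsumE := aux_handshake E 2 (fun A hA => (Finset.mem_filter.1 hA).2)
  have hsumT := aux_handshake T 3 (fun A hA => (Finset.mem_filter.1 hA).2)
  have hloc1 : ∀ v, #{A ∈ T | v ∈ A} + #{A ∈ E | v ∈ A} ≤ #E := by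
    intro v
    have h1 : #{A ∈ T | v ∈ A} ≤ #{A ∈ E | ¬ v ∈ A} := by
      apply Finset.card_le_card_of_injOn (fun A => A.erase v)
      · intro A hA
        simp only [hT, Finset.coe_filter, Finset.mem_filter, Set.mem_ofPred_eq] at hA
        simp only [hE, Finset.coe_filter, Finset.mem_filter, Set.mem_ofPred_eq]
        refine ⟨⟨hF _ hA.1.1 _ (Finset.erase_subset _ _), ?_⟩, by simp⟩
        rw [Finset.card_erase_of_mem hA.2]; omega
      · intro A hA B hB h
        simp only [Finset.coe_filter, Set.mem_ofPred_eq] at hA hB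
        simp only at h
        rw [← Finset.insert_erase hA.2, ← Finset.insert_erase hB.2, h]
    have h2 := Finset.card_filter_add_card_filter_not (s := E) (fun A => v ∈ A)
    omega
  have hloc2 : ∀ v, #{A ∈ T | v ∈ A} ≤ (#{A ∈ E | v ∈ A}).choose 2 := by
    intro v
    let W : Finset (Fin n) := {w | w ≠ v ∧ {v, w} ∈ F}
    have hW : #W ≤ #{A ∈ E | v ∈ A} := by
      apply Finset.card_le_card_of_injOn (fun w => ({v, w} : Finset (Fin n)))
      · intro w hw
        have hw : w ≠ v ∧ {v, w} ∈ F := by simpa [W] using hw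
        simp only [hE, Finset.coe_filter, Finset.mem_filter, Set.mem_ofPred_eq]
        exact ⟨⟨hw.2, Finset.card_pair hw.1.symm⟩, by simp⟩
      · intro a ha b hb h
        have ha : a ≠ v ∧ {v, a} ∈ F := by simpa [W] using ha
        have h : ({v, a} : Finset (Fin n)) = {v, b} := h
        have : a ∈ ({v, b} : Finset (Fin n)) := by rw [← h]; simp
        simpa [ha.1] using this
    have h1 : #{A ∈ T | v ∈ A} ≤ #(powersetCard 2 W) := by
      apply Finset.card_le_card_of_injOn (fun A => A.erase v)
      · intro A hA
        simp only [hT, Finset.coe_filter, Finset.mem_filter, Set.mem_ofPred_eq] at hA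
        rw [Finset.mem_coe, Finset.mem_powersetCard]
        refine ⟨fun w hw => ?_, by rw [Finset.card_erase_of_mem hA.2]; omega⟩
        rw [Finset.mem_erase] at hw
        simp only [W, Finset.mem_filter, Finset.mem_univ, true_and]
        refine ⟨hw.1, hF _ hA.1.1 _ ?_⟩
        intro z hz
        rcases Finset.mem_insert.1 hz with rfl | hz
        · exact hA.2
        · rw [Finset.mem_singleton.1 hz]; exact hw.2
      · intro A hA B hB h
        simp only [Finset.coe_filter, Set.mem_ofPred_eq] at hA hB
        simp only at h
        rw [← Finset.insert_erase hA.2, ← Finset.insert_erase hB.2, h]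
    rw [Finset.card_powersetCard] at h1
    exact h1.trans (Nat.choose_le_choose 2 hW)
  -- real x
  obtain ⟨x, hx2, hxe⟩ : ∃ x : ℝ, 2 ≤ x ∧ (#E : ℝ) = x * (x - 1) / 2 := by
    have he : (1:ℝ) ≤ #E := by exact_mod_cast hE1
    have hs := Real.sq_sqrt (show (0:ℝ) ≤ 1 + 8 * #E by linarith)
    have h3 : 3 ≤ Real.sqrt (1 + 8 * #E) := Real.le_sqrt_of_sq_le (by linarith)
    exact ⟨(1 + Real.sqrt (1 + 8 * #E)) / 2, by linarith, by nlinarith⟩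
  have hTx : (#T : ℝ) ≤ x * (x - 1) * (x - 2) / 6 := by
    have hv : ∀ v, (#{A ∈ T | v ∈ A} : ℝ) ≤ (#{A ∈ E | v ∈ A} : ℝ) * ((x - 2) / 2) := by
      intro v
      have h1 : (#{A ∈ T | v ∈ A} : ℝ) + #{A ∈ E | v ∈ A} ≤ #E := by exact_mod_cast hloc1 v
      have h2 : (#{A ∈ T | v ∈ A} : ℝ) ≤ ((#{A ∈ E | v ∈ A}).choose 2 : ℕ) := by
        exact_mod_cast hloc2 v
      rw [Nat.cast_choose_two] at h2
      have h0 : (0:ℝ) ≤ #{A ∈ E | v ∈ A} := Nat.cast_nonneg _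
      generalize (#{A ∈ E | v ∈ A} : ℝ) = d at *
      rcases le_total d (x - 1) with h | h
      · nlinarith
      · nlinarith
    have hs := Finset.sum_le_sum (s := univ) (fun v _ => hv v)
    rw [← Finset.sum_mul] at hs
    have h1 : (∑ v, (#{A ∈ T | v ∈ A} : ℝ)) = #T * 3 := by exact_mod_cast hsumT
    have h2 : (∑ v, (#{A ∈ E | v ∈ A} : ℝ)) = #E * 2 := by exact_mod_cast hsumE
    rw [h1, h2, hxe] at hs
    nlinarith
  have hVx : x ≤ #V := by
    have h : (#E : ℝ) ≤ ((#V).choose 2 : ℕ) := by exact_mod_cast hEV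
    rw [Nat.cast_choose_two, hxe] at h
    have h0 : (0:ℝ) ≤ #V := Nat.cast_nonneg _
    by_contra hlt
    push Not at hlt
    nlinarith
  by_contra hcon
  push Not at hcon
  have hxk : k < x := by
    by_contra h
    push Not at h
    have : x * (x - 1) * (x - 2) ≤ k * (k - 1) * (k - 2) := by
      have a1 : 0 ≤ x - 2 := by linarith
      have a2 : 0 ≤ x - 1 := by linarith
      have a3 : 0 ≤ x := by linarith
      have a4 : 0 ≤ k - 1 := by linarith
      have a5 : 0 ≤ k := by linarith
      gcongr
    linarith
  have hEk : k * (k - 1) / 2 < #E := by rw [hxe]; nlinarith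
  have htot' : (1:ℝ) + #V + #E + #T ≤ #F := by exact_mod_cast htot
  linarith

open Finset in
lemma aux_L {n : ℕ} (T P : Finset (Finset (Fin n))) (hT : ∀ B ∈ T, #B = 3)
    (hP : ∀ A ∈ P, #A = 2) (h : ∀ A ∈ P, ∀ g ∉ A, insert g A ∈ T) :
    #P * (n - 2) ≤ #T * 3 := by
  classical
  apply Finset.card_mul_le_card_mul (fun A B => A ⊆ B)
  · intro A hA
    have h1 : #(Aᶜ) = n - 2 := by rw [Finset.card_compl, hP A hA, Fintype.card_fin]
    rw [← h1]
    apply Finset.card_le_card_of_injOn (fun g => insert g A)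
    · intro g hg
      have hg : g ∉ A := by simpa using hg
      simp only [Finset.bipartiteAbove, Finset.coe_filter, Set.mem_ofPred_eq]
      exact ⟨h A hA g hg, Finset.subset_insert _ _⟩
    · intro a ha b hb hab
      have ha : a ∉ A := by simpa using ha
      have hab : insert a A = insert b A := hab
      have : a ∈ insert b A := by rw [← hab]; simp
      simpa [ha] using this
  · intro B hB
    have h1 : #(powersetCard 2 B) = 3 := by rw [Finset.card_powersetCard, hT B hB]; rfl
    rw [← h1]
    apply Finset.card_le_card
    intro A hA
    rw [Finset.mem_bipartiteBelow] at hA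
    exact Finset.mem_powersetCard.2 ⟨hA.2, hP A hA.1⟩

open Finset in
lemma aux_M {n : ℕ} (T : Finset (Finset (Fin n))) (P : Finset (Fin n)) (hT : ∀ B ∈ T, #B = 3)
    (h : ∀ e ∈ P, ∀ B : Finset (Fin n), #B = 3 → e ∈ B → B ∈ T) :
    #P * (n - 1).choose 2 ≤ #T * 3 := by
  classical
  apply Finset.card_mul_le_card_mul (fun e B => e ∈ B)
  · intro e he
    have h1 : #(powersetCard 2 ({e}ᶜ : Finset (Fin n))) = (n - 1).choose 2 := by
      rw [Finset.card_powersetCard, Finset.card_compl, Fintype.card_fin, Finset.card_singleton]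
    rw [← h1]
    apply Finset.card_le_card_of_injOn (fun A => insert e A)
    · intro A hA
      rw [Finset.mem_coe, Finset.mem_powersetCard] at hA
      have heA : e ∉ A := fun h => by simpa using hA.1 h
      rw [Finset.mem_coe, Finset.mem_bipartiteAbove]
      exact ⟨h e he _ (by rw [Finset.card_insert_of_notMem heA, hA.2]) (by simp), by simp⟩
    · intro A hA B hB hab
      rw [Finset.mem_coe, Finset.mem_powersetCard] at hA hB
      have heA : e ∉ A := fun h => by simpa using hA.1 h
      have heB : e ∉ B := fun h => by simpa using hB.1 h
      have hab : insert e A = insert e B := hab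
      rw [← Finset.erase_insert heA, ← Finset.erase_insert heB, hab]
  · intro B hB
    rw [← hT B hB]
    apply Finset.card_le_card
    intro A hA
    rw [Finset.mem_bipartiteBelow] at hA
    exact hA.2

/-- For an arrangement of `n` hyperplanes in general position in
`ℝ³` and a set `S` of chambers with `|S| = ∑_{i=0}^3 C(k,i)`, `k ≥ 2`, and
`(k-2)/(n-2) ≤ c < 1`: letting `L` be the number of pairs `{e,f}` with the whole line
`H_e ∩ H_f` inside `T_S` and `M` the number of `e` with the whole plane `H_e` inside
`T_S`, one has `L ≤ C(k,2)(k-2)/(n-2)`,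
`M ≤ k(k-1)(k-2)/((n-1)(n-2)) ≤ k(k-2)/(n-2)`, and
`L + M ≤ c·∑_{i=0}^2 C(k,i)`. -/
theorem stmt15 {n : ℕ} (hn : 2 < n) (𝓗 : Arrangement 3 n)
    (hgp : 𝓗.GeneralPosition)
    (S : Set (Set (Fin 3 → ℝ))) (hS : S ⊆ 𝓗.chambers)
    (k : ℝ) (hk : 2 ≤ k)
    (hcard : (S.ncard : ℝ) = ∑ i ∈ Finset.range 4, gchoose k i)
    (c : ℝ) (hc : c < 1) (hkc : (k - 2) / ((n : ℝ) - 2) ≤ c) :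
    (({A : Finset (Fin n) | A.card = 2 ∧ (⋂ i ∈ A, 𝓗.H i) ⊆ thickening S}.ncard : ℝ)
        ≤ gchoose k 2 * ((k - 2) / ((n : ℝ) - 2))) ∧
    (({e : Fin n | 𝓗.H e ⊆ thickening S}.ncard : ℝ) ≤
        k * (k - 1) * (k - 2) / (((n : ℝ) - 1) * ((n : ℝ) - 2))) ∧
    (k * (k - 1) * (k - 2) / (((n : ℝ) - 1) * ((n : ℝ) - 2)) ≤
        k * ((k - 2) / ((n : ℝ) - 2))) ∧
    (({A : Finset (Fin n) | A.card = 2 ∧ (⋂ i ∈ A, 𝓗.H i) ⊆ thickening S}.ncard : ℝ)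
        + ({e : Fin n | 𝓗.H e ⊆ thickening S}.ncard : ℝ) ≤
      c * ∑ i ∈ Finset.range 3, gchoose k i) := by
  classical
  have g0 : gchoose k 0 = 1 := by simp [gchoose]
  have g1 : gchoose k 1 = k := by simp [gchoose]
  have g2 : gchoose k 2 = k * (k - 1) / 2 := by simp [gchoose, Finset.prod_range_succ]
  have g3 : gchoose k 3 = k * (k - 1) * (k - 2) / 6 := by
    simp [gchoose, Finset.prod_range_succ, Nat.factorial]
  simp only [Finset.sum_range_succ, Finset.sum_range_zero, g0, g1, g2, g3, zero_add] at hcard ⊢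
  have hkk : 0 ≤ k * (k - 1) := mul_nonneg (by linarith) (by linarith)
  have hkkk : 0 ≤ k * (k - 1) * (k - 2) := mul_nonneg hkk (by linarith)
  have hSf : S.Finite := by
    apply Set.finite_of_ncard_ne_zero
    intro h
    rw [h] at hcard
    push_cast at hcard
    linarith
  set 𝒜 : Finset (Finset (Fin n)) := hSf.toFinset.image (auxSig 𝓗) with h𝒜
  have h𝒜S : ∀ C ∈ S, auxSig 𝓗 C ∈ 𝒜 := fun C hC =>
    Finset.mem_image_of_mem _ (hSf.mem_toFinset.2 hC)
  have h𝒜c : 𝒜.card ≤ S.ncard := by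
    rw [Set.ncard_eq_toFinset_card S hSf]
    exact Finset.card_image_le
  set F : Finset (Finset (Fin n)) := Finset.univ.filter (fun A => ¬ (𝒜ᶜ).Shatters Aᶜ) with hFdef
  have hFc : (F.card : ℝ) ≤ S.ncard := by
    exact_mod_cast (aux_F_card 𝒜).trans h𝒜c
  have hFd : ∀ A ∈ F, ∀ B ⊆ A, B ∈ F := by
    intro A hA B hB
    simp only [hFdef, Finset.mem_filter, Finset.mem_univ, true_and] at hA ⊢
    exact fun h => hA (h.mono_right (Finset.compl_subset_compl.2 hB))
  have hKK := aux_KK F hFd k hk (by linarith)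
  set T := F.filter (fun A => A.card = 3) with hTdef
  have hT3 : ∀ B ∈ T, B.card = 3 := fun B hB => (Finset.mem_filter.1 hB).2
  have key : ∀ B : Finset (Fin n), B.card = 3 → ∀ X : Set (Fin 3 → ℝ), X ⊆ thickening S →
      (⋂ i ∈ B, 𝓗.H i) ⊆ X → B ∈ T := by
    intro B hB X hX hBX
    obtain ⟨p, hp⟩ := aux_surj 𝓗 hgp B hB.le 𝓗.offset
    refine Finset.mem_filter.2 ⟨?_, hB⟩
    simp only [hFdef, Finset.mem_filter, Finset.mem_univ, true_and]
    refine aux_tri 𝓗 hgp S hS 𝒜 h𝒜S B hB p hp (hX (hBX ?_))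
    simp only [Set.mem_iInter]
    exact hp
  have hn2 : (0:ℝ) < (n:ℝ) - 2 := by
    have : (2:ℝ) < n := by exact_mod_cast hn
    linarith
  have hn1 : (0:ℝ) < (n:ℝ) - 1 := by linarith
  have hL : (({A : Finset (Fin n) | A.card = 2 ∧ (⋂ i ∈ A, 𝓗.H i) ⊆ thickening S}.ncard : ℝ)
        ≤ k * (k - 1) / 2 * ((k - 2) / ((n : ℝ) - 2))) := by
    have hf := Set.toFinite {A : Finset (Fin n) | A.card = 2 ∧ (⋂ i ∈ A, 𝓗.H i) ⊆ thickening S}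
    rw [Set.ncard_eq_toFinset_card _ hf]
    have h := aux_L T hf.toFinset hT3 (fun A hA => ((hf.mem_toFinset).1 hA).1) (by
      intro A hA g hg
      have hA := (hf.mem_toFinset).1 hA
      refine key _ (by rw [Finset.card_insert_of_notMem hg, hA.1]) _ hA.2 ?_
      exact Set.biInter_subset_biInter_left (fun i hi => Finset.mem_insert_of_mem hi))
    have h' : (hf.toFinset.card : ℝ) * ((n:ℝ) - 2) ≤ T.card * 3 := by
      have := (Nat.cast_le (α := ℝ)).2 h
      rw [Nat.cast_mul, Nat.cast_sub hn.le] at this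
      exact_mod_cast this
    rw [← mul_div_assoc, le_div_iff₀ hn2]
    linarith
  have hM : (({e : Fin n | 𝓗.H e ⊆ thickening S}.ncard : ℝ) ≤
        k * (k - 1) * (k - 2) / (((n : ℝ) - 1) * ((n : ℝ) - 2))) := by
    have hf := Set.toFinite {e : Fin n | 𝓗.H e ⊆ thickening S}
    rw [Set.ncard_eq_toFinset_card _ hf]
    have h := aux_M T hf.toFinset hT3 (by
      intro e he B hB heB
      have he := (hf.mem_toFinset).1 he
      exact key B hB _ he (Set.biInter_subset_of_mem heB))
    have h' : (hf.toFinset.card : ℝ) * (((n:ℝ) - 1) * ((n:ℝ) - 1 - 1) / 2) ≤ T.card * 3 := by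
      have := (Nat.cast_le (α := ℝ)).2 h
      rw [Nat.cast_mul, Nat.cast_choose_two, Nat.cast_sub (by omega : 1 ≤ n)] at this
      exact_mod_cast this
    rw [le_div_iff₀ (mul_pos hn1 hn2)]
    linarith
  have hkn : k ≤ n := by
    have := (div_lt_one hn2).1 (lt_of_le_of_lt hkc hc)
    linarith
  have hMM : k * (k - 1) * (k - 2) / (((n : ℝ) - 1) * ((n : ℝ) - 2)) ≤
        k * ((k - 2) / ((n : ℝ) - 2)) := by
    rw [← mul_div_assoc, div_le_div_iff₀ (mul_pos hn1 hn2) hn2]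
    have h1 : 0 ≤ k * (k - 2) * ((n:ℝ) - 2) :=
      mul_nonneg (mul_nonneg (by linarith) (by linarith)) hn2.le
    nlinarith
  refine ⟨hL, hM, hMM, ?_⟩
  have hr0 : 0 ≤ (k - 2) / ((n : ℝ) - 2) := div_nonneg (by linarith) hn2.le
  generalize (k - 2) / ((n : ℝ) - 2) = r at *
  nlinarith
end
end
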